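/- For every G-bounded subset U ⊂ 𝓜 there exist constants 0 < c ≤ C < ∞ such that c ≤ |γ'(x)| ≤ C for all γ ∈ U and all x ∈ 𝕋; that is, the maps γ ↦ ‖|γ'|‖_{L∞} and γ ↦ ‖1/|γ'|‖_{L∞} are bounded on G-bounded sets. -/

import Mathlib

open MeasureTheory Real Filter Set
open scoped ENNReal Topology RealInnerProductSpace

noncomputable section

/-- Euclidean space `ℝⁿ`. -/
abbrev En (n : ℕ) : Type := EuclideanSpace ℝ (Fin n)

/-- A fundamental domain for the circle `𝕋 = ℝ/ℤ`. -/
def I01 : Set ℝ := Set.Ico (0 : ℝ) 1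

/-- The intrinsic distance on `𝕋 = ℝ/ℤ`, expressed for real representatives. -/
def dT (x y : ℝ) : ℝ := ⨅ k : ℤ, |x - y - (k : ℝ)|

/-- Supremum norm of a (periodic) function on the circle. -/
def supNorm {E : Type*} [NormedAddCommGroup E] (f : ℝ → E) : ℝ := ⨆ x : ℝ, ‖f x‖

/-- The squared Gagliardo seminorm `[v]_{H^σ}²` of a function on the circle, valued in `[0,∞]`. -/
def gagliardoSqE {E : Type*} [NormedAddCommGroup E] (σ : ℝ) (v : ℝ → E) : ℝ≥0∞ :=
  ∫⁻ x in I01, ∫⁻ y in I01, ENNReal.ofReal (‖v y - v x‖ ^ 2 / dT x y ^ (2 * σ + 1))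

/-- Membership in the Sobolev–Slobodeckij space `H^s(𝕋, ℝⁿ)`; for `s ∈ (3/2,2)` such
functions have a `C¹` representative, which we take as the defining data. -/
def InHs {n : ℕ} (s : ℝ) (u : ℝ → En n) : Prop :=
  Function.Periodic u 1 ∧ ContDiff ℝ 1 u ∧ gagliardoSqE (s - 1) (deriv u) < ⊤

/-- The squared `H^s` norm `‖u‖²_{L²} + ‖u'‖²_{L²} + [u']²_{H^{s-1}}`. -/
def HsNormSq {n : ℕ} (s : ℝ) (u : ℝ → En n) : ℝ :=
  (∫ x in I01, ‖u x‖ ^ 2) + (∫ x in I01, ‖deriv u x‖ ^ 2) +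
    (gagliardoSqE (s - 1) (deriv u)).toReal

/-- The `H^s` norm. -/
def HsNorm {n : ℕ} (s : ℝ) (u : ℝ → En n) : ℝ := Real.sqrt (HsNormSq s u)

/-- The `H^s` inner product. -/
def HsInner {n : ℕ} (s : ℝ) (u v : ℝ → En n) : ℝ :=
  (∫ x in I01, ⟪u x, v x⟫) + (∫ x in I01, ⟪deriv u x, deriv v x⟫) +
    ∫ x in I01, ∫ y in I01,
      ⟪deriv u y - deriv u x, deriv v y - deriv v x⟫ / dT x y ^ (2 * (s - 1) + 1)

/-- The manifold `𝓜` of embedded closed curves of class `H^s`: injective (on the circle)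
immersions. -/
def InM {n : ℕ} (s : ℝ) (γ : ℝ → En n) : Prop :=
  InHs s γ ∧ Set.InjOn γ I01 ∧ ∀ x, deriv γ x ≠ 0

/-- The length `L(γ)`. -/
def arcLen {n : ℕ} (γ : ℝ → En n) : ℝ := ∫ x in I01, ‖deriv γ x‖

/-- The arc-length distance `d_γ(x,y)`: the length of the shorter of the two arcs of `γ`
between `x` and `y`. -/
def arcDist {n : ℕ} (γ : ℝ → En n) (x y : ℝ) : ℝ :=
  ⨅ k : ℤ, |∫ t in x..(y + (k : ℝ)), ‖deriv γ t‖|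

/-- Derivative with respect to arc length, `D_γ u = u' / |γ'|`. -/
def Dg {n : ℕ} (γ u : ℝ → En n) (x : ℝ) : En n := ‖deriv γ x‖⁻¹ • deriv u x

/-- `𝒟_γ u (x)`, the pointwise linear map `w ↦ |γ'(x)|⁻² ⟪γ'(x), w⟫ u'(x)`. -/
def DDg {n : ℕ} (γ u : ℝ → En n) (x : ℝ) (w : En n) : En n :=
  ((‖deriv γ x‖ ^ 2)⁻¹ * ⟪deriv γ x, w⟫) • deriv u x

/-- The operator `R^s_γ`. -/
def Rop {n : ℕ} (s : ℝ) (γ u : ℝ → En n) (x y : ℝ) : En n :=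
  (‖γ y - γ x‖ ^ s)⁻¹ • (u y - u x - DDg γ u x (γ y - γ x))

/-- Density of the measure `μ_γ` with respect to `λ ⊗ λ` on `𝕋 × 𝕋`. -/
def muW {n : ℕ} (γ : ℝ → En n) (x y : ℝ) : ℝ :=
  ‖deriv γ x‖ * ‖deriv γ y‖ / ‖γ y - γ x‖

/-- Density of the measure `ν_γ` with respect to `λ ⊗ λ` on `𝕋 × 𝕋`. -/
def nuW {n : ℕ} (γ : ℝ → En n) (x y : ℝ) : ℝ :=
  ‖deriv γ x‖ * ‖deriv γ y‖ / arcDist γ x y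

/-- The tangent-point energy, valued in `[0,∞]`. -/
def EtpE {n : ℕ} (s : ℝ) (γ : ℝ → En n) : ℝ≥0∞ :=
  ∫⁻ x in I01, ∫⁻ y in I01, ENNReal.ofReal (‖Rop s γ γ x y‖ ^ 2 * muW γ x y)

/-- The tangent-point energy, real-valued (finite on `𝓜`). -/
def Etp {n : ℕ} (s : ℝ) (γ : ℝ → En n) : ℝ := (EtpE s γ).toReal

/-- `‖R^s_γ u‖²_{L²(ν_γ)}`, valued in `[0,∞]`. -/
def RnuSqE {n : ℕ} (s : ℝ) (γ u : ℝ → En n) : ℝ≥0∞ :=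
  ∫⁻ x in I01, ∫⁻ y in I01, ENNReal.ofReal (‖Rop s γ u x y‖ ^ 2 * nuW γ x y)

/-- `‖R^s_γ u‖²_{L²(ν_γ)}`, real-valued. -/
def RnuSq {n : ℕ} (s : ℝ) (γ u : ℝ → En n) : ℝ := (RnuSqE s γ u).toReal

/-- The squared `γ`-dependent seminorm `[u]²_{H^s(γ)}`, valued in `[0,∞]`. -/
def gagGammaSqE {n : ℕ} (s : ℝ) (γ u : ℝ → En n) : ℝ≥0∞ :=
  ∫⁻ x in I01, ∫⁻ y in I01,
    ENNReal.ofReal (‖Dg γ u y - Dg γ u x‖ ^ 2 / arcDist γ x y ^ (2 * (s - 1)) * nuW γ x y)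

/-- The squared `γ`-dependent seminorm `[u]²_{H^s(γ)}`, real-valued. -/
def gagGammaSq {n : ℕ} (s : ℝ) (γ u : ℝ → En n) : ℝ := (gagGammaSqE s γ u).toReal

/-- The inner product `⟨u,v⟩_{L²(γ)}`. -/
def innerL2g {n : ℕ} (γ u v : ℝ → En n) : ℝ := ∫ x in I01, ⟪u x, v x⟫ * ‖deriv γ x‖

/-- The inner product `⟨u,v⟩_{H¹(γ)}`. -/
def innerH1g {n : ℕ} (γ u v : ℝ → En n) : ℝ :=
  ∫ x in I01, ⟪Dg γ u x, Dg γ v x⟫ * ‖deriv γ x‖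

/-- The squared `γ`-dependent norm `‖u‖²_{H^s(γ)}`. -/
def HsGammaNormSq {n : ℕ} (s : ℝ) (γ u : ℝ → En n) : ℝ :=
  innerL2g γ u u + innerH1g γ u u + gagGammaSq s γ u

/-- The `γ`-dependent norm `‖u‖_{H^s(γ)}`. -/
def HsGammaNorm {n : ℕ} (s : ℝ) (γ u : ℝ → En n) : ℝ := Real.sqrt (HsGammaNormSq s γ u)

/-- The bilinear form `B¹_γ`. -/
def B1 {n : ℕ} (s : ℝ) (γ u v : ℝ → En n) : ℝ :=
  ∫ x in I01, ∫ y in I01, ⟪Rop s γ u x y, Rop s γ v x y⟫ * muW γ x y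

/-- The bilinear form `B²_γ`. -/
def B2 {n : ℕ} (s : ℝ) (γ u v : ℝ → En n) : ℝ :=
  ∫ x in I01, ∫ y in I01,
    ‖Rop s γ γ x y‖ ^ 2 * (⟪u y - u x, v y - v x⟫ / ‖γ y - γ x‖ ^ 2) * muW γ x y

/-- The bilinear form `B³_γ`. -/
def B3 {n : ℕ} (s : ℝ) (γ u v : ℝ → En n) : ℝ :=
  ∫ x in I01, ∫ y in I01,
    ‖Rop s γ γ x y‖ ^ 2 * (⟪Dg γ u x, Dg γ v x⟫ + ⟪Dg γ u y, Dg γ v y⟫) * muW γ x y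

/-- The Riemannian metric `G_γ(u,v)`. -/
def Gmet {n : ℕ} (s : ℝ) (γ u v : ℝ → En n) : ℝ :=
  2 * B1 s γ u v + (2 * s + 1) * B2 s γ u v + B3 s γ u v + innerH1g γ u v + innerL2g γ u v

/-- The distortion `distor(γ) = sup_{x ≠ y} d_γ(x,y)/|γ(y) − γ(x)|`, valued in `[0,∞]`. -/
def distorE {n : ℕ} (γ : ℝ → En n) : ℝ≥0∞ :=
  ⨆ (x ∈ I01) (y ∈ I01) (_ : x ≠ y), ENNReal.ofReal (arcDist γ x y / ‖γ y - γ x‖)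

/-- The distortion, real-valued. -/
def distor {n : ℕ} (γ : ℝ → En n) : ℝ := (distorE γ).toReal

/-- A `C¹` path `[0,1] → 𝓜 ⊂ H^s(𝕋,ℝⁿ)` (with respect to the `H^s` topology), recorded
together with its velocity field `V`. -/
structure C1Path (s : ℝ) (n : ℕ) where
  Γ : ℝ → ℝ → En n
  V : ℝ → ℝ → En n
  mem : ∀ t ∈ Set.Icc (0 : ℝ) 1, InM s (Γ t)
  memV : ∀ t ∈ Set.Icc (0 : ℝ) 1, InHs s (V t)
  isDeriv : ∀ t ∈ Set.Icc (0 : ℝ) 1,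
    Tendsto (fun h : ℝ => HsNorm s fun x => h⁻¹ • (Γ (t + h) x - Γ t x) - V t x)
      (𝓝[{h : ℝ | t + h ∈ Set.Icc (0 : ℝ) 1 ∧ h ≠ 0}] 0) (𝓝 0)
  contV : ∀ t ∈ Set.Icc (0 : ℝ) 1,
    Tendsto (fun τ : ℝ => HsNorm s fun x => V τ x - V t x) (𝓝[Set.Icc (0 : ℝ) 1] t) (𝓝 0)

/-- Length of a path with respect to `G`. -/
def pathLen {s : ℝ} {n : ℕ} (P : C1Path s n) : ℝ :=
  ∫ t in (0 : ℝ)..1, Real.sqrt (Gmet s (P.Γ t) (P.V t) (P.V t))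

/-- The path (Dirichlet) energy of a path with respect to `G`. -/
def pathEnergy {s : ℝ} {n : ℕ} (P : C1Path s n) : ℝ :=
  (1 / 2) * ∫ t in (0 : ℝ)..1, Gmet s (P.Γ t) (P.V t) (P.V t)

/-- The geodesic distance induced by `G`, valued in `[0,∞]` (`∞` if there is no path). -/
def geodDist (s : ℝ) {n : ℕ} (γ₀ γ₁ : ℝ → En n) : ℝ≥0∞ :=
  ⨅ (P : C1Path s n) (_ : P.Γ 0 = γ₀ ∧ P.Γ 1 = γ₁), ENNReal.ofReal (pathLen P)

/-- `U ⊆ 𝓜` is bounded with respect to the geodesic distance `d_G`. -/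
def GBounded (s : ℝ) {n : ℕ} (U : Set (ℝ → En n)) : Prop :=
  (∀ γ ∈ U, InM s γ) ∧
    ∃ γ₀, InM s γ₀ ∧ ∃ R : ℝ, ∀ γ ∈ U, geodDist s γ γ₀ ≤ ENNReal.ofReal R

/-- Weak convergence in the Hilbert space `H^s(𝕋,ℝⁿ)`. -/
def WeakHsTendsto {n : ℕ} (s : ℝ) (γk : ℕ → ℝ → En n) (γ : ℝ → En n) : Prop :=
  ∀ v : ℝ → En n, InHs s v →
    Tendsto (fun k => HsInner s (γk k) v) atTop (𝓝 (HsInner s γ v))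

/-- Directional derivative of `γ ↦ G_γ(u,v)` at `γ` in direction `w`. -/
def DGdir {n : ℕ} (s : ℝ) (γ w u v : ℝ → En n) : ℝ :=
  deriv (fun t : ℝ => Gmet s (fun x => γ x + t • w x) u v) 0

/-- `F'` is the derivative of the path `F` with respect to the `H^s` norm, on `S`. -/
def IsHsDerivOn {n : ℕ} (s : ℝ) (F F' : ℝ → ℝ → En n) (S : Set ℝ) : Prop :=
  ∀ t ∈ S,
    Tendsto (fun h : ℝ => HsNorm s fun x => h⁻¹ • (F (t + h) x - F t x) - F' t x)
      (𝓝[{h : ℝ | t + h ∈ S ∧ h ≠ 0}] 0) (𝓝 0)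

/-- The path `F` is continuous on `S` with respect to the `H^s` norm. -/
def HsContOn {n : ℕ} (s : ℝ) (F : ℝ → ℝ → En n) (S : Set ℝ) : Prop :=
  ∀ t ∈ S, Tendsto (fun τ : ℝ => HsNorm s fun x => F τ x - F t x) (𝓝[S] t) (𝓝 0)

/-- A solution of the geodesic initial value problem on `[0,∞)`, recorded as a triple
(position `Γ`, velocity `V`, acceleration `W`); the geodesic equation
`Γ̈ + A_Γ(Γ̇)Γ̇ = 0` is expressed weakly via the Koszul formula for the
Christoffel operator `A`. -/
def GeodesicSol {n : ℕ} (s : ℝ) (γ₀ v₀ : ℝ → En n) (Γ V W : ℝ → ℝ → En n) : Prop :=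
  (∀ t ∈ Set.Ici (0 : ℝ), InM s (Γ t) ∧ InHs s (V t) ∧ InHs s (W t)) ∧
  Γ 0 = γ₀ ∧ V 0 = v₀ ∧
  IsHsDerivOn s Γ V (Set.Ici 0) ∧ IsHsDerivOn s V W (Set.Ici 0) ∧
  HsContOn s V (Set.Ici 0) ∧ HsContOn s W (Set.Ici 0) ∧
  ∀ t ∈ Set.Ici (0 : ℝ), ∀ w : ℝ → En n, InHs s w →
    Gmet s (Γ t) (W t) w + DGdir s (Γ t) (V t) (V t) w
      - (1 / 2) * DGdir s (Γ t) w (V t) (V t) = 0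


def Calp (α : ℝ) : ℝ := 4 / (1 - (2:ℝ) ^ (-α))

lemma Calp_q {α : ℝ} (hα : 0 < α) : 0 < (2:ℝ) ^ (-α) ∧ (2:ℝ) ^ (-α) < 1 :=
  ⟨by positivity, Real.rpow_lt_one_of_one_lt_of_neg (by norm_num) (by linarith)⟩

lemma Calp_pos {α : ℝ} (hα : 0 < α) : 0 < Calp α := by
  have := Calp_q hα
  unfold Calp
  apply div_pos (by norm_num); linarith

lemma camp_half {E : Type*} [NormedAddCommGroup E] [NormedSpace ℝ E]
    {f : ℝ → E} (hf : Continuous f) {α K l a : ℝ} (hα : 0 < α) (hK : 0 ≤ K) (hl : 0 < l)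
    (c : ℝ → E)
    (h : ∀ r, 0 < r → r ≤ l → ∫ x in a..(a + r), ‖f x - c r‖ ≤ K * r ^ (1 + α)) :
    ‖f a - c l‖ ≤ Calp α * K * l ^ α := by
  obtain ⟨q0, q1⟩ := Calp_q hα
  set q := (2:ℝ) ^ (-α) with hq
  have step : ∀ r, 0 < r → r ≤ l → ‖c (r / 2) - c r‖ ≤ 4 * K * r ^ α := by
    intro r hr hrl
    have h1 := h (r / 2) (by linarith) (by linarith)
    have h2 := h r hr hrl
    have h3 : ∫ x in a..(a + r / 2), ‖f x - c r‖ ≤ ∫ x in a..(a + r), ‖f x - c r‖ := by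
      apply intervalIntegral.integral_mono_interval le_rfl (by linarith) (by linarith)
      · exact Eventually.of_forall fun x => norm_nonneg _
      · exact (by fun_prop : Continuous fun x => ‖f x - c r‖).intervalIntegrable _ _
    have h4 : ∫ x in a..(a + r / 2), ‖c (r / 2) - c r‖ ≤
        (∫ x in a..(a + r / 2), ‖f x - c (r / 2)‖) + ∫ x in a..(a + r / 2), ‖f x - c r‖ := by
      rw [← intervalIntegral.integral_add]
      · apply intervalIntegral.integral_mono_on (by linarith)
        · exact continuous_const.intervalIntegrable _ _
        · exact (by fun_prop : Continuous fun x => ‖f x - c (r/2)‖ + ‖f x - c r‖).intervalIntegrable _ _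
        · intro x _
          have := norm_sub_le (f x - c r) (f x - c (r / 2))
          simp only [sub_sub_sub_cancel_left] at this
          linarith
      · exact (by fun_prop : Continuous fun x => ‖f x - c (r/2)‖).intervalIntegrable _ _
      · exact (by fun_prop : Continuous fun x => ‖f x - c r‖).intervalIntegrable _ _
    rw [intervalIntegral.integral_const] at h4
    simp only [add_sub_cancel_left, smul_eq_mul] at h4
    have h5 : (r / 2) ^ (1 + α) ≤ r ^ (1 + α) :=
      Real.rpow_le_rpow (by linarith) (by linarith) (by linarith)
    have h6 : r ^ (1 + α) = r * r ^ α := by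
      rw [Real.rpow_add hr, Real.rpow_one]
    have h7 : r / 2 * ‖c (r / 2) - c r‖ ≤ r / 2 * (4 * K * r ^ α) := by
      have : K * (r / 2) ^ (1 + α) ≤ K * r ^ (1 + α) := by gcongr
      rw [h6] at this h2
      have e : r / 2 * (4 * K * r ^ α) = 2 * (K * (r * r ^ α)) := by ring
      linarith
    exact le_of_mul_le_mul_left h7 (by linarith)
  have ind : ∀ k : ℕ, ‖c (l / 2 ^ k) - c l‖ ≤ Calp α * K * l ^ α * (1 - q ^ k) := by
    intro k
    induction k with
    | zero => simp
    | succ k ih =>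
      have hk : (0:ℝ) < 2 ^ k := by positivity
      have h1 := step (l / 2 ^ k) (by positivity) (div_le_self hl.le (one_le_pow₀ (by norm_num)))
      have h2 : (l / 2 ^ k) ^ α = l ^ α * q ^ k := by
        rw [Real.div_rpow hl.le hk.le, hq, ← Real.rpow_natCast, ← Real.rpow_natCast,
          ← Real.rpow_mul (by norm_num), ← Real.rpow_mul (by norm_num), div_eq_mul_inv,
          ← Real.rpow_neg (by norm_num)]
        congr 2; ring
      rw [h2, div_div, ← pow_succ] at h1
      have h3 : Calp α * (1 - q) = 4 := by
        unfold Calp; rw [← hq]; field_simp [show (1 - q) ≠ 0 by linarith]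
      have h4 : 4 * K * (l ^ α * q ^ k) = Calp α * K * l ^ α * (q ^ k - q ^ (k+1)) := by
        rw [← h3]; ring
      have h5 := norm_add_le (c (l / 2 ^ (k+1)) - c (l / 2 ^ k)) (c (l / 2 ^ k) - c l)
      rw [sub_add_sub_cancel] at h5
      linarith [h4]
  have hC := Calp_pos hα
  refine le_of_forall_pos_le_add fun ε hε => ?_
  have hcont : Tendsto f (𝓝 a) (𝓝 (f a)) := hf.continuousAt
  obtain ⟨δ, hδ, hδ2⟩ := Metric.continuousAt_iff.1 hf.continuousAt (ε / 2) (by linarith)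
  have t1 : Tendsto (fun k : ℕ => l / 2 ^ k) atTop (𝓝 0) := by
    have := (tendsto_pow_atTop_nhds_zero_of_lt_one (r := (1/2:ℝ)) (by norm_num) (by norm_num)).const_mul l
    simpa [div_eq_mul_inv] using this
  have t2 : Tendsto (fun k : ℕ => K * (l / 2 ^ k) ^ α) atTop (𝓝 0) := by
    have := (t1.rpow_const (p := α) (Or.inr hα.le)).const_mul K
    simpa [Real.zero_rpow hα.ne'] using this
  obtain ⟨k, hk1, hk2⟩ := ((t1.eventually (gt_mem_nhds hδ)).and
    (t2.eventually (gt_mem_nhds (show (0:ℝ) < ε / 2 by linarith)))).exists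
  set r := l / 2 ^ k with hr
  have hr0 : 0 < r := by positivity
  have hrl : r ≤ l := div_le_self hl.le (one_le_pow₀ (by norm_num))
  have g1 := h r hr0 hrl
  have g2 : ∫ x in a..(a + r), ‖f a - c r‖ ≤ (∫ x in a..(a + r), ‖f x - c r‖) + ∫ x in a..(a+r), (ε / 2) := by
    rw [← intervalIntegral.integral_add]
    · apply intervalIntegral.integral_mono_on (by linarith)
      · exact continuous_const.intervalIntegrable _ _
      · exact (by fun_prop : Continuous fun x => ‖f x - c r‖ + ε / 2).intervalIntegrable _ _
      · intro x hx
        have h1 : dist x a < δ := by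
          rw [Real.dist_eq, abs_lt]; constructor <;> linarith [hx.1, hx.2]
        have h2 := hδ2 h1
        rw [dist_eq_norm] at h2
        have := norm_sub_le (f x - c r) (f x - f a)
        simp only [sub_sub_sub_cancel_left] at this
        linarith
    · exact (by fun_prop : Continuous fun x => ‖f x - c r‖).intervalIntegrable _ _
    · exact continuous_const.intervalIntegrable _ _
  rw [intervalIntegral.integral_const, intervalIntegral.integral_const] at g2
  simp only [add_sub_cancel_left, smul_eq_mul] at g2
  have h6 : r ^ (1 + α) = r * r ^ α := by
    rw [Real.rpow_add hr0, Real.rpow_one]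
  rw [h6] at g1
  have g3 : ‖f a - c r‖ ≤ ε := by
    have : r * ‖f a - c r‖ ≤ r * ε := by nlinarith
    exact le_of_mul_le_mul_left this hr0
  have g4 := ind k
  have g5 := norm_add_le (f a - c r) (c r - c l)
  rw [sub_add_sub_cancel] at g5
  have g6 : Calp α * K * l ^ α * (1 - q ^ k) ≤ Calp α * K * l ^ α := by
    have : 0 ≤ Calp α * K * l ^ α := by positivity
    have : 0 ≤ q ^ k := by positivity
    nlinarith
  linarith

lemma camp {E : Type*} [NormedAddCommGroup E] [NormedSpace ℝ E]
    {f : ℝ → E} (hf : Continuous f) {α K lo hi : ℝ} (hα : 0 < α) (hK : 0 ≤ K) (hl : lo < hi)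
    (h : ∀ a b, lo ≤ a → a < b → b ≤ hi → ∃ c : E, ∫ x in a..b, ‖f x - c‖ ≤ K * (b - a) ^ (1 + α)) :
    ‖f lo - f hi‖ ≤ 2 * Calp α * K * (hi - lo) ^ α := by
  have h' : ∀ a b, ∃ c : E, lo ≤ a → a < b → b ≤ hi → ∫ x in a..b, ‖f x - c‖ ≤ K * (b - a) ^ (1 + α) := by
    intro a b
    by_cases hh : lo ≤ a ∧ a < b ∧ b ≤ hi
    · obtain ⟨c, hc⟩ := h a b hh.1 hh.2.1 hh.2.2
      exact ⟨c, fun _ _ _ => hc⟩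
    · exact ⟨0, fun h1 h2 h3 => absurd ⟨h1, h2, h3⟩ hh⟩
  choose C hC using h'
  have h1 := camp_half hf hα hK (sub_pos.2 hl) (a := lo) (fun r => C lo (lo + r)) (by
    intro r hr hrl
    have := hC lo (lo + r) le_rfl (by linarith) (by linarith)
    simpa using this)
  have h2 := camp_half (f := fun x => f (-x)) (by fun_prop) hα hK (sub_pos.2 hl) (a := -hi)
    (fun r => C (hi - r) hi) (by
    intro r hr hrl
    have := hC (hi - r) hi (by linarith) (by linarith) le_rfl
    have e := intervalIntegral.integral_comp_neg (a := -hi) (b := -hi + r) (fun x => ‖f x - C (hi - r) hi‖)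
    rw [e]
    simp only [neg_neg, neg_add_rev]
    rw [show -r + hi = hi - r by ring]
    simpa using this)
  simp only [add_sub_cancel, sub_sub_cancel, neg_neg] at h1 h2
  rw [norm_sub_rev] at h2
  have g5 := norm_add_le (f lo - C lo hi) (C lo hi - f hi)
  rw [sub_add_sub_cancel] at g5
  linarith

/-- remainder in arclength parametrization -/
def rA {n : ℕ} (γ τ u v : ℝ → En n) (x y : ℝ) : En n :=
  u y - u x - ⟪τ x, γ y - γ x⟫ • v x

lemma rA_cont {n : ℕ} {γ τ u v : ℝ → En n} (h1 : Continuous γ) (h2 : Continuous τ)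
    (h3 : Continuous u) (h4 : Continuous v) :
    Continuous (fun z : ℝ × ℝ => rA γ τ u v z.1 z.2) := by
  unfold rA; fun_prop

lemma rA_int_bound {n : ℕ} {γ τ u v : ℝ → En n} (h1 : Continuous γ) (h2 : Continuous τ)
    (h3 : Continuous u) (h4 : Continuous v) {a b B s : ℝ} (hab : a < b) (hB : 0 < B)
    (hI : ∫ x in a..b, ∫ y in a..b, ‖rA γ τ u v x y‖ ^ 2 ≤ B ^ 2 * (b - a) ^ (2 * s + 1)) :
    ∫ x in a..b, ∫ y in a..b, ‖rA γ τ u v x y‖ ≤ B * (b - a) ^ (s + 3 / 2) := by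
  have hc := rA_cont h1 h2 h3 h4
  have hl : 0 < b - a := by linarith
  set l := b - a with hldef
  set lam := B * l ^ (s - 1 / 2) with hlam
  have hlp : 0 < lam := by positivity
  have c1 : Continuous fun z : ℝ × ℝ => ‖rA γ τ u v z.1 z.2‖ := hc.norm
  have c2 : Continuous fun z : ℝ × ℝ => lam / 2 + (1 / (2 * lam)) * ‖rA γ τ u v z.1 z.2‖ ^ 2 := by
    fun_prop
  have i1 : Continuous fun x => ∫ y in a..b, ‖rA γ τ u v x y‖ :=
    intervalIntegral.continuous_parametric_intervalIntegral_of_continuous' c1 a b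
  have i2 : Continuous fun x => ∫ y in a..b, (lam / 2 + (1 / (2 * lam)) * ‖rA γ τ u v x y‖ ^ 2) :=
    intervalIntegral.continuous_parametric_intervalIntegral_of_continuous' c2 a b
  have c3 : Continuous fun z : ℝ × ℝ => ‖rA γ τ u v z.1 z.2‖ ^ 2 := by fun_prop
  have i3 : Continuous fun x => ∫ y in a..b, ‖rA γ τ u v x y‖ ^ 2 :=
    intervalIntegral.continuous_parametric_intervalIntegral_of_continuous' c3 a b
  have key : ∫ x in a..b, ∫ y in a..b, ‖rA γ τ u v x y‖ ≤
      ∫ x in a..b, ∫ y in a..b, (lam / 2 + (1 / (2 * lam)) * ‖rA γ τ u v x y‖ ^ 2) := by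
    apply intervalIntegral.integral_mono_on hab.le (i1.intervalIntegrable _ _) (i2.intervalIntegrable _ _)
    intro x _
    apply intervalIntegral.integral_mono_on hab.le
    · exact (c1.comp (Continuous.prodMk_right x)).intervalIntegrable _ _
    · exact (c2.comp (Continuous.prodMk_right x)).intervalIntegrable _ _
    intro y _
    have : 0 ≤ (‖rA γ τ u v x y‖ - lam) ^ 2 := sq_nonneg _
    rw [← sub_nonneg]
    have e : lam / 2 + 1 / (2 * lam) * ‖rA γ τ u v x y‖ ^ 2 - ‖rA γ τ u v x y‖ =
      (‖rA γ τ u v x y‖ - lam) ^ 2 / (2 * lam) := by field_simp; ring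
    rw [e]; positivity
  have e1 : ∀ x, ∫ y in a..b, (lam / 2 + (1 / (2 * lam)) * ‖rA γ τ u v x y‖ ^ 2) =
      l * (lam / 2) + (1 / (2 * lam)) * ∫ y in a..b, ‖rA γ τ u v x y‖ ^ 2 := by
    intro x
    rw [intervalIntegral.integral_add, intervalIntegral.integral_const,
      intervalIntegral.integral_const_mul, smul_eq_mul]
    · exact continuous_const.intervalIntegrable _ _
    · exact ((c3.comp (Continuous.prodMk_right x)).const_mul _).intervalIntegrable _ _
  have e2 : ∫ x in a..b, ∫ y in a..b, (lam / 2 + (1 / (2 * lam)) * ‖rA γ τ u v x y‖ ^ 2) =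
      l * (l * (lam / 2)) + (1 / (2 * lam)) * ∫ x in a..b, ∫ y in a..b, ‖rA γ τ u v x y‖ ^ 2 := by
    simp_rw [e1]
    rw [intervalIntegral.integral_add, intervalIntegral.integral_const,
      intervalIntegral.integral_const_mul, smul_eq_mul]
    · exact continuous_const.intervalIntegrable _ _
    · exact (i3.const_mul _).intervalIntegrable _ _
  rw [e2] at key
  have h5 : (1 / (2 * lam)) * ∫ x in a..b, ∫ y in a..b, ‖rA γ τ u v x y‖ ^ 2 ≤
    (1 / (2 * lam)) * (B ^ 2 * l ^ (2 * s + 1)) := by gcongr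
  have h6 : l ^ (2 * s + 1) = l ^ (s - 1/2) * l ^ (s + 3 / 2) := by
    rw [← Real.rpow_add hl]; congr 1; ring
  have h7 : l ^ (s + 3 / 2) = l ^ (s - 1/2) * (l * l) := by
    rw [← sq, ← Real.rpow_natCast l 2, ← Real.rpow_add hl]; congr 1; norm_num; ring
  have h8 : (1 / (2 * lam)) * (B ^ 2 * l ^ (2 * s + 1)) = B * l ^ (s + 3 / 2) / 2 := by
    rw [h6, hlam]; field_simp
  have h9 : l * (l * (lam / 2)) = B * l ^ (s + 3 / 2) / 2 := by rw [h7, hlam]; ring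
  linarith

lemma key_avg {n : ℕ} {γ τ u v : ℝ → En n} (hγ : ∀ x, HasDerivAt γ (τ x) x)
    (hτ : ∀ x, ‖τ x‖ = 1) (h2 : Continuous τ)
    (h3 : Continuous u) (h4 : Continuous v) {a b A B M s : ℝ} (hab : a < b) (hB : 0 < B) (hA : 0 < A)
    (hosc : ∀ x ∈ Icc a b, ∀ y ∈ Icc a b, 1 / 2 ≤ ⟪τ x, τ y⟫)
    (hM : ∀ x ∈ Icc a b, ‖v x‖ ≤ M)
    (hIB : ∫ x in a..b, ∫ y in a..b, ‖rA γ τ u v x y‖ ^ 2 ≤ B ^ 2 * (b - a) ^ (2 * s + 1))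
    (hIA : ∫ x in a..b, ∫ y in a..b, ‖rA γ τ γ τ x y‖ ^ 2 ≤ A ^ 2 * (b - a) ^ (2 * s + 1)) :
    ∃ c : En n, ∫ x in a..b, ‖v x - c‖ ≤ 18 * (B + M * A) * (b - a) ^ (1 + (s - 3 / 2)) := by
  have h1 : Continuous γ := continuous_iff_continuousAt.2 fun x => (hγ x).continuousAt
  have IB := rA_int_bound h1 h2 h3 h4 hab hB hIB
  have IA := rA_int_bound h1 h2 h1 h2 hab hA hIA
  have hl : 0 < b - a := by linarith
  set l := b - a with hldef
  set p := a + l / 3 with hp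
  set q := b - l / 3 with hq
  have M0 : 0 ≤ M := (norm_nonneg _).trans (hM a ⟨le_rfl, hab.le⟩)
  -- general statement
  have gen : ∀ (g w : ℝ → En n), Continuous g → Continuous w → ∀ x,
      ‖((∫ y in q..b, g y) - ∫ y in a..p, g y) -
        ⟪τ x, (∫ y in q..b, γ y) - ∫ y in a..p, γ y⟫ • w x‖ ≤ ∫ y in a..b, ‖rA γ τ g w x y‖ := by
    intro g w hg hw x
    have hc : Continuous fun y => rA γ τ g w x y :=
      (rA_cont h1 h2 hg hw).comp (Continuous.prodMk_right x)
    have ev : ∀ c d : ℝ, ∫ y in c..d, rA γ τ g w x y =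
        (∫ y in c..d, g y) - (d - c) • g x - (⟪τ x, ∫ y in c..d, γ y⟫ - (d - c) * ⟪τ x, γ x⟫) • w x := by
      intro c d
      have e1 : ∀ y, rA γ τ g w x y = (g y - g x) - ((⟪τ x, γ y⟫ • w x) - ⟪τ x, γ x⟫ • w x) := by
        intro y; unfold rA; rw [inner_sub_right, sub_smul]
      simp_rw [e1]
      rw [intervalIntegral.integral_sub, intervalIntegral.integral_sub,
        intervalIntegral.integral_sub, intervalIntegral.integral_const,
        intervalIntegral.integral_const, intervalIntegral.integral_smul_const]
      · have : ∫ y in c..d, ⟪τ x, γ y⟫ = ⟪τ x, ∫ y in c..d, γ y⟫ := by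
          have := ContinuousLinearMap.intervalIntegral_comp_comm (innerSL ℝ (τ x)) (f := γ) (μ := volume)
            (h1.intervalIntegrable c d)
          simpa using this
        rw [this]; module
      all_goals exact Continuous.intervalIntegrable (by fun_prop) _ _
    have e : ((∫ y in q..b, g y) - ∫ y in a..p, g y) -
        ⟪τ x, (∫ y in q..b, γ y) - ∫ y in a..p, γ y⟫ • w x =
        (∫ y in q..b, rA γ τ g w x y) - ∫ y in a..p, rA γ τ g w x y := by
      rw [ev, ev, inner_sub_right, show b - q = l / 3 by rw [hq]; ring, show p - a = l / 3 by rw [hp]; ring]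
      module
    rw [e]
    have n1 := intervalIntegral.norm_integral_le_integral_norm (f := fun y => rA γ τ g w x y) (μ := volume) (show q ≤ b by rw [hq]; linarith)
    have n2 := intervalIntegral.norm_integral_le_integral_norm (f := fun y => rA γ τ g w x y) (μ := volume) (show a ≤ p by rw [hp]; linarith)
    have ii : ∀ c d, IntervalIntegrable (fun y => ‖rA γ τ g w x y‖) volume c d := fun c d =>
      hc.norm.intervalIntegrable _ _
    have n3 : 0 ≤ ∫ y in p..q, ‖rA γ τ g w x y‖ :=
      intervalIntegral.integral_nonneg (by rw [hp, hq]; linarith) fun _ _ => norm_nonneg _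
    have n4 := intervalIntegral.integral_add_adjacent_intervals (ii a p) (ii p q)
    have n5 := intervalIntegral.integral_add_adjacent_intervals (ii a q) (ii q b)
    have n6 := norm_sub_le (∫ y in q..b, rA γ τ g w x y) (∫ y in a..p, rA γ τ g w x y)
    linarith
  set U := (∫ y in q..b, u y) - ∫ y in a..p, u y with hU
  set w := (∫ y in q..b, γ y) - ∫ y in a..p, γ y with hw
  have apos : ∀ x ∈ Icc a b, l ^ 2 / 18 ≤ ⟪τ x, w⟫ := by
    intro x hx
    have hd : ∀ y, HasDerivAt (fun y => ⟪τ x, γ y⟫) ⟪τ x, τ y⟫ y := by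
      intro y
      have := (hasDerivAt_const y (τ x)).inner ℝ (hγ y)
      simpa using this
    have grow : ∀ y ∈ Icc a b, ∀ z ∈ Icc a b, y ≤ z → (z - y) / 2 ≤ ⟪τ x, γ z⟫ - ⟪τ x, γ y⟫ := by
      intro y hy z hz hyz
      have := Convex.mul_sub_le_image_sub_of_le_deriv (convex_Icc a b) (f := fun y => ⟪τ x, γ y⟫)
        (by fun_prop) (fun y _ => (hd y).differentiableAt.differentiableWithinAt) (C := 1/2)
        (fun y hy => by
          rw [(hd y).deriv]; rw [interior_Icc] at hy; exact hosc x hx y (Ioo_subset_Icc_self hy))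
        y hy z hz hyz
      linarith
    have hi : ∀ c d : ℝ, ⟪τ x, ∫ y in c..d, γ y⟫ = ∫ y in c..d, ⟪τ x, γ y⟫ := by
      intro c d
      have := ContinuousLinearMap.intervalIntegral_comp_comm (innerSL ℝ (τ x)) (f := γ) (μ := volume)
            (h1.intervalIntegrable c d)
      simpa using this.symm
    have hpm : p ∈ Icc a b := by rw [hp]; constructor <;> linarith
    have hqm : q ∈ Icc a b := by rw [hq]; constructor <;> linarith
    have u1 : ∫ y in a..p, ⟪τ x, γ y⟫ ≤ ∫ y in a..p, ⟪τ x, γ p⟫ := by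
      apply intervalIntegral.integral_mono_on hpm.1
      · exact Continuous.intervalIntegrable (by fun_prop) _ _
      · exact Continuous.intervalIntegrable (by fun_prop) _ _
      · intro y hy
        have := grow y ⟨hy.1, hy.2.trans hpm.2⟩ p hpm hy.2
        linarith [hy.2]
    have u2 : ∫ y in q..b, ⟪τ x, γ q⟫ ≤ ∫ y in q..b, ⟪τ x, γ y⟫ := by
      apply intervalIntegral.integral_mono_on hqm.2
      · exact Continuous.intervalIntegrable (by fun_prop) _ _
      · exact Continuous.intervalIntegrable (by fun_prop) _ _
      · intro y hy
        have := grow q hqm y ⟨hqm.1.trans hy.1, hy.2⟩ hy.1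
        linarith [hy.1]
    rw [intervalIntegral.integral_const, smul_eq_mul] at u1 u2
    rw [hw, inner_sub_right, hi, hi]
    have u3 := grow p hpm q hqm (by rw [hp, hq]; linarith)
    rw [show b - q = l / 3 by rw [hq]; ring] at u2
    rw [show p - a = l / 3 by rw [hp]; ring] at u1
    rw [show q - p = l / 3 by rw [hp, hq, show b = a + l by rw [hldef]; ring]; ring] at u3
    nlinarith
  have hwn : l ^ 2 / 18 ≤ ‖w‖ := by
    have h := apos a ⟨le_rfl, hab.le⟩
    have := real_inner_le_norm (τ a) w
    rw [hτ] at this; linarith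
  have hwp : 0 < ‖w‖ := lt_of_lt_of_le (by positivity) hwn
  refine ⟨‖w‖⁻¹ • U, ?_⟩
  have pw : ∀ x ∈ Icc a b, ‖v x - ‖w‖⁻¹ • U‖ ≤
      18 / l ^ 2 * ((∫ y in a..b, ‖rA γ τ u v x y‖) + M * ∫ y in a..b, ‖rA γ τ γ τ x y‖) := by
    intro x hx
    have g1 := gen u v h3 h4 x
    have g2 := gen γ τ h1 h2 x
    rw [← hU] at g1
    rw [← hw] at g2
    have ap := apos x hx
    set al := ⟪τ x, w⟫
    have al0 : 0 < al := lt_of_lt_of_le (by positivity) ap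
    have g3 : |‖w‖ - al| ≤ ∫ y in a..b, ‖rA γ τ γ τ x y‖ := by
      have := abs_norm_sub_norm_le w (al • τ x)
      rw [norm_smul, hτ, mul_one, Real.norm_of_nonneg al0.le] at this
      exact this.trans g2
    have g4 : ‖w‖ • v x - U = (‖w‖ - al) • v x - (U - al • v x) := by module
    have g5 : ‖‖w‖ • v x - U‖ ≤ (∫ y in a..b, ‖rA γ τ u v x y‖) + M * ∫ y in a..b, ‖rA γ τ γ τ x y‖ := by
      rw [g4]
      refine (norm_sub_le _ _).trans ?_
      rw [norm_smul, Real.norm_eq_abs]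
      have : |‖w‖ - al| * ‖v x‖ ≤ (∫ y in a..b, ‖rA γ τ γ τ x y‖) * M :=
        mul_le_mul g3 (hM x hx) (norm_nonneg _) ((abs_nonneg _).trans g3)
      linarith
    have g6 : v x - ‖w‖⁻¹ • U = ‖w‖⁻¹ • (‖w‖ • v x - U) := by
      rw [smul_sub ‖w‖⁻¹ (‖w‖ • v x) U, smul_smul, inv_mul_cancel₀ hwp.ne', one_smul]
    rw [g6, norm_smul, norm_inv, norm_norm]
    have g7 : ‖w‖⁻¹ ≤ 18 / l ^ 2 := by
      rw [inv_le_comm₀ hwp (by positivity), inv_div]; exact hwn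
    exact mul_le_mul g7 g5 (norm_nonneg _) (by positivity)
  have ic : ∀ (g w : ℝ → En n), Continuous g → Continuous w → Continuous fun x => ∫ y in a..b, ‖rA γ τ g w x y‖ :=
    fun g w hg hw => intervalIntegral.continuous_parametric_intervalIntegral_of_continuous'
      (rA_cont h1 h2 hg hw).norm a b
  have ic1 := ic u v h3 h4
  have ic2 := ic γ τ h1 h2
  have fin := intervalIntegral.integral_mono_on hab.le
    (Continuous.intervalIntegrable (by fun_prop) _ _)
    (Continuous.intervalIntegrable (by fun_prop) _ _) pw (μ := volume)
  rw [intervalIntegral.integral_const_mul, intervalIntegral.integral_add,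
    intervalIntegral.integral_const_mul] at fin
  · refine fin.trans ?_
    have h7 : l ^ (s + 3 / 2) = l ^ (1 + (s - 3/2)) * (l * l) := by
      rw [← sq, ← Real.rpow_natCast l 2, ← Real.rpow_add hl]; congr 1; norm_num; ring
    rw [h7] at IA IB
    have : 18 / l ^ 2 * ((∫ x in a..b, ∫ y in a..b, ‖rA γ τ u v x y‖) +
      M * ∫ x in a..b, ∫ y in a..b, ‖rA γ τ γ τ x y‖) ≤
      18 / l ^ 2 * (B * (l ^ (1 + (s - 3/2)) * (l * l)) + M * (A * (l ^ (1 + (s - 3/2)) * (l * l)))) := by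
      gcongr
    refine this.trans (le_of_eq ?_)
    field_simp
  · exact ic1.intervalIntegrable _ _
  · exact (ic2.const_mul M).intervalIntegrable _ _

lemma inner_ge_half {n : ℕ} {x y : En n} (hx : ‖x‖ = 1) (hy : ‖y‖ = 1) (h : ‖x - y‖ ≤ 1) :
    1 / 2 ≤ ⟪x, y⟫ := by
  have := norm_sub_sq_real x y
  rw [hx, hy] at this
  have h2 : ‖x - y‖ ^ 2 ≤ 1 := by
    have := norm_nonneg (x - y); nlinarith
  linarith

lemma tau_osc {n : ℕ} {γ τ : ℝ → En n} (hγ : ∀ x, HasDerivAt γ (τ x) x)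
    (hτ : ∀ x, ‖τ x‖ = 1) (h2 : UniformContinuous τ) {A s l : ℝ} (hs : 0 < s - 3 / 2) (hA : 0 < A)
    (hl : 0 < l) (hsm : 72 * Calp (s - 3 / 2) * A * l ^ (s - 3 / 2) ≤ 1 / 2)
    (hIA : ∀ a b, a < b → b - a ≤ l →
      ∫ x in a..b, ∫ y in a..b, ‖rA γ τ γ τ x y‖ ^ 2 ≤ A ^ 2 * (b - a) ^ (2 * s + 1)) :
    ∀ x y, x ≤ y → y - x ≤ l → ‖τ x - τ y‖ ≤ 1 := by
  have hc : Continuous γ := continuous_iff_continuousAt.2 fun x => (hγ x).continuousAt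
  obtain ⟨δ, hδ, hδ2⟩ := Metric.uniformContinuous_iff.1 h2 (1 / 2) (by norm_num)
  have hCp := Calp_pos hs
  have step : ∀ l', l' ≤ l → (∀ x y, x ≤ y → y - x ≤ l' → ‖τ x - τ y‖ ≤ 1) →
      ∀ x y, x ≤ y → y - x ≤ l' → ‖τ x - τ y‖ ≤ 1 / 2 := by
    intro l' hl' H x y hxy hyx
    rcases hxy.eq_or_lt with rfl | hxy
    · simp
    have := camp h2.continuous hs (K := 18 * (A + 1 * A)) (by positivity) hxy (by
      intro a b ha hab hb
      refine key_avg hγ hτ h2.continuous hc h2.continuous hab hA hA ?_ (fun x _ => (hτ x).le)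
        (hIA a b hab (by linarith)) (hIA a b hab (by linarith))
      intro z hz w hw
      apply inner_ge_half (hτ _) (hτ _)
      rcases le_total z w with h | h
      · exact H z w h (by linarith [hz.1, hw.2])
      · rw [norm_sub_rev]; exact H w z h (by linarith [hw.1, hz.2]))
    refine this.trans ?_
    have h3 : (y - x) ^ (s - 3/2) ≤ l ^ (s - 3/2) :=
      Real.rpow_le_rpow (by linarith) (by linarith) hs.le
    calc 2 * Calp (s - 3/2) * (18 * (A + 1 * A)) * (y - x) ^ (s - 3/2)
        = 72 * Calp (s - 3/2) * A * (y - x) ^ (s - 3/2) := by ring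
      _ ≤ 72 * Calp (s - 3/2) * A * l ^ (s - 3/2) := by gcongr
      _ ≤ _ := hsm
  have ind : ∀ N : ℕ, ∀ x y, x ≤ y → y - x ≤ min (N * (δ / 2)) l → ‖τ x - τ y‖ ≤ 1 := by
    intro N
    induction N with
    | zero =>
      intro x y hxy h
      have : y - x ≤ 0 := by simpa using h.trans (min_le_left _ _)
      have : x = y := by linarith
      simp [this]
    | succ N ih =>
      intro x y hxy h
      have h1 : y - x ≤ (N + 1) * (δ / 2) := by simpa using h.trans (min_le_left _ _)
      have h2' : y - x ≤ l := h.trans (min_le_right _ _)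
      have st := step _ (min_le_right _ _) ih
      have key : ∀ m, x ≤ m → m ≤ y → m - x ≤ N * (δ / 2) → y - m ≤ δ / 2 → ‖τ x - τ y‖ ≤ 1 := by
        intro m hm1 hm2 hm3 hm4
        have a1 := st x m hm1 (le_min hm3 (by linarith))
        have a2 := hδ2 (a := m) (b := y) (by rw [Real.dist_eq, abs_lt]; constructor <;> linarith)
        rw [dist_eq_norm] at a2
        have a3 := norm_add_le (τ x - τ m) (τ m - τ y)
        rw [sub_add_sub_cancel] at a3
        linarith
      by_cases hN : y - δ / 2 ≤ x
      · exact key x le_rfl hxy (by simp; positivity) (by linarith)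
      · exact key (y - δ / 2) (by linarith) (by linarith) (by linarith) (by linarith)
  intro x y hxy h
  obtain ⟨N, hN⟩ := exists_nat_gt ((y - x) / (δ / 2))
  exact ind N x y hxy (le_min (by rw [div_lt_iff₀ (by linarith)] at hN; exact hN.le) h)

lemma sup_arc {n : ℕ} {γ τ u v : ℝ → En n} (hγ : ∀ x, HasDerivAt γ (τ x) x)
    (hτ : ∀ x, ‖τ x‖ = 1) (h2 : UniformContinuous τ)
    (h3 : Continuous u) (h4 : Continuous v) {A Q M s l L : ℝ} (hs : 0 < s - 3 / 2) (hA : 0 < A)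
    (hQ : 0 < Q)
    (hl : 0 < l) (hL : 0 < L) (hsm : 72 * Calp (s - 3 / 2) * A * l ^ (s - 3 / 2) ≤ 1 / 2)
    (hper : Function.Periodic γ L)
    (hM : ∀ x, ‖v x‖ ≤ M) (hM' : ∃ x, ‖v x‖ = M)
    (hIA : ∀ a b, a < b → b - a ≤ L →
      ∫ x in a..b, ∫ y in a..b, ‖rA γ τ γ τ x y‖ ^ 2 ≤ A ^ 2 * (b - a) ^ (2 * s + 1))
    (hIB : ∀ a b, a < b → b - a ≤ L →
      ∫ x in a..b, ∫ y in a..b, ‖rA γ τ u v x y‖ ^ 2 ≤ Q ^ 2 * (b - a) ^ (2 * s + 1))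
    (hH : ∀ a b, a < b → b - a ≤ L → ∫ x in a..b, ‖v x‖ ^ 2 ≤ Q ^ 2) :
    M ≤ 4 / 3 * (1 / √l + 36 * Calp (s - 3 / 2) * l ^ (s - 3 / 2)) * Q := by
  have hCp := Calp_pos hs
  have osc0 : ∀ l', 0 < l' → l' ≤ l → l' ≤ L → ∀ x y, x ≤ y → y - x ≤ l' → ‖τ x - τ y‖ ≤ 1 := by
    intro l' h0 hl' hL'
    refine tau_osc hγ hτ h2 hs hA h0 (le_trans ?_ hsm) fun a b hab h => hIA a b hab (h.trans hL')
    have : l' ^ (s - 3/2) ≤ l ^ (s - 3/2) := Real.rpow_le_rpow h0.le hl' hs.le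
    gcongr
  have hlL : l ≤ L := by
    by_contra! hcon
    have osc := osc0 L hL hcon.le le_rfl
    have hd : ∀ y, HasDerivAt (fun y => ⟪τ 0, γ y⟫) ⟪τ 0, τ y⟫ y := by
      intro y
      have := (hasDerivAt_const y (τ 0)).inner ℝ (hγ y)
      simpa using this
    have := Convex.mul_sub_le_image_sub_of_le_deriv (convex_Icc 0 L) (f := fun y => ⟪τ 0, γ y⟫)
        (fun y _ => (hd y).continuousAt.continuousWithinAt)
        (fun y _ => (hd y).differentiableAt.differentiableWithinAt) (C := 1/2)
        (fun y hy => by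
          rw [(hd y).deriv]; rw [interior_Icc] at hy
          exact inner_ge_half (hτ _) (hτ _) (osc 0 y hy.1.le (by linarith [hy.2])))
        0 ⟨le_rfl, hL.le⟩ L ⟨hL.le, le_rfl⟩ hL.le
    have e : γ L = γ 0 := by simpa using hper 0
    simp only [e] at this
    linarith
  have osc := osc0 l hl le_rfl hlL
  obtain ⟨x, hx⟩ := hM'
  have M0 : 0 ≤ M := hx ▸ norm_nonneg _
  set K := 36 * Calp (s - 3/2) * (Q + M * A) * l ^ (s - 3/2) with hK
  have pt : ∀ y ∈ Icc x (x + l), M ≤ ‖v y‖ + K := by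
    intro y hy
    rcases hy.1.eq_or_lt with rfl | hxy
    · rw [hx]; linarith [show 0 ≤ K by positivity]
    have := camp h4 hs (K := 18 * (Q + M * A)) (by positivity) hxy (by
      intro a b ha hab hb
      refine key_avg hγ hτ h2.continuous h3 h4 hab hQ hA ?_ (fun x _ => hM x)
        (hIB a b hab (by linarith [hy.2])) (hIA a b hab (by linarith [hy.2]))
      intro z hz w hw
      apply inner_ge_half (hτ _) (hτ _)
      rcases le_total z w with h | h
      · exact osc z w h (by linarith [hz.1, hw.2, hy.2])
      · rw [norm_sub_rev]; exact osc w z h (by linarith [hw.1, hz.2, hy.2]))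
    have h3 : (y - x) ^ (s - 3/2) ≤ l ^ (s - 3/2) :=
      Real.rpow_le_rpow (by linarith) (by linarith [hy.2]) hs.le
    have h5 : 2 * Calp (s - 3/2) * (18 * (Q + M * A)) * (y - x) ^ (s - 3/2) ≤ K := by
      calc _ = 36 * Calp (s - 3/2) * (Q + M * A) * (y - x) ^ (s - 3/2) := by ring
        _ ≤ K := by rw [hK]; gcongr
    have := norm_sub_norm_le (v x) (v y)
    linarith
  have hd : 0 < √l := Real.sqrt_pos.2 hl
  have hdd : √l * √l = l := Real.mul_self_sqrt hl.le
  set d := √l with hddef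
  have pt2 : ∀ y ∈ Icc x (x + l), M ≤ (Q / d / 2 + K) + d / (2 * Q) * ‖v y‖ ^ 2 := by
    intro y hy
    have h1 := pt y hy
    have h2 : Q / d / 2 + d / (2 * Q) * ‖v y‖ ^ 2 - ‖v y‖ = d / (2 * Q) * (‖v y‖ - Q / d) ^ 2 := by
      field_simp; ring
    have h3 : 0 ≤ d / (2 * Q) * (‖v y‖ - Q / d) ^ 2 := by positivity
    linarith
  have fin := intervalIntegral.integral_mono_on (show x ≤ x + l by linarith)
    (Continuous.intervalIntegrable (by fun_prop) _ _)
    (Continuous.intervalIntegrable (by fun_prop) _ _) pt2 (μ := volume)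
  rw [intervalIntegral.integral_add, intervalIntegral.integral_const_mul,
    intervalIntegral.integral_const, intervalIntegral.integral_const] at fin
  · simp only [add_sub_cancel_left, smul_eq_mul] at fin
    have h5 := hH x (x + l) (by linarith) (by linarith)
    have h6 : d / (2 * Q) * ∫ y in x..(x+l), ‖v y‖ ^ 2 ≤ d / (2 * Q) * Q ^ 2 := by gcongr
    have h7 : d / (2 * Q) * Q ^ 2 = l * (Q / d / 2) := by
      rw [← hdd]; field_simp
    have h8 : l * M ≤ l * (Q / d + K) := by linarith
    have h9 := le_of_mul_le_mul_left h8 hl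
    have h10 : K = 36 * Calp (s - 3/2) * l ^ (s - 3/2) * Q + M * (72 * Calp (s - 3/2) * A * l ^ (s - 3/2)) / 2 := by
      rw [hK]; ring
    have h11 : M * (72 * Calp (s - 3/2) * A * l ^ (s - 3/2)) ≤ M * (1 / 2) := by gcongr
    have h12 : Q / d = 1 / d * Q := by ring
    linarith
  · exact Continuous.intervalIntegrable (by fun_prop) _ _
  · exact Continuous.intervalIntegrable (by fun_prop) _ _

lemma per_lint {f : ℝ → ℝ≥0∞} (hf : Function.Periodic f 1) (p : ℝ) :
    ∫⁻ x in Ioc p (p + 1), f x = ∫⁻ x in I01, f x := by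
  have e : ∫⁻ x in I01, f x = ∫⁻ x in Ioc (0:ℝ) (0 + 1), f x := by
    unfold I01
    rw [zero_add]
    exact setLIntegral_congr Ico_ae_eq_Ioc
  rw [e]
  exact (isAddFundamentalDomain_Ioc one_pos p).setLIntegral_eq
    (isAddFundamentalDomain_Ioc one_pos 0) f hf.map_vadd_zmultiples

lemma per_uc {E : Type*} [NormedAddCommGroup E] {f : ℝ → E} {L : ℝ} (hL : 0 < L)
    (hf : Continuous f) (hp : Function.Periodic f L) : UniformContinuous f := by
  haveI : Fact (0 < L) := ⟨hL⟩
  have hc : Continuous (hp.lift : AddCircle L → E) := by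
    apply continuous_coinduced_dom.mpr
    exact hf
  have h1 := CompactSpace.uniformContinuous_of_continuous hc
  have h2 : UniformContinuous (fun x : ℝ => (x : AddCircle L)) :=
    uniformContinuous_addMonoidHom_of_continuous (f := QuotientAddGroup.mk' (AddSubgroup.zmultiples L))
      (AddCircle.continuous_mk' L)
  exact h1.comp h2

lemma per_deriv {E : Type*} [NormedAddCommGroup E] [NormedSpace ℝ E] {f : ℝ → E}
    (hp : Function.Periodic f 1) : Function.Periodic (deriv f) 1 := by
  intro x
  rw [← deriv_comp_add_const]
  congr 1
  funext y; exact hp y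

lemma InHs.cont {n : ℕ} {s : ℝ} {u : ℝ → En n} (h : InHs s u) : Continuous u := h.2.1.continuous
lemma InHs.dcont {n : ℕ} {s : ℝ} {u : ℝ → En n} (h : InHs s u) : Continuous (deriv u) :=
  h.2.1.continuous_deriv le_rfl
lemma InHs.hd {n : ℕ} {s : ℝ} {u : ℝ → En n} (h : InHs s u) (x : ℝ) : HasDerivAt u (deriv u x) x :=
  (h.2.1.differentiable one_ne_zero x).hasDerivAt
lemma InHs.pd {n : ℕ} {s : ℝ} {u : ℝ → En n} (h : InHs s u) : Function.Periodic (deriv u) 1 :=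
  per_deriv h.1

lemma per_int {E : Type*} {f : ℝ → E} (hp : Function.Periodic f 1) (x : ℝ) (k : ℤ) :
    f (x + k) = f x := by
  have := hp.int_mul k x
  simpa using this

lemma InM.inj_per {n : ℕ} {s : ℝ} {γ : ℝ → En n} (h : InM s γ) {x y : ℝ} (hxy : γ x = γ y) :
    ∃ k : ℤ, y = x + k := by
  have e : ∀ z, γ (Int.fract z) = γ z := by
    intro z
    have := per_int h.1.1 z (-⌊z⌋)
    rw [← this]; congr 1; rw [Int.fract]; push_cast; ring
  have m : ∀ z, Int.fract z ∈ I01 := fun z => ⟨Int.fract_nonneg z, Int.fract_lt_one z⟩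
  have := h.2.1 (m x) (m y) (by rw [e, e, hxy])
  refine ⟨⌊y⌋ - ⌊x⌋, ?_⟩
  have a := Int.fract_add_floor x
  have b := Int.fract_add_floor y
  push_cast; linarith

/-- extended double integral for the first form -/
def EB {n : ℕ} (s : ℝ) (γ u : ℝ → En n) : ℝ≥0∞ :=
  ∫⁻ x in I01, ∫⁻ y in I01, ENNReal.ofReal (‖Rop s γ u x y‖ ^ 2 * muW γ x y)

lemma dbl_shift {F : ℝ → ℝ → ℝ≥0∞} (h1 : ∀ y, Function.Periodic (fun x => F x y) 1)
    (h2 : ∀ x, Function.Periodic (F x) 1) (p : ℝ) :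
    ∫⁻ x in Ioc p (p+1), ∫⁻ y in Ioc p (p+1), F x y = ∫⁻ x in I01, ∫⁻ y in I01, F x y := by
  simp_rw [per_lint (h2 _) p]
  apply per_lint
  intro x
  simp only
  congr 1
  funext y
  exact h1 y x

lemma EB_shift {n : ℕ} {s : ℝ} {γ u : ℝ → En n} (hγ : Function.Periodic γ 1)
    (hu : Function.Periodic u 1) (p : ℝ) :
    ∫⁻ x in Ioc p (p+1), ∫⁻ y in Ioc p (p+1), ENNReal.ofReal (‖Rop s γ u x y‖ ^ 2 * muW γ x y)
      = EB s γ u := by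
  have hg' := per_deriv hγ
  have hu' := per_deriv hu
  apply dbl_shift
  · intro y x
    simp only [Rop, DDg, muW, hγ x, hu x, hg' x, hu' x]
  · intro y x
    simp only [Rop, DDg, muW, hγ x, hu x, hg' x]

/-- remainder in original coordinates -/
def rO {n : ℕ} (γ u : ℝ → En n) (x y : ℝ) : En n := u y - u x - DDg γ u x (γ y - γ x)

lemma rO_zero {n : ℕ} {s : ℝ} {γ u : ℝ → En n} (hγ : InM s γ) (hu : Function.Periodic u 1) {x y : ℝ}
    (h : γ x = γ y) : rO γ u x y = 0 := by
  obtain ⟨k, rfl⟩ := hγ.inj_per h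
  simp [rO, DDg, per_int hu, per_int hγ.1.1]

lemma Rop_eq {n : ℕ} {s : ℝ} {γ u : ℝ → En n} {x y : ℝ} (h : γ x ≠ γ y) :
    ‖Rop s γ u x y‖ ^ 2 * muW γ x y =
      ‖rO γ u x y‖ ^ 2 * (‖deriv γ x‖ * ‖deriv γ y‖) * (‖γ y - γ x‖ ^ (2 * s + 1))⁻¹ := by
  have hp : 0 < ‖γ y - γ x‖ := norm_pos_iff.2 (sub_ne_zero.2 h.symm)
  have e : ‖γ y - γ x‖ ^ (2 * s + 1) = (‖γ y - γ x‖ ^ s) ^ 2 * ‖γ y - γ x‖ := by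
    rw [Real.rpow_add hp, Real.rpow_one, mul_comm 2 s, Real.rpow_mul hp.le]; norm_num
  rw [e]
  unfold Rop muW rO
  rw [norm_smul, norm_inv, Real.norm_of_nonneg (Real.rpow_nonneg hp.le s)]
  have : 0 < ‖γ y - γ x‖ ^ s := Real.rpow_pos_of_pos hp s
  field_simp

lemma rO_le {n : ℕ} {s : ℝ} (hs : 0 < s) {γ u : ℝ → En n} (hγ : InM s γ) (hu : Function.Periodic u 1) {x y l : ℝ}
    (hl : ‖γ y - γ x‖ ≤ l) :
    ‖rO γ u x y‖ ^ 2 * (‖deriv γ x‖ * ‖deriv γ y‖) ≤ l ^ (2 * s + 1) * (‖Rop s γ u x y‖ ^ 2 * muW γ x y) := by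
  by_cases h : γ x = γ y
  · rw [rO_zero hγ hu h]
    have : 0 ≤ muW γ x y := by unfold muW; positivity
    have l0 : 0 ≤ l := (norm_nonneg _).trans hl
    simp only [norm_zero]
    rw [zero_pow two_ne_zero, zero_mul]; positivity
  · have hp : 0 < ‖γ y - γ x‖ := norm_pos_iff.2 (sub_ne_zero.2 (Ne.symm h))
    rw [Rop_eq h]
    have h1 : ‖γ y - γ x‖ ^ (2 * s + 1) ≤ l ^ (2 * s + 1) := Real.rpow_le_rpow hp.le hl (by linarith)
    have h2 : 0 < ‖γ y - γ x‖ ^ (2 * s + 1) := Real.rpow_pos_of_pos hp _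
    have h3 : 1 ≤ l ^ (2 * s + 1) * (‖γ y - γ x‖ ^ (2 * s + 1))⁻¹ := by
      rw [← div_eq_mul_inv, one_le_div h2]; exact h1
    have h4 : 0 ≤ ‖rO γ u x y‖ ^ 2 * (‖deriv γ x‖ * ‖deriv γ y‖) := by positivity
    calc ‖rO γ u x y‖ ^ 2 * (‖deriv γ x‖ * ‖deriv γ y‖)
        ≤ ‖rO γ u x y‖ ^ 2 * (‖deriv γ x‖ * ‖deriv γ y‖) *
          (l ^ (2 * s + 1) * (‖γ y - γ x‖ ^ (2 * s + 1))⁻¹) := le_mul_of_one_le_right h4 h3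
      _ = _ := by ring

lemma dbl_ofReal {F : ℝ × ℝ → ℝ} (hF : Continuous F) (h0 : ∀ z, 0 ≤ F z) {p q : ℝ} (hpq : p ≤ q) :
    ENNReal.ofReal (∫ x in p..q, ∫ y in p..q, F (x, y)) =
      ∫⁻ x in Ioc p q, ∫⁻ y in Ioc p q, ENNReal.ofReal (F (x, y)) := by
  have ic : Continuous fun x => ∫ y in p..q, F (x, y) :=
    intervalIntegral.continuous_parametric_intervalIntegral_of_continuous' (f := fun x y => F (x, y)) hF p q
  rw [intervalIntegral.integral_of_le hpq, ofReal_integral_eq_lintegral_ofReal]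
  · congr 1
    funext x
    rw [intervalIntegral.integral_of_le hpq, ofReal_integral_eq_lintegral_ofReal]
    · have := (hF.comp (Continuous.prodMk_right x)).integrableOn_Icc (μ := volume) (a := p) (b := q)
      exact this.mono_set Ioc_subset_Icc_self
    · exact Eventually.of_forall fun y => h0 _
  · exact (ic.integrableOn_Icc (μ := volume) (a := p) (b := q)).mono_set Ioc_subset_Icc_self
  · exact Eventually.of_forall fun y => intervalIntegral.integral_nonneg hpq fun _ _ => h0 _

lemma rO_cont {n : ℕ} {s : ℝ} {γ u : ℝ → En n} (hγ : InM s γ) (hu : InHs s u) :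
    Continuous fun z : ℝ × ℝ => rO γ u z.1 z.2 := by
  have := hγ.1.cont
  have := hγ.1.dcont
  have := hu.cont
  have := hu.dcont
  unfold rO DDg
  have h : ∀ z : ℝ × ℝ, ‖deriv γ z.1‖ ^ 2 ≠ 0 := fun z => by
    simpa using hγ.2.2 z.1
  fun_prop (disch := assumption)

lemma dbl_int_le {n : ℕ} {s : ℝ} (hs : 0 < s) {γ u : ℝ → En n} (hγ : InM s γ) (hu : InHs s u)
    {p q Q : ℝ} (hpq : p < q) (hq1 : q ≤ p + 1) (hQ : 0 ≤ Q) (hE : EB s γ u ≤ ENNReal.ofReal (Q ^ 2)) :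
    ∫ x in p..q, ∫ y in p..q, ‖rO γ u x y‖ ^ 2 * (‖deriv γ x‖ * ‖deriv γ y‖) ≤
      Q ^ 2 * (∫ x in p..q, ‖deriv γ x‖) ^ (2 * s + 1) := by
  have hdc := hγ.1.dcont
  have hl0 : 0 ≤ ∫ x in p..q, ‖deriv γ x‖ :=
    intervalIntegral.integral_nonneg hpq.le fun _ _ => norm_nonneg _
  set l := ∫ x in p..q, ‖deriv γ x‖ with hl
  have dist_le : ∀ x ∈ Icc p q, ∀ y ∈ Icc p q, ‖γ y - γ x‖ ≤ l := by
    have base : ∀ x ∈ Icc p q, ∀ y ∈ Icc p q, x ≤ y → ‖γ y - γ x‖ ≤ l := by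
      intro x hx y hy hxy
      rw [← intervalIntegral.integral_eq_sub_of_hasDerivAt (fun z _ => hγ.1.hd z) (hdc.intervalIntegrable _ _)]
      refine (intervalIntegral.norm_integral_le_integral_norm hxy).trans ?_
      apply intervalIntegral.integral_mono_interval hx.1 hxy hy.2
      · exact Eventually.of_forall fun _ => norm_nonneg _
      · exact hdc.norm.intervalIntegrable _ _
    intro x hx y hy
    rcases le_total x y with h | h
    · exact base x hx y hy h
    · rw [norm_sub_rev]; exact base y hy x hx h
  have hFc : Continuous fun z : ℝ × ℝ => ‖rO γ u z.1 z.2‖ ^ 2 * (‖deriv γ z.1‖ * ‖deriv γ z.2‖) := by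
    have := rO_cont hγ hu
    fun_prop
  have h0 : 0 ≤ Q ^ 2 * l ^ (2 * s + 1) := by positivity
  rw [← ENNReal.ofReal_le_ofReal_iff h0]
  rw [dbl_ofReal hFc (fun z => by positivity) hpq.le]
  have hsub : Ioc p q ⊆ Ioc p (p + 1) := Ioc_subset_Ioc_right hq1
  calc ∫⁻ x in Ioc p q, ∫⁻ y in Ioc p q, ENNReal.ofReal (‖rO γ u x y‖ ^ 2 * (‖deriv γ x‖ * ‖deriv γ y‖))
      ≤ ∫⁻ x in Ioc p q, ∫⁻ y in Ioc p q, ENNReal.ofReal (l ^ (2 * s + 1)) *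
          ENNReal.ofReal (‖Rop s γ u x y‖ ^ 2 * muW γ x y) := by
        refine setLIntegral_mono' measurableSet_Ioc fun x hx => setLIntegral_mono' measurableSet_Ioc fun y hy => ?_
        rw [← ENNReal.ofReal_mul (by positivity)]
        apply ENNReal.ofReal_le_ofReal
        exact rO_le hs hγ hu.1 (dist_le x (Ioc_subset_Icc_self hx) y (Ioc_subset_Icc_self hy))
    _ = ENNReal.ofReal (l ^ (2 * s + 1)) * ∫⁻ x in Ioc p q, ∫⁻ y in Ioc p q,
          ENNReal.ofReal (‖Rop s γ u x y‖ ^ 2 * muW γ x y) := by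
        simp_rw [lintegral_const_mul' _ _ ENNReal.ofReal_ne_top]
    _ ≤ ENNReal.ofReal (l ^ (2 * s + 1)) * EB s γ u := by
        rw [← EB_shift hγ.1.1 hu.1 p]
        gcongr
    _ ≤ ENNReal.ofReal (l ^ (2 * s + 1)) * ENNReal.ofReal (Q ^ 2) := by gcongr
    _ = _ := by rw [← ENNReal.ofReal_mul (by positivity), mul_comm]

lemma reparam {w : ℝ → ℝ} (hw : Continuous w) (hpos : ∀ x, 0 < w x) (hper : Function.Periodic w 1) :
    ∃ (φ : ℝ → ℝ) (L : ℝ), 0 < L ∧ Continuous φ ∧ StrictMono φ ∧ Function.Surjective φ ∧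
      (∀ y, HasDerivAt φ (w (φ y))⁻¹ y) ∧ (∀ y, φ (y + L) = φ y + 1) ∧
      (∀ a b, b - a = ∫ x in φ a..φ b, w x) ∧
      (∀ (H : ℝ → ℝ), Continuous H → ∀ a b,
        ∫ y in a..b, H (φ y) = ∫ x in φ a..φ b, H x * w x) := by
  set S : ℝ → ℝ := fun x => ∫ t in (0:ℝ)..x, w t with hS
  have hint : ∀ a b, IntervalIntegrable w volume a b := fun a b => hw.intervalIntegrable a b
  have hSd : ∀ x, HasDerivAt S (w x) x := fun x =>
    intervalIntegral.integral_hasDerivAt_right (hint _ _) (hw.stronglyMeasurableAtFilter _ _) hw.continuousAt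
  have hSm : StrictMono S := strictMono_of_deriv_pos fun x => by rw [(hSd x).deriv]; exact hpos x
  have hSc : Continuous S := continuous_iff_continuousAt.2 fun x => (hSd x).continuousAt
  have hL : 0 < ∫ x in (0:ℝ)..1, w x :=
    intervalIntegral.intervalIntegral_pos_of_pos (hint _ _) hpos one_pos
  have hSs : Function.Surjective S := by
    apply hSc.surjective
    · exact hper.tendsto_atTop_intervalIntegral_of_pos' (hint _ _) hpos one_pos
    · exact hper.tendsto_atBot_intervalIntegral_of_pos' (hint _ _) hpos one_pos
  let e := StrictMono.orderIsoOfSurjective S hSm hSs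
  have eS : ∀ x, e x = S x := fun x => rfl
  let φ : ℝ → ℝ := fun y => e.symm y
  have h1 : ∀ x, φ (S x) = x := fun x => e.symm_apply_apply x
  have h2 : ∀ y, S (φ y) = y := fun y => e.apply_symm_apply y
  have hφc : Continuous φ := e.symm.continuous
  have hsub : ∀ a b, S b - S a = ∫ x in a..b, w x := fun a b => by
    simp only [hS]
    exact intervalIntegral.integral_interval_sub_left (hint _ _) (hint _ _)
  refine ⟨φ, ∫ x in (0:ℝ)..1, w x, hL, hφc, e.symm.strictMono, e.symm.surjective, ?_, ?_, ?_, ?_⟩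
  · intro y
    exact HasDerivAt.of_local_left_inverse hφc.continuousAt (hSd (φ y)) (hpos _).ne'
      (Eventually.of_forall h2)
  · intro y
    apply hSm.injective
    rw [h2]
    have := hsub (φ y) (φ y + 1)
    rw [h2, hper.intervalIntegral_add_eq (φ y) 0, zero_add] at this
    linarith
  · intro a b
    rw [← hsub, h2, h2]
  · intro H hH a b
    have := intervalIntegral.integral_comp_mul_deriv (f := S) (f' := w) (g := fun y => H (φ y))
      (a := φ a) (b := φ b) (fun x _ => hSd x) hw.continuousOn (hH.comp hφc)
    rw [h2, h2] at this
    rw [← this]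
    simp [h1]

lemma sup_bound0 {s : ℝ} (hs : 3 / 2 < s) {A : ℝ} (hA : 0 < A) :
    ∃ K > 0, ∀ (n : ℕ) (γ u : ℝ → En n), InM s γ → InHs s u → ∀ Q > 0,
      EB s γ γ ≤ ENNReal.ofReal (A ^ 2) → EB s γ u ≤ ENNReal.ofReal (Q ^ 2) →
      ∫ x in I01, ‖Dg γ u x‖ ^ 2 * ‖deriv γ x‖ ≤ Q ^ 2 → ∀ x, ‖Dg γ u x‖ ≤ K * Q := by
  have hα : 0 < s - 3 / 2 := by linarith
  have hC := Calp_pos hα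
  set l : ℝ := (1 / (144 * Calp (s - 3 / 2) * A)) ^ (1 / (s - 3/2)) with hl
  have hl0 : 0 < l := by positivity
  have hle : l ^ (s - 3 / 2) = 1 / (144 * Calp (s - 3 / 2) * A) := by
    rw [hl, ← Real.rpow_mul (by positivity), one_div_mul_cancel hα.ne', Real.rpow_one]
  refine ⟨4 / 3 * (1 / √l + 36 * Calp (s - 3 / 2) * l ^ (s - 3 / 2)), by positivity, ?_⟩
  intro n γ u hγ hu Q hQ hEA hEQ hH
  have hgc := hγ.1.cont
  have hgd := hγ.1.dcont
  have huc := hu.cont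
  have hud := hu.dcont
  have hnp : ∀ x, 0 < ‖deriv γ x‖ := fun x => norm_pos_iff.2 (hγ.2.2 x)
  have hne : ∀ x, ‖deriv γ x‖ ≠ 0 := fun x => (hnp x).ne'
  have hwp : Function.Periodic (fun x => ‖deriv γ x‖) 1 := fun x => by simp only [hγ.1.pd x]
  obtain ⟨φ, L, hL, hφc, hφm, hφs, hφd, hφL, hφi, hφsub⟩ := reparam hgd.norm hnp hwp
  have hDc : Continuous (Dg γ u) := by unfold Dg; fun_prop (disch := assumption)
  have hTc : Continuous (Dg γ γ) := by unfold Dg; fun_prop (disch := assumption)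
  have hDp : Function.Periodic (fun x => ‖Dg γ u x‖) 1 := fun x => by simp only [Dg, hγ.1.pd x, hu.pd x]
  -- max
  obtain ⟨x0, -, hx0⟩ := isCompact_Icc.exists_isMaxOn (nonempty_Icc.2 (zero_le_one' ℝ)) hDc.norm.continuousOn
  have hmax : ∀ x, ‖Dg γ u x‖ ≤ ‖Dg γ u x0‖ := by
    intro x
    obtain ⟨y, hy, hxy⟩ := hDp.exists_mem_Ico₀ one_pos x
    rw [hxy]
    exact hx0 (Ico_subset_Icc_self hy)
  -- rA identity
  have hrA : ∀ (f : ℝ → En n) x y, rA (γ ∘ φ) (Dg γ γ ∘ φ) (f ∘ φ) (Dg γ f ∘ φ) x y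
      = rO γ f (φ x) (φ y) := by
    intro f x y
    simp only [rA, rO, DDg, Dg, Function.comp]
    rw [real_inner_smul_left, smul_smul]
    congr 2
    have := hne (φ x)
    field_simp
  have hdbl : ∀ (f : ℝ → En n), InHs s f → ∀ Q > 0, EB s γ f ≤ ENNReal.ofReal (Q ^ 2) →
      ∀ a b, a < b → b - a ≤ L → ∫ x in a..b, ∫ y in a..b,
      ‖rA (γ ∘ φ) (Dg γ γ ∘ φ) (f ∘ φ) (Dg γ f ∘ φ) x y‖ ^ 2 ≤ Q ^ 2 * (b - a) ^ (2 * s + 1) := by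
    intro f hf Q hQ hE a b hab hbL
    simp_rw [hrA]
    have hrc := rO_cont hγ hf
    have hle : φ b ≤ φ a + 1 := by
      rw [← hφL]; exact hφm.monotone (by linarith)
    have e1 : ∀ x, ∫ y in a..b, ‖rO γ f (φ x) (φ y)‖ ^ 2 =
        ∫ y in φ a..φ b, ‖rO γ f (φ x) y‖ ^ 2 * ‖deriv γ y‖ := fun x =>
      hφsub (fun y => ‖rO γ f (φ x) y‖ ^ 2) (by
        have : Continuous fun y => rO γ f (φ x) y := hrc.comp (Continuous.prodMk_right _)
        fun_prop) a b
    simp_rw [e1]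
    have ic : Continuous fun x => ∫ y in φ a..φ b, ‖rO γ f x y‖ ^ 2 * ‖deriv γ y‖ :=
      intervalIntegral.continuous_parametric_intervalIntegral_of_continuous'
        (f := fun x y => ‖rO γ f x y‖ ^ 2 * ‖deriv γ y‖) (by
          unfold Function.uncurry
          fun_prop) _ _
    rw [hφsub _ ic a b]
    have := dbl_int_le (by linarith : 0 < s) hγ hf (hφm hab) hle hQ.le hE
    rw [← hφi] at this
    refine le_trans (le_of_eq ?_) this
    congr 1
    funext x
    rw [← intervalIntegral.integral_mul_const]
    congr 1
    funext y
    ring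
  obtain ⟨y0, rfl⟩ := hφs x0
  have main := sup_arc (γ := γ ∘ φ) (τ := Dg γ γ ∘ φ) (u := u ∘ φ) (v := Dg γ u ∘ φ)
    (A := A) (Q := Q) (M := ‖Dg γ u (φ y0)‖) (s := s) (l := l) (L := L)
    (fun x => (hγ.1.hd (φ x)).scomp x (hφd x))
    (fun x => by simp [Dg, norm_smul, inv_mul_cancel₀ (hne (φ x))])
    (per_uc hL (hTc.comp hφc) (fun x => by
      simp only [Function.comp, hφL, Dg, hγ.1.pd (φ x)]))
    (huc.comp hφc) (hDc.comp hφc) hα hA hQ hl0 hL (by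
      rw [hle]
      generalize Calp (s - 3 / 2) = c at hC
      apply le_of_eq; field_simp; norm_num)
    (fun x => by simp only [Function.comp, hφL, hγ.1.1 (φ x)])
    (fun x => hmax _) ⟨y0, rfl⟩
    (hdbl γ hγ.1 A hA hEA) (hdbl u hu Q hQ hEQ) (by
      intro a b hab hbL
      have e := hφsub (fun x => ‖Dg γ u x‖ ^ 2) (by fun_prop) a b
      have hle : φ b ≤ φ a + 1 := by
        rw [← hφL]; exact hφm.monotone (by linarith)
      simp only [Function.comp]
      rw [e]
      have hFc : Continuous fun x => ‖Dg γ u x‖ ^ 2 * ‖deriv γ x‖ := by fun_prop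
      have hFp : Function.Periodic (fun x => ‖Dg γ u x‖ ^ 2 * ‖deriv γ x‖) 1 := fun x => by
        simp only [Dg, hγ.1.pd x, hu.pd x]
      calc ∫ x in φ a..φ b, ‖Dg γ u x‖ ^ 2 * ‖deriv γ x‖
          ≤ ∫ x in φ a..φ a + 1, ‖Dg γ u x‖ ^ 2 * ‖deriv γ x‖ := by
            apply intervalIntegral.integral_mono_interval le_rfl (hφm hab).le hle
            · exact Eventually.of_forall fun _ => by positivity
            · exact hFc.intervalIntegrable _ _
        _ = ∫ x in (0:ℝ)..0 + 1, ‖Dg γ u x‖ ^ 2 * ‖deriv γ x‖ := hFp.intervalIntegral_add_eq _ _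
        _ = ∫ x in I01, ‖Dg γ u x‖ ^ 2 * ‖deriv γ x‖ := by
            rw [intervalIntegral.integral_of_le (by norm_num), I01, zero_add]
            exact setIntegral_congr_set Ico_ae_eq_Ioc.symm
        _ ≤ Q ^ 2 := hH)
  exact fun x => (hmax x).trans main

lemma sup_bound {s : ℝ} (hs : 3 / 2 < s) {A : ℝ} (hA : 0 < A) :
    ∃ K > 0, ∀ (n : ℕ) (γ u : ℝ → En n), InM s γ → InHs s u → ∀ Q ≥ 0,
      EB s γ γ ≤ ENNReal.ofReal (A ^ 2) → EB s γ u ≤ ENNReal.ofReal (Q ^ 2) →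
      ∫ x in I01, ‖Dg γ u x‖ ^ 2 * ‖deriv γ x‖ ≤ Q ^ 2 → ∀ x, ‖Dg γ u x‖ ≤ K * Q := by
  obtain ⟨K, hK, h⟩ := sup_bound0 hs hA
  refine ⟨K, hK, fun n γ u hγ hu Q hQ h1 h2 h3 x => ?_⟩
  apply le_of_forall_pos_le_add
  intro ε hε
  have hq : Q ^ 2 ≤ (Q + ε / K) ^ 2 := by gcongr; linarith [div_pos hε hK]
  have := h n γ u hγ hu (Q + ε / K) (by positivity) h1
    (h2.trans (ENNReal.ofReal_le_ofReal hq)) (h3.trans hq) x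
  rw [mul_add, mul_div_cancel₀ _ hK.ne'] at this
  exact this

lemma dT_bdd (x y : ℝ) : BddBelow (Set.range fun k : ℤ => |x - y - (k : ℝ)|) :=
  ⟨0, by rintro _ ⟨k, rfl⟩; exact abs_nonneg _⟩

lemma dT_nonneg (x y : ℝ) : 0 ≤ dT x y := le_ciInf fun _ => abs_nonneg _

lemma dT_shift {h : ℝ} (hh : |h| ≤ 1 / 2) (x : ℝ) : dT x (x + h) = |h| := by
  unfold dT
  apply le_antisymm
  · refine (ciInf_le (dT_bdd x (x + h)) 0).trans (le_of_eq ?_)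
    simp
  · apply le_ciInf
    intro k
    by_cases hk : k = 0
    · subst hk; simp
    · have h1 : (1:ℝ) ≤ |(k:ℝ)| := by exact_mod_cast Int.one_le_abs hk
      have : |(k:ℝ)| ≤ |x - (x + h) - k| + |h| := by
        have := abs_add_le (x - (x + h) - k) h
        rw [show x - (x + h) - (k:ℝ) + h = -k by ring, abs_neg] at this
        exact this
      linarith

lemma dT_per (x : ℝ) : Function.Periodic (dT x) 1 := by
  intro y
  unfold dT
  apply (Equiv.addRight (1:ℤ)).iInf_congr
  intro k
  simp only [Equiv.coe_addRight]
  congr 1; push_cast; ring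

lemma dT_per' (y : ℝ) : Function.Periodic (fun x => dT x y) 1 := by
  intro x
  simp only
  unfold dT
  apply (Equiv.addRight (-1:ℤ)).iInf_congr
  intro k
  simp only [Equiv.coe_addRight]
  congr 1; push_cast; ring

lemma dT_le (x y : ℝ) : dT x y ≤ |x - y| := by
  refine (ciInf_le (dT_bdd x y) 0).trans (le_of_eq ?_)
  simp

lemma exists_near (x y : ℝ) : ∃ k : ℤ, |y + k - x| ≤ 1 / 2 := by
  refine ⟨-round (y - x), ?_⟩
  have := abs_sub_round (y - x)
  rw [show y + ((-round (y - x) : ℤ) : ℝ) - x = y - x - round (y - x) by push_cast; ring]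
  exact this

lemma dT_eq_zero {x y : ℝ} (h : dT x y = 0) : ∃ k : ℤ, x = y + k := by
  obtain ⟨k, hk⟩ := exists_near x y
  refine ⟨k, ?_⟩
  have := dT_shift hk x
  rw [show x + (y + k - x) = y + k by ring, per_int (dT_per x), h] at this
  have := abs_eq_zero.1 this.symm
  linarith

lemma dT_meas : Measurable fun z : ℝ × ℝ => dT z.1 z.2 := by
  unfold dT
  apply Measurable.iInf
  intro k
  fun_prop

lemma gag_meas {n : ℕ} {v : ℝ → En n} (hv : Continuous v) (σ : ℝ) :
    Measurable fun z : ℝ × ℝ => ENNReal.ofReal (‖v z.2 - v z.1‖ ^ 2 / dT z.1 z.2 ^ (2 * σ + 1)) := by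
  have h1 : Measurable fun z : ℝ × ℝ => ‖v z.2 - v z.1‖ ^ 2 := by
    have : Continuous fun z : ℝ × ℝ => ‖v z.2 - v z.1‖ ^ 2 := by fun_prop
    exact this.measurable
  have h2 := dT_meas.pow_const (2 * σ + 1)
  exact (h1.div h2).ennreal_ofReal

lemma sq_smul_add {n : ℕ} (p q : En n) (a b : ℝ) :
    ‖a • p + b • q‖ ^ 2 ≤ 2 * a ^ 2 * ‖p‖ ^ 2 + 2 * b ^ 2 * ‖q‖ ^ 2 := by
  have h1 := norm_add_le (a • p) (b • q)
  rw [norm_smul, norm_smul] at h1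
  have h2 : ‖a • p + b • q‖ ^ 2 ≤ (‖a‖ * ‖p‖ + ‖b‖ * ‖q‖) ^ 2 := by gcongr
  have h3 : ‖a‖ ^ 2 = a ^ 2 := by simp
  have h4 : ‖b‖ ^ 2 = b ^ 2 := by simp
  refine h2.trans ?_
  rw [← h3, ← h4]
  nlinarith [sq_nonneg (‖a‖ * ‖p‖ - ‖b‖ * ‖q‖)]

lemma dbl_comb {F G1 G2 : ℝ → ℝ → ℝ≥0∞} {c1 c2 : ℝ≥0∞} (h1 : c1 ≠ ⊤) (h2 : c2 ≠ ⊤)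
    (hm : Measurable fun z : ℝ × ℝ => G1 z.1 z.2) {S T : Set ℝ}
    (h : ∀ x y, F x y ≤ c1 * G1 x y + c2 * G2 x y) :
    ∫⁻ x in S, ∫⁻ y in T, F x y ≤
      c1 * (∫⁻ x in S, ∫⁻ y in T, G1 x y) + c2 * (∫⁻ x in S, ∫⁻ y in T, G2 x y) := by
  have m2 : ∀ x, Measurable fun y => c1 * G1 x y :=
    fun x => (hm.comp measurable_prodMk_left).const_mul _
  have m3 : Measurable fun x => c1 * ∫⁻ y in T, G1 x y := (hm.lintegral_prod_right').const_mul _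
  calc ∫⁻ x in S, ∫⁻ y in T, F x y ≤ ∫⁻ x in S, ∫⁻ y in T, (c1 * G1 x y + c2 * G2 x y) :=
        lintegral_mono fun x => lintegral_mono fun y => h x y
    _ = ∫⁻ x in S, ((c1 * ∫⁻ y in T, G1 x y) + (c2 * ∫⁻ y in T, G2 x y)) := by
        congr 1; funext x
        rw [lintegral_add_left (m2 x), lintegral_const_mul' _ _ h1, lintegral_const_mul' _ _ h2]
    _ = _ := by
        rw [lintegral_add_left m3, lintegral_const_mul' _ _ h1, lintegral_const_mul' _ _ h2]

lemma gag_comb {n : ℕ} {f g : ℝ → En n} (hf : Continuous f) (σ a b : ℝ) :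
    gagliardoSqE σ (fun x => a • f x + b • g x) ≤
      ENNReal.ofReal (2 * a ^ 2) * gagliardoSqE σ f + ENNReal.ofReal (2 * b ^ 2) * gagliardoSqE σ g := by
  unfold gagliardoSqE
  refine dbl_comb ENNReal.ofReal_ne_top ENNReal.ofReal_ne_top (gag_meas hf σ) ?_
  intro x y
  have hd : 0 ≤ dT x y ^ (2 * σ + 1) := Real.rpow_nonneg (dT_nonneg x y) _
  rw [← ENNReal.ofReal_mul (by positivity), ← ENNReal.ofReal_mul (by positivity),
    ← ENNReal.ofReal_add (by positivity) (by positivity)]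
  apply ENNReal.ofReal_le_ofReal
  rw [← mul_div_assoc, ← mul_div_assoc, ← add_div]
  apply div_le_div_of_nonneg_right _ hd
  have e : a • f y + b • g y - (a • f x + b • g x) = a • (f y - f x) + b • (g y - g x) := by
    rw [smul_sub, smul_sub]; abel
  rw [e]
  exact sq_smul_add _ _ a b

lemma int_I01 (f : ℝ → ℝ) : ∫ x in I01, f x = ∫ x in (0:ℝ)..1, f x := by
  rw [intervalIntegral.integral_of_le zero_le_one, I01]
  exact setIntegral_congr_set Ico_ae_eq_Ioc

lemma sq_comb {n : ℕ} {f g : ℝ → En n} (hf : Continuous f) (hg : Continuous g) (a b : ℝ) :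
    ∫ x in I01, ‖a • f x + b • g x‖ ^ 2 ≤ 2 * a ^ 2 * (∫ x in I01, ‖f x‖ ^ 2) +
      2 * b ^ 2 * ∫ x in I01, ‖g x‖ ^ 2 := by
  rw [int_I01, int_I01, int_I01, ← intervalIntegral.integral_const_mul, ← intervalIntegral.integral_const_mul,
    ← intervalIntegral.integral_add]
  · apply intervalIntegral.integral_mono_on zero_le_one
    · exact Continuous.intervalIntegrable (by fun_prop) _ _
    · exact Continuous.intervalIntegrable (by fun_prop) _ _
    intro x _
    exact sq_smul_add _ _ a b
  · exact Continuous.intervalIntegrable (by fun_prop) _ _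
  · exact Continuous.intervalIntegrable (by fun_prop) _ _

lemma Hs_comb {n : ℕ} {s : ℝ} {f g : ℝ → En n} (hf : InHs s f) (hg : InHs s g) (a b : ℝ) :
    InHs s (fun x => a • f x + b • g x) ∧
    HsNormSq s (fun x => a • f x + b • g x) ≤ 2 * a ^ 2 * HsNormSq s f + 2 * b ^ 2 * HsNormSq s g := by
  have hd : deriv (fun x => a • f x + b • g x) = fun x => a • deriv f x + b • deriv g x := by
    funext x
    exact (((hf.hd x).const_smul a).add ((hg.hd x).const_smul b)).deriv
  have hG := gag_comb (g := deriv g) hf.dcont (s - 1) a b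
  have hlt : ENNReal.ofReal (2 * a ^ 2) * gagliardoSqE (s - 1) (deriv f)
      + ENNReal.ofReal (2 * b ^ 2) * gagliardoSqE (s - 1) (deriv g) < ⊤ :=
    ENNReal.add_lt_top.2 ⟨ENNReal.mul_lt_top ENNReal.ofReal_lt_top hf.2.2,
      ENNReal.mul_lt_top ENNReal.ofReal_lt_top hg.2.2⟩
  refine ⟨⟨fun x => ?_, ?_, ?_⟩, ?_⟩
  · simp only [hf.1 x, hg.1 x]
  · exact (hf.2.1.const_smul a).add (hg.2.1.const_smul b)
  · rw [hd]; exact hG.trans_lt hlt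
  · unfold HsNormSq
    rw [hd]
    have h1 := sq_comb hf.cont hg.cont a b
    have h2 := sq_comb hf.dcont hg.dcont a b
    have h3 := ENNReal.toReal_mono hlt.ne hG
    rw [ENNReal.toReal_add (ENNReal.mul_lt_top ENNReal.ofReal_lt_top hf.2.2).ne
      (ENNReal.mul_lt_top ENNReal.ofReal_lt_top hg.2.2).ne, ENNReal.toReal_mul, ENNReal.toReal_mul,
      ENNReal.toReal_ofReal (by positivity), ENNReal.toReal_ofReal (by positivity)] at h3
    linarith

lemma HsNormSq_nonneg {n : ℕ} (s : ℝ) (f : ℝ → En n) : 0 ≤ HsNormSq s f := by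
  unfold HsNormSq
  have h1 : 0 ≤ ∫ x in I01, ‖f x‖ ^ 2 := integral_nonneg fun _ => by positivity
  have h2 : 0 ≤ ∫ x in I01, ‖deriv f x‖ ^ 2 := integral_nonneg fun _ => by positivity
  positivity

lemma gag_int_le {n : ℕ} {σ : ℝ} (hσ : 0 < σ) {f : ℝ → En n} (hf : Continuous f)
    (hp : Function.Periodic f 1)
    {p q Q : ℝ} (hpq : p < q) (hq1 : q ≤ p + 1) (hE : gagliardoSqE σ f ≤ ENNReal.ofReal (Q ^ 2)) :
    ∫ x in p..q, ∫ y in p..q, ‖f y - f x‖ ^ 2 ≤ Q ^ 2 * (q - p) ^ (2 * σ + 1) := by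
  have hl0 : 0 < q - p := by linarith
  have h0 : 0 ≤ Q ^ 2 * (q - p) ^ (2 * σ + 1) := by positivity
  have hFc : Continuous fun z : ℝ × ℝ => ‖f z.2 - f z.1‖ ^ 2 := by fun_prop
  rw [← ENNReal.ofReal_le_ofReal_iff h0]
  rw [dbl_ofReal hFc (fun z => by positivity) hpq.le]
  have hsub : Ioc p q ⊆ Ioc p (p + 1) := Ioc_subset_Ioc_right hq1
  calc ∫⁻ x in Ioc p q, ∫⁻ y in Ioc p q, ENNReal.ofReal (‖f y - f x‖ ^ 2)
      ≤ ∫⁻ x in Ioc p q, ∫⁻ y in Ioc p q, ENNReal.ofReal ((q - p) ^ (2 * σ + 1)) *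
          ENNReal.ofReal (‖f y - f x‖ ^ 2 / dT x y ^ (2 * σ + 1)) := by
        refine setLIntegral_mono' measurableSet_Ioc fun x hx => setLIntegral_mono' measurableSet_Ioc fun y hy => ?_
        rw [← ENNReal.ofReal_mul (by positivity)]
        apply ENNReal.ofReal_le_ofReal
        rcases (dT_nonneg x y).eq_or_lt with h | h
        · obtain ⟨k, hk⟩ := dT_eq_zero h.symm
          rw [hk, per_int hp]
          simp
        · have h1 : dT x y ≤ q - p := (dT_le x y).trans (abs_le.2 ⟨by linarith [hx.1, hx.2, hy.1, hy.2],
            by linarith [hx.1, hx.2, hy.1, hy.2]⟩)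
          have h2 : dT x y ^ (2 * σ + 1) ≤ (q - p) ^ (2 * σ + 1) :=
            Real.rpow_le_rpow h.le h1 (by linarith)
          have h3 : 0 < dT x y ^ (2 * σ + 1) := Real.rpow_pos_of_pos h _
          rw [← mul_div_assoc, le_div_iff₀ h3, mul_comm]
          gcongr
    _ = ENNReal.ofReal ((q - p) ^ (2 * σ + 1)) * ∫⁻ x in Ioc p q, ∫⁻ y in Ioc p q,
          ENNReal.ofReal (‖f y - f x‖ ^ 2 / dT x y ^ (2 * σ + 1)) := by
        simp_rw [lintegral_const_mul' _ _ ENNReal.ofReal_ne_top]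
    _ ≤ ENNReal.ofReal ((q - p) ^ (2 * σ + 1)) * gagliardoSqE σ f := by
        unfold gagliardoSqE
        rw [← dbl_shift (F := fun x y => ENNReal.ofReal (‖f y - f x‖ ^ 2 / dT x y ^ (2 * σ + 1)))
          (fun y x => by simp only [hp x, (dT_per' y) x]) (fun x y => by simp only [hp y, (dT_per x) y]) p]
        gcongr
    _ ≤ ENNReal.ofReal ((q - p) ^ (2 * σ + 1)) * ENNReal.ofReal (Q ^ 2) := by gcongr
    _ = _ := by rw [← ENNReal.ofReal_mul (by positivity), mul_comm]

lemma exists_le_avg {g : ℝ → ℝ} (hg : Continuous g) {a b : ℝ} (hab : a < b) :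
    ∃ x ∈ Icc a b, (b - a) * g x ≤ ∫ x in a..b, g x := by
  obtain ⟨x, hx, hm⟩ := isCompact_Icc.exists_isMinOn (nonempty_Icc.2 hab.le) hg.continuousOn
  refine ⟨x, hx, ?_⟩
  have : ∫ _ in a..b, g x ≤ ∫ x in a..b, g x :=
    intervalIntegral.integral_mono_on hab.le (by simp) (hg.intervalIntegrable _ _) fun y hy => hm hy
  simpa using this

lemma gag_holder {n : ℕ} {s : ℝ} (hs : 3 / 2 < s) {f : ℝ → En n} (hf : Continuous f)
    (hp : Function.Periodic f 1) {Q : ℝ} (hQ : 0 < Q)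
    (hE : gagliardoSqE (s - 1) f ≤ ENNReal.ofReal (Q ^ 2)) (x y : ℝ) :
    ‖f x - f y‖ ≤ 2 * Calp (s - 3 / 2) * Q := by
  have hα : 0 < s - 3 / 2 := by linarith
  have hC := Calp_pos hα
  have base : ∀ lo hi : ℝ, lo < hi → hi ≤ lo + 1 → ‖f lo - f hi‖ ≤ 2 * Calp (s - 3 / 2) * Q := by
    intro lo hi h1 h2
    have := camp hf hα hQ.le h1 (by
      intro a b ha hab hb
      have h3 := gag_int_le (by linarith : 0 < s - 1) hf hp hab (by linarith) hE
      have h4 := rA_int_bound (γ := fun _ => 0) (τ := fun _ => 0) (u := f) (v := fun _ => 0)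
        continuous_const continuous_const hf continuous_const (s := s - 1) hab hQ (by simpa [rA] using h3)
      simp only [rA, inner_zero_left, sub_zero, smul_zero] at h4
      have hc : Continuous fun x => ∫ y in a..b, ‖f y - f x‖ :=
        intervalIntegral.continuous_parametric_intervalIntegral_of_continuous'
          (f := fun x y => ‖f y - f x‖) (by unfold Function.uncurry; fun_prop) a b
      obtain ⟨z, hz, hz2⟩ := exists_le_avg hc hab
      refine ⟨f z, ?_⟩
      have hl : 0 < b - a := by linarith
      have e : (b - a) ^ (s - 1 + 3 / 2) = (b - a) * (b - a) ^ (1 + (s - 3 / 2)) := by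
        rw [← Real.rpow_one_add' hl.le (by linarith)]; congr 1; ring
      rw [e] at h4
      have h5 := hz2.trans h4
      rw [mul_left_comm] at h5
      exact le_of_mul_le_mul_left h5 hl)
    refine this.trans ?_
    have h6 : (hi - lo) ^ (s - 3 / 2) ≤ 1 := Real.rpow_le_one (by linarith) (by linarith) hα.le
    have h7 : 0 ≤ 2 * Calp (s - 3 / 2) * Q := by positivity
    nlinarith
  obtain ⟨k, hk⟩ := exists_near x y
  have e := per_int hp y k
  rw [← e]
  have := abs_le.1 hk
  rcases lt_trichotomy x (y + k) with h | h | h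
  · exact base _ _ h (by linarith)
  · rw [← h]; simp; positivity
  · rw [norm_sub_rev]; exact base _ _ h (by linarith)

lemma exists_sq_le {n : ℕ} {f : ℝ → En n} (hf : Continuous f) {Q : ℝ} (hQ : 0 ≤ Q)
    (h : ∫ x in I01, ‖f x‖ ^ 2 ≤ Q ^ 2) : ∃ x, ‖f x‖ ≤ Q := by
  obtain ⟨x, -, hx⟩ := exists_le_avg (g := fun x => ‖f x‖ ^ 2) (by fun_prop) (zero_lt_one' ℝ)
  refine ⟨x, ?_⟩
  rw [int_I01] at h
  rw [sub_zero, one_mul] at hx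
  exact abs_le_of_sq_le_sq' (hx.trans h) hQ |>.2

lemma sobolev {s : ℝ} (hs : 3 / 2 < s) : ∃ K > 0, ∀ (n : ℕ) (f : ℝ → En n), InHs s f →
    ∀ x, ‖f x‖ ≤ K * HsNorm s f ∧ ‖deriv f x‖ ≤ K * HsNorm s f := by
  have hα : 0 < s - 3 / 2 := by linarith
  have hC := Calp_pos hα
  refine ⟨2 * Calp (s - 3 / 2) + 2, by positivity, fun n f hf x => ?_⟩
  set K := 2 * Calp (s - 3 / 2) + 2 with hK
  have key : ∀ Q > HsNorm s f, ‖f x‖ ≤ K * Q ∧ ‖deriv f x‖ ≤ K * Q := by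
    intro Q hQ
    have hQ0 : 0 < Q := (Real.sqrt_nonneg _).trans_lt hQ
    have hsq : HsNormSq s f ≤ Q ^ 2 := (Real.sqrt_le_left hQ0.le).1 hQ.le
    unfold HsNormSq at hsq
    have h1 : 0 ≤ ∫ x in I01, ‖f x‖ ^ 2 := integral_nonneg fun _ => by positivity
    have h2 : 0 ≤ ∫ x in I01, ‖deriv f x‖ ^ 2 := integral_nonneg fun _ => by positivity
    have h3 : 0 ≤ (gagliardoSqE (s - 1) (deriv f)).toReal := ENNReal.toReal_nonneg
    have hg : gagliardoSqE (s - 1) (deriv f) ≤ ENNReal.ofReal (Q ^ 2) := by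
      rw [← ENNReal.ofReal_toReal hf.2.2.ne]
      exact ENNReal.ofReal_le_ofReal (by linarith)
    obtain ⟨z, hz⟩ := exists_sq_le hf.dcont hQ0.le (by linarith)
    obtain ⟨z', hz'⟩ := exists_sq_le hf.cont hQ0.le (by linarith)
    have hd : ∀ x, ‖deriv f x‖ ≤ (2 * Calp (s - 3 / 2) + 1) * Q := by
      intro x
      have := gag_holder hs hf.dcont hf.pd hQ0 hg x z
      have h4 := norm_sub_norm_le (deriv f x) (deriv f z)
      linarith
    constructor
    · obtain ⟨k, hk⟩ := exists_near x z'
      rw [← per_int hf.1 z' k] at hz'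
      have := Convex.norm_image_sub_le_of_norm_deriv_le (f := f) (s := univ)
        (fun x _ => (hf.hd x).differentiableAt) (fun x _ => hd x) convex_univ (mem_univ (z' + k)) (mem_univ x)
      have h4 := norm_sub_norm_le (f x) (f (z' + k))
      have h5 : ‖x - (z' + k)‖ ≤ 1 := by rw [norm_sub_rev, Real.norm_eq_abs]; linarith
      have h6 : (2 * Calp (s - 3 / 2) + 1) * Q * ‖x - (z' + k)‖ ≤ (2 * Calp (s - 3 / 2) + 1) * Q * 1 := by
        gcongr
      rw [hK]; linarith
    · refine (hd x).trans ?_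
      rw [hK]; gcongr; norm_num
  have hK0 : 0 < K := by positivity
  constructor
  · apply le_of_forall_pos_le_add
    intro ε hε
    have := (key (HsNorm s f + ε / K) (by linarith [div_pos hε hK0])).1
    rwa [mul_add, mul_div_cancel₀ _ hK0.ne'] at this
  · apply le_of_forall_pos_le_add
    intro ε hε
    have := (key (HsNorm s f + ε / K) (by linarith [div_pos hε hK0])).2
    rwa [mul_add, mul_div_cancel₀ _ hK0.ne'] at this

lemma Hs_sub {n : ℕ} {s : ℝ} {f g : ℝ → En n} (hf : InHs s f) (hg : InHs s g) :
    InHs s (fun x => f x - g x) := by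
  have := (Hs_comb hf hg 1 (-1)).1
  simpa [sub_eq_add_neg] using this

lemma Hs_quot {n : ℕ} {s : ℝ} {f g v : ℝ → En n} (hf : InHs s f) (hg : InHs s g) (hv : InHs s v) (c : ℝ) :
    InHs s (fun x => c • (f x - g x) - v x) := by
  have := (Hs_comb (Hs_sub hf hg) hv c (-1)).1
  simpa [sub_eq_add_neg] using this

lemma HsNormSq_zero {n : ℕ} (s : ℝ) : HsNormSq s (fun _ : ℝ => (0 : En n)) = 0 := by
  simp [HsNormSq, gagliardoSqE]

lemma HsNorm_sq {n : ℕ} (s : ℝ) (f : ℝ → En n) : HsNorm s f ^ 2 = HsNormSq s f :=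
  Real.sq_sqrt (HsNormSq_nonneg s f)

lemma path_cont {n : ℕ} {s : ℝ} (P : C1Path s n) : HsContOn s P.Γ (Icc 0 1) := by
  intro t ht
  have h1 := P.isDeriv t ht
  have h2 : ∀ᶠ h in 𝓝[{h : ℝ | t + h ∈ Set.Icc (0 : ℝ) 1 ∧ h ≠ 0}] 0,
      HsNorm s (fun x => h⁻¹ • (P.Γ (t + h) x - P.Γ t x) - P.V t x) < 1 :=
    h1.eventually (gt_mem_nhds one_pos)
  rw [eventually_nhdsWithin_iff] at h2
  have h3 : Tendsto (fun τ : ℝ => τ - t) (𝓝 t) (𝓝 0) := by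
    have : Continuous fun τ : ℝ => τ - t := by fun_prop
    simpa using this.tendsto t
  have h4 := h3.eventually h2
  set C := 2 + 2 * HsNormSq s (P.V t) with hC
  have hC0 : 0 ≤ C := by have := HsNormSq_nonneg s (P.V t); positivity
  have h5 : ∀ᶠ τ in 𝓝[Icc 0 1] t, HsNorm s (fun x => P.Γ τ x - P.Γ t x) ≤ |τ - t| * √C := by
    rw [eventually_nhdsWithin_iff]
    filter_upwards [h4] with τ hτ hτI
    by_cases he : τ = t
    · subst he
      have : HsNorm s (fun x => P.Γ τ x - P.Γ τ x) = 0 := by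
        simp [HsNorm, HsNormSq_zero]
      rw [this]; positivity
    · have hne : τ - t ≠ 0 := sub_ne_zero.2 he
      have h6 := hτ ⟨by simpa using hτI, hne⟩
      rw [add_sub_cancel] at h6
      have hq := Hs_quot (P.mem τ hτI).1 (P.mem t ht).1 (P.memV t ht) (τ - t)⁻¹
      have h7 := (Hs_comb hq (P.memV t ht) (τ - t) (τ - t)).2
      have e : (fun x => (τ - t) • ((τ - t)⁻¹ • (P.Γ τ x - P.Γ t x) - P.V t x) + (τ - t) • P.V t x) =
          fun x => P.Γ τ x - P.Γ t x := by
        funext x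
        rw [smul_sub, smul_inv_smul₀ hne]; abel
      rw [e] at h7
      have h8 : HsNormSq s (fun x => (τ - t)⁻¹ • (P.Γ τ x - P.Γ t x) - P.V t x) ≤ 1 := by
        rw [← HsNorm_sq]
        have : 0 ≤ HsNorm s (fun x => (τ - t)⁻¹ • (P.Γ τ x - P.Γ t x) - P.V t x) := Real.sqrt_nonneg _
        nlinarith
      have h9 : HsNormSq s (fun x => P.Γ τ x - P.Γ t x) ≤ (τ - t) ^ 2 * C := by
        refine h7.trans ?_
        rw [hC]
        nlinarith [mul_le_mul_of_nonneg_left h8 (sq_nonneg (τ - t))]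
      unfold HsNorm
      rw [← Real.sqrt_sq_eq_abs, ← Real.sqrt_mul (sq_nonneg _)]
      exact Real.sqrt_le_sqrt h9
  refine squeeze_zero' (Eventually.of_forall fun _ => Real.sqrt_nonneg _) h5 ?_
  have : Continuous fun τ : ℝ => |τ - t| * √C := by fun_prop
  have := (this.tendsto t).mono_left (nhdsWithin_le_nhds (s := Icc 0 1))
  simpa using this

lemma path_bdd {n : ℕ} {s : ℝ} {F : ℝ → ℝ → En n} (hF : ∀ t ∈ Icc (0:ℝ) 1, InHs s (F t))
    (hc : HsContOn s F (Icc 0 1)) : ∃ C ≥ 0, ∀ t ∈ Icc (0:ℝ) 1, HsNormSq s (F t) ≤ C := by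
  have : ∃ C, ∀ t ∈ Icc (0:ℝ) 1, HsNormSq s (F t) ≤ C := by
    refine isCompact_Icc.induction_on (p := fun S => ∃ C, ∀ t ∈ S, HsNormSq s (F t) ≤ C) ⟨0, by simp⟩ ?_ ?_ ?_
    · rintro S T hST ⟨C, hC⟩
      exact ⟨C, fun t ht => hC t (hST ht)⟩
    · rintro S T ⟨C, hC⟩ ⟨D, hD⟩
      refine ⟨max C D, fun t ht => ?_⟩
      rcases ht with h | h
      · exact (hC t h).trans (le_max_left _ _)
      · exact (hD t h).trans (le_max_right _ _)
    · intro t ht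
      have h2 : ∀ᶠ τ in 𝓝[Icc 0 1] t, HsNorm s (fun x => F τ x - F t x) < 1 :=
        (hc t ht).eventually (gt_mem_nhds one_pos)
      have h3 := h2.and self_mem_nhdsWithin
      refine ⟨_, h3, 2 + 2 * HsNormSq s (F t), fun τ hτ => ?_⟩
      have h4 := (Hs_comb (Hs_sub (hF τ hτ.2) (hF t ht)) (hF t ht) 1 1).2
      have e : (fun x => (1:ℝ) • (F τ x - F t x) + (1:ℝ) • F t x) = F τ := by
        funext x; simp
      rw [e] at h4
      have h8 : HsNormSq s (fun x => F τ x - F t x) ≤ 1 := by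
        rw [← HsNorm_sq]
        have : 0 ≤ HsNorm s (fun x => F τ x - F t x) := Real.sqrt_nonneg _
        nlinarith [hτ.1]
      linarith
  obtain ⟨C, hC⟩ := this
  exact ⟨C, (HsNormSq_nonneg s (F 0)).trans (hC 0 (by simp)), hC⟩

/-- clamp to the unit interval -/
def cl (t : ℝ) : ℝ := max 0 (min 1 t)

lemma cl_mem (t : ℝ) : cl t ∈ Icc (0:ℝ) 1 := ⟨le_max_left _ _, max_le zero_le_one (min_le_left _ _)⟩
lemma cl_cont : Continuous cl := by unfold cl; fun_prop
lemma cl_eq {t : ℝ} (ht : t ∈ Icc (0:ℝ) 1) : cl t = t := by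
  unfold cl; rw [min_eq_right ht.2, max_eq_right ht.1]

lemma joint_cont {n : ℕ} {s : ℝ} (hs : 3 / 2 < s) {F : ℝ → ℝ → En n} (hF : ∀ t ∈ Icc (0:ℝ) 1, InHs s (F t))
    (hc : HsContOn s F (Icc 0 1)) : Continuous (fun z : ℝ × ℝ => F (cl z.1) z.2) ∧
      Continuous (fun z : ℝ × ℝ => deriv (F (cl z.1)) z.2) := by
  obtain ⟨K, hK, hsob⟩ := sobolev hs
  have hten : ∀ z0 : ℝ × ℝ, Tendsto (fun z : ℝ × ℝ => K * HsNorm s (fun x => F (cl z.1) x - F (cl z0.1) x))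
      (𝓝 z0) (𝓝 0) := by
    intro z0
    have h1 : Tendsto (fun z : ℝ × ℝ => cl z.1) (𝓝 z0) (𝓝[Icc 0 1] (cl z0.1)) := by
      apply tendsto_nhdsWithin_of_tendsto_nhds_of_eventually_within
      · exact (cl_cont.comp continuous_fst).tendsto z0
      · exact Eventually.of_forall fun z => cl_mem _
    have := ((hc _ (cl_mem z0.1)).comp h1).const_mul K
    simpa using this
  constructor
  · rw [continuous_iff_continuousAt]
    intro z0
    have h2 : Tendsto (fun z : ℝ × ℝ => F (cl z0.1) z.2) (𝓝 z0) (𝓝 (F (cl z0.1) z0.2)) :=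
      ((hF _ (cl_mem z0.1)).cont.comp continuous_snd).tendsto z0
    have h3 : Tendsto (fun z : ℝ × ℝ => F (cl z.1) z.2 - F (cl z0.1) z.2) (𝓝 z0) (𝓝 0) := by
      apply squeeze_zero_norm _ (hten z0)
      intro z
      exact (hsob n _ (Hs_sub (hF _ (cl_mem z.1)) (hF _ (cl_mem z0.1))) z.2).1
    have := h3.add h2
    simpa [ContinuousAt] using this
  · rw [continuous_iff_continuousAt]
    intro z0
    have h2 : Tendsto (fun z : ℝ × ℝ => deriv (F (cl z0.1)) z.2) (𝓝 z0) (𝓝 (deriv (F (cl z0.1)) z0.2)) :=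
      ((hF _ (cl_mem z0.1)).dcont.comp continuous_snd).tendsto z0
    have h3 : Tendsto (fun z : ℝ × ℝ => deriv (F (cl z.1)) z.2 - deriv (F (cl z0.1)) z.2) (𝓝 z0) (𝓝 0) := by
      apply squeeze_zero_norm _ (hten z0)
      intro z
      have := (hsob n _ (Hs_sub (hF _ (cl_mem z.1)) (hF _ (cl_mem z0.1))) z.2).2
      have e := (((hF _ (cl_mem z.1)).hd z.2).sub ((hF _ (cl_mem z0.1)).hd z.2)).deriv
      rw [← e]
      exact this
    have := h3.add h2
    simpa [ContinuousAt] using this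

lemma time_deriv {n : ℕ} {s : ℝ} (hs : 3 / 2 < s) (P : C1Path s n) {t : ℝ} (ht : t ∈ Ioo (0:ℝ) 1) (x : ℝ) :
    HasDerivAt (fun τ => P.Γ τ x) (P.V t x) t ∧
    HasDerivAt (fun τ => deriv (P.Γ τ) x) (deriv (P.V t) x) t := by
  obtain ⟨K, hK, hsob⟩ := sobolev hs
  have htI := Ioo_subset_Icc_self ht
  have hmem : ∀ᶠ h : ℝ in 𝓝 0, t + h ∈ Icc (0:ℝ) 1 := by
    have : Tendsto (fun h : ℝ => t + h) (𝓝 0) (𝓝 t) := by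
      have : Continuous fun h : ℝ => t + h := by fun_prop
      simpa using this.tendsto 0
    exact this.eventually (Icc_mem_nhds ht.1 ht.2)
  have hle : 𝓝[≠] (0:ℝ) ≤ 𝓝[{h : ℝ | t + h ∈ Set.Icc (0 : ℝ) 1 ∧ h ≠ 0}] 0 := by
    apply nhdsWithin_le_of_mem
    filter_upwards [mem_nhdsWithin_of_mem_nhds hmem, self_mem_nhdsWithin] with h h1 h2
    exact ⟨h1, h2⟩
  have hten := ((P.isDeriv t htI).mono_left hle).const_mul K
  rw [mul_zero] at hten
  have hmem' : ∀ᶠ h : ℝ in 𝓝[≠] 0, t + h ∈ Icc (0:ℝ) 1 := mem_nhdsWithin_of_mem_nhds hmem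
  constructor
  · rw [hasDerivAt_iff_tendsto_slope_zero]
    rw [← tendsto_sub_nhds_zero_iff]
    refine squeeze_zero_norm' ?_ hten
    filter_upwards [hmem'] with h h1
    exact (hsob n _ (Hs_quot (P.mem _ h1).1 (P.mem t htI).1 (P.memV t htI) h⁻¹) x).1
  · rw [hasDerivAt_iff_tendsto_slope_zero]
    rw [← tendsto_sub_nhds_zero_iff]
    refine squeeze_zero_norm' ?_ hten
    filter_upwards [hmem'] with h h1
    have := (hsob n _ (Hs_quot (P.mem _ h1).1 (P.mem t htI).1 (P.memV t htI) h⁻¹) x).2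
    have e := (((((P.mem _ h1).1.hd x).sub ((P.mem t htI).1.hd x)).const_smul h⁻¹).sub ((P.memV t htI).hd x)).deriv
    rw [← e]
    exact this

lemma per_lint_shift {f : ℝ → ℝ≥0∞} (hf : Function.Periodic f 1) (x : ℝ) :
    ∫⁻ y in I01, f y = ∫⁻ h in Ioc (-1/2 : ℝ) (1/2), f (x + h) := by
  rw [← per_lint hf (x - 1/2), ← lintegral_indicator measurableSet_Ioc, ← lintegral_indicator measurableSet_Ioc,
    ← lintegral_add_left_eq_self _ x]
  congr 1
  funext h
  by_cases hh : h ∈ Ioc (-1/2 : ℝ) (1/2)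
  · rw [indicator_of_mem hh, indicator_of_mem (by constructor <;> [linarith [hh.1]; linarith [hh.2]])]
  · rw [indicator_of_notMem hh, indicator_of_notMem]
    intro h2
    exact hh ⟨by linarith [h2.1], by linarith [h2.2]⟩

lemma abs_of_Ioc {h : ℝ} (hh : h ∈ Ioc (-1/2 : ℝ) (1/2)) : |h| ≤ 1 / 2 :=
  abs_le.2 ⟨by linarith [hh.1], hh.2⟩

lemma gag_shift {n : ℕ} {σ : ℝ} {f : ℝ → En n} (hp : Function.Periodic f 1) :
    gagliardoSqE σ f = ∫⁻ x in I01, ∫⁻ h in Ioc (-1/2 : ℝ) (1/2),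
      ENNReal.ofReal (‖f (x + h) - f x‖ ^ 2 / |h| ^ (2 * σ + 1)) := by
  unfold gagliardoSqE
  congr 1
  funext x
  rw [per_lint_shift (fun y => by simp only [hp y, (dT_per x) y]) x]
  refine setLIntegral_congr_fun measurableSet_Ioc fun h hh => ?_
  simp only [dT_shift (abs_of_Ioc hh)]

lemma sq_int_le {g : ℝ → ℝ} (hg : Continuous g) : (∫ x in (0:ℝ)..1, g x) ^ 2 ≤ ∫ x in (0:ℝ)..1, g x ^ 2 := by
  set c := ∫ x in (0:ℝ)..1, g x with hc
  have h1 : 0 ≤ ∫ x in (0:ℝ)..1, (g x - c) ^ 2 :=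
    intervalIntegral.integral_nonneg zero_le_one fun _ _ => sq_nonneg _
  have e : ∀ x, (g x - c) ^ 2 = g x ^ 2 - (2 * c) * g x + c ^ 2 := fun x => by ring
  simp_rw [e] at h1
  rw [intervalIntegral.integral_add, intervalIntegral.integral_sub, intervalIntegral.integral_const_mul,
    intervalIntegral.integral_const, ← hc] at h1
  · simp at h1; nlinarith
  all_goals exact Continuous.intervalIntegrable (by fun_prop) _ _

lemma taylor_sq {n : ℕ} {s : ℝ} {f : ℝ → En n} (hf : InHs s f) (x h : ℝ) :
    ‖f (x + h) - f x - h • deriv f x‖ ^ 2 ≤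
      h ^ 2 * ∫ θ in (0:ℝ)..1, ‖deriv f (x + θ * h) - deriv f x‖ ^ 2 := by
  have hdc := hf.dcont
  have e : ∫ θ in (0:ℝ)..1, h • (deriv f (x + θ * h) - deriv f x) = f (x + h) - f x - h • deriv f x := by
    have : ∀ θ : ℝ, HasDerivAt (fun θ : ℝ => f (x + θ * h) - (θ * h) • deriv f x)
        (h • (deriv f (x + θ * h) - deriv f x)) θ := by
      intro θ
      have h1 : HasDerivAt (fun θ : ℝ => x + θ * h) h θ := by
        simpa using ((hasDerivAt_id θ).mul_const h).const_add x
      have h2 : HasDerivAt (fun θ : ℝ => θ * h) h θ := by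
        simpa using (hasDerivAt_id θ).mul_const h
      have h3 := ((hf.hd (x + θ * h)).scomp θ h1).sub (h2.smul_const (deriv f x))
      rw [smul_sub]
      exact h3
    rw [intervalIntegral.integral_eq_sub_of_hasDerivAt (fun θ _ => this θ)
      (Continuous.intervalIntegrable (by fun_prop) _ _)]
    simp
    abel
  rw [← e, intervalIntegral.integral_smul, norm_smul, mul_pow, Real.norm_eq_abs, sq_abs]
  gcongr
  refine le_trans ?_ (sq_int_le (g := fun θ => ‖deriv f (x + θ * h) - deriv f x‖) (by fun_prop))
  gcongr
  exact intervalIntegral.norm_integral_le_integral_norm zero_le_one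

lemma scale_lint {θ : ℝ} (hθ : 0 < θ) (g : ℝ → ℝ≥0∞) (hg : Measurable g) :
    ∫⁻ h, g (θ * h) = ENNReal.ofReal θ⁻¹ * ∫⁻ k, g k := by
  have := Real.map_volume_mul_left hθ.ne'
  rw [← lintegral_map hg (measurable_const_mul θ), this, lintegral_smul_measure, abs_of_pos (inv_pos.2 hθ)]
  rfl

lemma scale_gag {n : ℕ} {s : ℝ} (hs : 3 / 2 < s) {f : ℝ → En n} (hf : Continuous f) (x : ℝ) {θ : ℝ}
    (hθ : θ ∈ Ioc (0:ℝ) 1) :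
    ∫⁻ h in Ioc (-1/2 : ℝ) (1/2), ENNReal.ofReal (‖f (x + θ * h) - f x‖ ^ 2 / |h| ^ (2 * (s - 1) + 1)) ≤
    ∫⁻ h in Ioc (-1/2 : ℝ) (1/2), ENNReal.ofReal (‖f (x + h) - f x‖ ^ 2 / |h| ^ (2 * (s - 1) + 1)) := by
  set e := 2 * (s - 1) + 1 with he
  have he0 : 1 ≤ e := by linarith
  have hθ0 := hθ.1
  set G : ℝ → ℝ≥0∞ := (Ioc (-1/2 : ℝ) (1/2)).indicator
    (fun k => ENNReal.ofReal (‖f (x + k) - f x‖ ^ 2 / |k| ^ e)) with hG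
  have hGm : Measurable G := by
    apply Measurable.indicator _ measurableSet_Ioc
    apply Measurable.ennreal_ofReal
    apply Measurable.div
    · exact Continuous.measurable (by fun_prop)
    · exact (continuous_abs.measurable).pow_const e
  rw [← lintegral_indicator measurableSet_Ioc, ← lintegral_indicator measurableSet_Ioc]
  have key : ∀ h, (Ioc (-1/2 : ℝ) (1/2)).indicator (fun h => ENNReal.ofReal (‖f (x + θ * h) - f x‖ ^ 2 / |h| ^ e)) h
      ≤ ENNReal.ofReal (θ ^ e) * G (θ * h) := by
    intro h
    by_cases hh : h ∈ Ioc (-1/2 : ℝ) (1/2)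
    · rw [indicator_of_mem hh, hG, indicator_of_mem, ← ENNReal.ofReal_mul (by positivity)]
      · apply ENNReal.ofReal_le_ofReal
        rw [abs_mul, abs_of_pos hθ0, Real.mul_rpow hθ0.le (abs_nonneg h)]
        have : 0 < θ ^ e := by positivity
        by_cases h0 : |h| ^ e = 0
        · simp [h0]
        · apply le_of_eq; field_simp
      · constructor
        · nlinarith [hh.1, hh.2, hθ.2]
        · nlinarith [hh.1, hh.2, hθ.2]
    · rw [indicator_of_notMem hh]; exact zero_le
  refine (lintegral_mono key).trans ?_
  rw [lintegral_const_mul' _ _ ENNReal.ofReal_ne_top, scale_lint hθ0 G hGm, ← mul_assoc,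
    ← ENNReal.ofReal_mul (by positivity)]
  apply mul_le_of_le_one_left zero_le
  rw [ENNReal.ofReal_le_one]
  have : θ ^ e ≤ θ ^ (1:ℝ) := Real.rpow_le_rpow_of_exponent_ge hθ0 hθ.2 he0
  rw [Real.rpow_one] at this
  rw [← div_eq_mul_inv, div_le_one hθ0]
  exact this

lemma rem_gag {n : ℕ} {s : ℝ} (hs : 3 / 2 < s) {f : ℝ → En n} (hf : InHs s f) :
    ∫⁻ x in I01, ∫⁻ h in Ioc (-1/2 : ℝ) (1/2),
      ENNReal.ofReal (‖f (x + h) - f x - h • deriv f x‖ ^ 2 / |h| ^ (2 * s + 1)) ≤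
    gagliardoSqE (s - 1) (deriv f) := by
  have hdc := hf.dcont
  set e := 2 * (s - 1) + 1 with he
  have hDm : Measurable fun z : (ℝ × ℝ) × ℝ =>
      ENNReal.ofReal (‖deriv f (z.1.1 + z.2 * z.1.2) - deriv f z.1.1‖ ^ 2 / |z.1.2| ^ e) := by
    apply Measurable.ennreal_ofReal
    apply Measurable.div
    · exact Continuous.measurable (by fun_prop)
    · exact Measurable.pow_const (Continuous.measurable (by fun_prop)) e
  have pt : ∀ x h : ℝ, ENNReal.ofReal (‖f (x + h) - f x - h • deriv f x‖ ^ 2 / |h| ^ (2 * s + 1)) ≤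
      ∫⁻ θ in Ioc (0:ℝ) 1, ENNReal.ofReal (‖deriv f (x + θ * h) - deriv f x‖ ^ 2 / |h| ^ e) := by
    intro x h
    rw [← ofReal_integral_eq_lintegral_ofReal]
    · apply ENNReal.ofReal_le_ofReal
      rw [integral_div, ← intervalIntegral.integral_of_le zero_le_one]
      rcases eq_or_ne h 0 with rfl | h0
      · simp
      · have ha : 0 < |h| := abs_pos.2 h0
        have e1 : |h| ^ (2 * s + 1) = h ^ 2 * |h| ^ e := by
          rw [← sq_abs h, ← Real.rpow_natCast, ← Real.rpow_add ha]; congr 1; rw [he]; push_cast; ring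
        rw [e1, div_le_div_iff₀ (by positivity) (by positivity)]
        have := taylor_sq hf x h
        have h3 : 0 < |h| ^ e := by positivity
        calc _ ≤ (h ^ 2 * ∫ θ in (0:ℝ)..1, ‖deriv f (x + θ * h) - deriv f x‖ ^ 2) * |h| ^ e := by gcongr
          _ = _ := by ring
    · exact (Continuous.integrableOn_Icc (by fun_prop)).mono_set Ioc_subset_Icc_self
    · exact Eventually.of_forall fun _ => by positivity
  calc _ ≤ ∫⁻ x in I01, ∫⁻ h in Ioc (-1/2 : ℝ) (1/2), ∫⁻ θ in Ioc (0:ℝ) 1,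
        ENNReal.ofReal (‖deriv f (x + θ * h) - deriv f x‖ ^ 2 / |h| ^ e) :=
        lintegral_mono fun x => lintegral_mono fun h => pt x h
    _ = ∫⁻ x in I01, ∫⁻ θ in Ioc (0:ℝ) 1, ∫⁻ h in Ioc (-1/2 : ℝ) (1/2),
        ENNReal.ofReal (‖deriv f (x + θ * h) - deriv f x‖ ^ 2 / |h| ^ e) := by
        congr 1; funext x
        apply lintegral_lintegral_swap
        exact (hDm.comp ((measurable_const.prodMk measurable_fst).prodMk measurable_snd)).aemeasurable
    _ ≤ ∫⁻ x in I01, ∫⁻ θ in Ioc (0:ℝ) 1, ∫⁻ h in Ioc (-1/2 : ℝ) (1/2),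
        ENNReal.ofReal (‖deriv f (x + h) - deriv f x‖ ^ 2 / |h| ^ e) := by
        refine lintegral_mono fun x => setLIntegral_mono' measurableSet_Ioc fun θ hθ => ?_
        exact scale_gag hs hdc x hθ
    _ = gagliardoSqE (s - 1) (deriv f) := by
        rw [gag_shift hf.pd]
        congr 1; funext x
        rw [lintegral_const]
        simp
        rfl

lemma dbl_comb_on {F G1 G2 : ℝ → ℝ → ℝ≥0∞} {c1 c2 : ℝ≥0∞} (h1 : c1 ≠ ⊤) (h2 : c2 ≠ ⊤)
    (hm : Measurable fun z : ℝ × ℝ => G1 z.1 z.2) {S T : Set ℝ} (hT : MeasurableSet T)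
    (h : ∀ x, ∀ y ∈ T, F x y ≤ c1 * G1 x y + c2 * G2 x y) :
    ∫⁻ x in S, ∫⁻ y in T, F x y ≤
      c1 * (∫⁻ x in S, ∫⁻ y in T, G1 x y) + c2 * (∫⁻ x in S, ∫⁻ y in T, G2 x y) := by
  refine le_trans ?_ (dbl_comb h1 h2 hm (fun x y => le_rfl))
  exact lintegral_mono fun x => setLIntegral_mono' hT fun y hy => h x y hy

lemma rO_taylor {n : ℕ} {s : ℝ} {γ u : ℝ → En n} (hγ : InM s γ) {m K : ℝ} (hm : 0 < m)
    (hm' : ∀ x, m ≤ ‖deriv γ x‖) (hK : ∀ x, ‖deriv u x‖ ≤ K) (x h : ℝ) :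
    ‖rO γ u x (x + h)‖ ^ 2 ≤ 2 * ‖u (x + h) - u x - h • deriv u x‖ ^ 2 +
      2 * (K / m) ^ 2 * ‖γ (x + h) - γ x - h • deriv γ x‖ ^ 2 := by
  have hp : 0 < ‖deriv γ x‖ := hm.trans_le (hm' x)
  have hK0 : 0 ≤ K := (norm_nonneg _).trans (hK x)
  set p := u (x + h) - u x - h • deriv u x with hpd
  set q := γ (x + h) - γ x - h • deriv γ x with hqd
  have e : rO γ u x (x + h) = p - DDg γ u x q := by
    unfold rO DDg
    rw [hqd, inner_sub_right (deriv γ x) (γ (x + h) - γ x), inner_smul_right, real_inner_self_eq_norm_sq, hpd, mul_sub, sub_smul]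
    have : (‖deriv γ x‖ ^ 2)⁻¹ * (h * ‖deriv γ x‖ ^ 2) = h := by field_simp
    rw [this]; abel
  have h2 : ‖DDg γ u x q‖ ≤ (K / m) * ‖q‖ := by
    unfold DDg
    rw [norm_smul, norm_mul, norm_inv, norm_pow, norm_norm]
    have h3 : ‖⟪deriv γ x, q⟫‖ ≤ ‖deriv γ x‖ * ‖q‖ := norm_inner_le_norm _ _
    calc (‖deriv γ x‖ ^ 2)⁻¹ * ‖⟪deriv γ x, q⟫‖ * ‖deriv u x‖
        ≤ (‖deriv γ x‖ ^ 2)⁻¹ * (‖deriv γ x‖ * ‖q‖) * K := by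
          gcongr
          exact hK x
      _ = (K / ‖deriv γ x‖) * ‖q‖ := by field_simp
      _ ≤ _ := by
          gcongr
          exact hm' x
  have h3 : ‖rO γ u x (x + h)‖ ≤ ‖p‖ + (K / m) * ‖q‖ := by
    rw [e]; exact (norm_sub_le _ _).trans (by linarith)
  calc ‖rO γ u x (x + h)‖ ^ 2 ≤ (‖p‖ + (K / m) * ‖q‖) ^ 2 := by gcongr
    _ ≤ _ := by nlinarith [sq_nonneg (‖p‖ - (K / m) * ‖q‖)]

lemma EB_upper {n : ℕ} {s : ℝ} (hs : 3 / 2 < s) {γ u : ℝ → En n} (hγ : InM s γ) (hu : InHs s u)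
    {b m M K : ℝ} (hb : 0 < b) (hm : 0 < m)
    (hbl : ∀ x h, |h| ≤ 1 / 2 → b * |h| ≤ ‖γ (x + h) - γ x‖)
    (hm' : ∀ x, m ≤ ‖deriv γ x‖) (hM : ∀ x, ‖deriv γ x‖ ≤ M) (hK : ∀ x, ‖deriv u x‖ ≤ K) :
    EB s γ u ≤ ENNReal.ofReal (2 * M ^ 2 / b ^ (2 * s + 1)) * gagliardoSqE (s - 1) (deriv u) +
      ENNReal.ofReal (2 * (K / m) ^ 2 * M ^ 2 / b ^ (2 * s + 1)) * gagliardoSqE (s - 1) (deriv γ) := by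
  have hM0 : 0 ≤ M := (norm_nonneg _).trans (hM 0)
  have huc := hu.cont
  have hud := hu.dcont
  have e : EB s γ u = ∫⁻ x in I01, ∫⁻ h in Ioc (-1/2 : ℝ) (1/2),
      ENNReal.ofReal (‖Rop s γ u x (x + h)‖ ^ 2 * muW γ x (x + h)) := by
    unfold EB
    congr 1; funext x
    exact per_lint_shift (f := fun y => ENNReal.ofReal (‖Rop s γ u x y‖ ^ 2 * muW γ x y))
      (fun y => by simp only [Rop, DDg, muW, hγ.1.1 y, hu.1 y, hγ.1.pd y]) x
  rw [e]
  refine (dbl_comb_on (c1 := ENNReal.ofReal (2 * M ^ 2 / b ^ (2 * s + 1)))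
    (c2 := ENNReal.ofReal (2 * (K / m) ^ 2 * M ^ 2 / b ^ (2 * s + 1)))
    (G1 := fun x h => ENNReal.ofReal (‖u (x + h) - u x - h • deriv u x‖ ^ 2 / |h| ^ (2 * s + 1)))
    (G2 := fun x h => ENNReal.ofReal (‖γ (x + h) - γ x - h • deriv γ x‖ ^ 2 / |h| ^ (2 * s + 1)))
    ENNReal.ofReal_ne_top ENNReal.ofReal_ne_top ?_ measurableSet_Ioc ?_).trans ?_
  · apply Measurable.ennreal_ofReal
    apply Measurable.div
    · exact Continuous.measurable (by fun_prop)
    · exact Measurable.pow_const (Continuous.measurable (by fun_prop)) _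
  · intro x h hh
    rw [← ENNReal.ofReal_mul (by positivity), ← ENNReal.ofReal_mul (by positivity),
      ← ENNReal.ofReal_add (by positivity) (by positivity)]
    apply ENNReal.ofReal_le_ofReal
    rcases eq_or_ne h 0 with rfl | h0
    · simp [muW]
    · have ha : 0 < |h| := abs_pos.2 h0
      have hb1 := hbl x h (abs_of_Ioc hh)
      have hpos : 0 < ‖γ (x + h) - γ x‖ := lt_of_lt_of_le (by positivity) hb1
      have hne : γ x ≠ γ (x + h) := fun h' => by simp [h'] at hpos
      rw [Rop_eq hne]
      have h1 := rO_taylor hγ hm hm' hK x h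
      have h2 : b ^ (2 * s + 1) * |h| ^ (2 * s + 1) ≤ ‖γ (x + h) - γ x‖ ^ (2 * s + 1) := by
        rw [← Real.mul_rpow hb.le ha.le]
        exact Real.rpow_le_rpow (by positivity) hb1 (by linarith)
      have h3 : 0 < b ^ (2 * s + 1) * |h| ^ (2 * s + 1) := by positivity
      calc ‖rO γ u x (x + h)‖ ^ 2 * (‖deriv γ x‖ * ‖deriv γ (x + h)‖) * (‖γ (x + h) - γ x‖ ^ (2 * s + 1))⁻¹
          ≤ (2 * ‖u (x + h) - u x - h • deriv u x‖ ^ 2 +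
            2 * (K / m) ^ 2 * ‖γ (x + h) - γ x - h • deriv γ x‖ ^ 2) * (M * M) *
            (b ^ (2 * s + 1) * |h| ^ (2 * s + 1))⁻¹ := by
            gcongr
            · exact hM x
            · exact hM (x + h)
        _ = _ := by rw [mul_inv]; field_simp
  · gcongr
    · exact rem_gag hs hu
    · exact rem_gag hs hγ.1

lemma cpt_min {g : ℝ × ℝ → ℝ} (hg : Continuous g) (hp : ∀ t, Function.Periodic (fun x => g (t, x)) 1)
    (hpos : ∀ z, 0 < g z) : ∃ m > 0, ∀ t ∈ Icc (0:ℝ) 1, ∀ x, m ≤ g (t, x) := by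
  have hc : IsCompact (Icc (0:ℝ) 1 ×ˢ Icc (0:ℝ) 1) := isCompact_Icc.prod isCompact_Icc
  obtain ⟨z, -, hz⟩ := hc.exists_isMinOn ⟨(0, 0), by simp⟩ hg.continuousOn
  refine ⟨g z, hpos z, fun t ht x => ?_⟩
  obtain ⟨y, hy, hxy⟩ := (hp t).exists_mem_Ico₀ one_pos x
  rw [hxy]
  exact hz ⟨ht, Ico_subset_Icc_self hy⟩

lemma cpt_max {g : ℝ × ℝ → ℝ} (hg : Continuous g) (hp : ∀ t, Function.Periodic (fun x => g (t, x)) 1) :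
    ∃ M > 0, ∀ t ∈ Icc (0:ℝ) 1, ∀ x, g (t, x) ≤ M := by
  have hc : IsCompact (Icc (0:ℝ) 1 ×ˢ Icc (0:ℝ) 1) := isCompact_Icc.prod isCompact_Icc
  obtain ⟨z, -, hz⟩ := hc.exists_isMaxOn ⟨(0, 0), by simp⟩ hg.continuousOn
  refine ⟨max (g z) 1, by positivity, fun t ht x => ?_⟩
  obtain ⟨y, hy, hxy⟩ := (hp t).exists_mem_Ico₀ one_pos x
  rw [hxy]
  have : g (t, y) ≤ g z := hz ⟨ht, Ico_subset_Icc_self hy⟩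
  exact this.trans (le_max_left _ _)

lemma smul_int_deriv {n : ℕ} {s : ℝ} {f : ℝ → En n} (hf : InHs s f) (x h : ℝ) :
    h • ∫ θ in (0:ℝ)..1, deriv f (x + θ * h) = f (x + h) - f x := by
  rw [← intervalIntegral.integral_smul]
  have hd := hf.dcont
  have : ∀ θ : ℝ, HasDerivAt (fun θ : ℝ => f (x + θ * h)) (h • deriv f (x + θ * h)) θ := by
    intro θ
    have h1 : HasDerivAt (fun θ : ℝ => x + θ * h) h θ := by
      simpa using ((hasDerivAt_id θ).mul_const h).const_add x
    exact (hf.hd (x + θ * h)).scomp θ h1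
  rw [intervalIntegral.integral_eq_sub_of_hasDerivAt (fun θ _ => this θ)
    (Continuous.intervalIntegrable (by fun_prop) _ _)]
  simp

lemma int_deriv_ne {n : ℕ} {s : ℝ} {f : ℝ → En n} (hf : InM s f) (x h : ℝ) (hh : |h| ≤ 1 / 2) :
    ∫ θ in (0:ℝ)..1, deriv f (x + θ * h) ≠ 0 := by
  intro h0
  by_cases hh0 : h = 0
  · subst hh0
    simp at h0
    exact hf.2.2 x h0
  · have := smul_int_deriv hf.1 x h
    rw [h0, smul_zero] at this
    obtain ⟨k, hk⟩ := hf.inj_per (sub_eq_zero.1 this.symm)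
    have hk2 : h = -k := by linarith
    have hk0 : k ≠ 0 := by rintro rfl; simp at hk2; exact hh0 hk2
    have h1 : (1:ℝ) ≤ |(k:ℝ)| := by exact_mod_cast Int.one_le_abs hk0
    rw [hk2, abs_neg] at hh
    linarith

lemma cpt_min3 {Q : ℝ × ℝ × ℝ → ℝ} (hQ : Continuous Q)
    (hpos : ∀ t ∈ Icc (0:ℝ) 1, ∀ x h, |h| ≤ 1 / 2 → 0 < Q (t, x, h)) :
    ∃ b > 0, ∀ t ∈ Icc (0:ℝ) 1, ∀ x ∈ Icc (0:ℝ) 1, ∀ h, |h| ≤ 1 / 2 → b ≤ Q (t, x, h) := by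
  have hcpt : IsCompact (Icc (0:ℝ) 1 ×ˢ (Icc (0:ℝ) 1 ×ˢ Icc (-(1/2) : ℝ) (1/2))) :=
    isCompact_Icc.prod (isCompact_Icc.prod isCompact_Icc)
  have hne : (Icc (0:ℝ) 1 ×ˢ (Icc (0:ℝ) 1 ×ˢ Icc (-(1/2) : ℝ) (1/2))).Nonempty :=
    ⟨(0, 0, 0), ⟨le_rfl, zero_le_one⟩, ⟨le_rfl, zero_le_one⟩, by norm_num, by norm_num⟩
  obtain ⟨z, hzm, hz⟩ := hcpt.exists_isMinOn hne hQ.continuousOn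
  refine ⟨Q z, hpos z.1 hzm.1 z.2.1 z.2.2 (abs_le.2 hzm.2.2), fun t ht x hx h hh => ?_⟩
  exact isMinOn_iff.1 hz (t, x, h) ⟨ht, hx, abs_le.1 hh⟩

lemma bilip {n : ℕ} {s : ℝ} {F : ℝ → ℝ → En n} (hF : ∀ t ∈ Icc (0:ℝ) 1, InM s (F t))
    (hc : Continuous (fun z : ℝ × ℝ => deriv (F (cl z.1)) z.2)) :
    ∃ b > 0, ∀ t ∈ Icc (0:ℝ) 1, ∀ x h, |h| ≤ 1 / 2 → b * |h| ≤ ‖F t (x + h) - F t x‖ := by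
  have hQc : Continuous fun z : ℝ × ℝ × ℝ => ‖∫ θ in (0:ℝ)..1, deriv (F (cl z.1)) (z.2.1 + θ * z.2.2)‖ := by
    apply Continuous.norm
    refine intervalIntegral.continuous_parametric_intervalIntegral_of_continuous'
      (f := fun (z : ℝ × ℝ × ℝ) θ => deriv (F (cl z.1)) (z.2.1 + θ * z.2.2)) ?_ 0 1
    unfold Function.uncurry
    have : Continuous fun p : (ℝ × ℝ × ℝ) × ℝ => (p.1.1, p.1.2.1 + p.2 * p.1.2.2) := by fun_prop
    exact hc.comp this
  obtain ⟨b, hb, hbl⟩ := cpt_min3 hQc (fun t _ x h hh =>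
    norm_pos_iff.2 (int_deriv_ne (hF _ (cl_mem t)) x h hh))
  refine ⟨b, hb, fun t ht x h hh => ?_⟩
  have hper : Function.Periodic (fun x => ‖F t (x + h) - F t x‖) 1 := fun x => by
    simp only [(hF t ht).1.1 x, show x + 1 + h = x + h + 1 by ring, (hF t ht).1.1 (x + h)]
  obtain ⟨y, hy, hxy⟩ := hper.exists_mem_Ico₀ one_pos x
  have h1 := hbl t ht y (Ico_subset_Icc_self hy) h hh
  simp only [cl_eq ht] at h1
  rw [hxy, ← smul_int_deriv (hF t ht).1 y h, norm_smul, mul_comm, Real.norm_eq_abs]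
  exact mul_le_mul_of_nonneg_left h1 (abs_nonneg h)

structure PC {n : ℕ} {s : ℝ} (P : C1Path s n) (b m M K E : ℝ) : Prop where
  b0 : 0 < b
  m0 : 0 < m
  M0 : 0 < M
  K0 : 0 < K
  E0 : 0 < E
  bl : ∀ t ∈ Icc (0:ℝ) 1, ∀ x h, |h| ≤ 1 / 2 → b * |h| ≤ ‖P.Γ t (x + h) - P.Γ t x‖
  ml : ∀ t ∈ Icc (0:ℝ) 1, ∀ x, m ≤ ‖deriv (P.Γ t) x‖
  Ml : ∀ t ∈ Icc (0:ℝ) 1, ∀ x, ‖deriv (P.Γ t) x‖ ≤ M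
  Kl : ∀ t ∈ Icc (0:ℝ) 1, ∀ x, ‖deriv (P.V t) x‖ ≤ K
  Kl' : ∀ t ∈ Icc (0:ℝ) 1, ∀ x, ‖P.V t x‖ ≤ K
  EΓ : ∀ t ∈ Icc (0:ℝ) 1, EB s (P.Γ t) (P.Γ t) ≤ ENNReal.ofReal E
  EV : ∀ t ∈ Icc (0:ℝ) 1, EB s (P.Γ t) (P.V t) ≤ ENNReal.ofReal E

lemma gag_le_norm {n : ℕ} {s N : ℝ} {f : ℝ → En n} (hf : InHs s f) (h : HsNormSq s f ≤ N) :
    gagliardoSqE (s - 1) (deriv f) ≤ ENNReal.ofReal N := by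
  unfold HsNormSq at h
  have h1 : 0 ≤ ∫ x in I01, ‖f x‖ ^ 2 := integral_nonneg fun _ => by positivity
  have h2 : 0 ≤ ∫ x in I01, ‖deriv f x‖ ^ 2 := integral_nonneg fun _ => by positivity
  rw [← ENNReal.ofReal_toReal hf.2.2.ne]
  exact ENNReal.ofReal_le_ofReal (by linarith)

lemma path_consts {n : ℕ} {s : ℝ} (hs : 3 / 2 < s) (P : C1Path s n) : ∃ b m M K E, PC P b m M K E := by
  have hΓm : ∀ t ∈ Icc (0:ℝ) 1, InHs s (P.Γ t) := fun t ht => (P.mem t ht).1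
  obtain ⟨hΓc, hΓdc⟩ := joint_cont hs hΓm (path_cont P)
  obtain ⟨hVc, hVdc⟩ := joint_cont hs P.memV P.contV
  obtain ⟨b, hb, hbl⟩ := bilip P.mem hΓdc
  obtain ⟨m, hm, hml⟩ := cpt_min hΓdc.norm (fun t x => by simp only [(hΓm _ (cl_mem t)).pd x])
    (fun z => norm_pos_iff.2 ((P.mem _ (cl_mem z.1)).2.2 z.2))
  obtain ⟨M, hM, hMl⟩ := cpt_max hΓdc.norm (fun t x => by simp only [(hΓm _ (cl_mem t)).pd x])
  obtain ⟨K1, hK1, hK1l⟩ := cpt_max hVdc.norm (fun t x => by simp only [(P.memV _ (cl_mem t)).pd x])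
  obtain ⟨K2, hK2, hK2l⟩ := cpt_max hVc.norm (fun t x => by simp only [(P.memV _ (cl_mem t)).1 x])
  obtain ⟨N1, hN1, hN1l⟩ := path_bdd hΓm (path_cont P)
  obtain ⟨N2, hN2, hN2l⟩ := path_bdd P.memV P.contV
  have hml' : ∀ t ∈ Icc (0:ℝ) 1, ∀ x, m ≤ ‖deriv (P.Γ t) x‖ := fun t ht x => by
    have := hml t ht x; simp only [cl_eq ht] at this; exact this
  have hMl' : ∀ t ∈ Icc (0:ℝ) 1, ∀ x, ‖deriv (P.Γ t) x‖ ≤ M := fun t ht x => by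
    have := hMl t ht x; simp only [cl_eq ht] at this; exact this
  have hK1l' : ∀ t ∈ Icc (0:ℝ) 1, ∀ x, ‖deriv (P.V t) x‖ ≤ K1 := fun t ht x => by
    have := hK1l t ht x; simp only [cl_eq ht] at this; exact this
  have hK2l' : ∀ t ∈ Icc (0:ℝ) 1, ∀ x, ‖P.V t x‖ ≤ K2 := fun t ht x => by
    have := hK2l t ht x; simp only [cl_eq ht] at this; exact this
  set EE : ℝ → ℝ → ℝ := fun K N => 2 * M ^ 2 / b ^ (2 * s + 1) * N + 2 * (K / m) ^ 2 * M ^ 2 / b ^ (2 * s + 1) * N1 with hEE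
  have hEE0 : ∀ K N, 0 ≤ N → 0 ≤ EE K N := fun K N hN => by simp only [hEE]; positivity
  have gen : ∀ t ∈ Icc (0:ℝ) 1, ∀ u : ℝ → En n, InHs s u → ∀ K N, (∀ x, ‖deriv u x‖ ≤ K) → 0 ≤ N →
      HsNormSq s u ≤ N → EB s (P.Γ t) u ≤ ENNReal.ofReal (EE K N) := by
    intro t ht u hu K N hK hN0 hN
    refine (EB_upper hs (P.mem t ht) hu hb hm (hbl t ht) (hml' t ht) (hMl' t ht) hK).trans ?_
    simp only [hEE]
    rw [ENNReal.ofReal_add (by positivity) (by positivity), ENNReal.ofReal_mul (by positivity),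
      ENNReal.ofReal_mul (by positivity)]
    gcongr
    · exact gag_le_norm hu hN
    · exact gag_le_norm (hΓm t ht) (hN1l t ht)
  refine ⟨b, m, M, max K1 K2, EE M N1 + EE K1 N2 + 1, hb, hm, hM, by positivity, ?_, hbl, hml', hMl', ?_, ?_, ?_, ?_⟩
  · have := hEE0 M N1 hN1; have := hEE0 K1 N2 hN2; positivity
  · exact fun t ht x => (hK1l' t ht x).trans (le_max_left _ _)
  · exact fun t ht x => (hK2l' t ht x).trans (le_max_right _ _)
  · intro t ht
    refine (gen t ht _ (hΓm t ht) M N1 (hMl' t ht) hN1 (hN1l t ht)).trans (ENNReal.ofReal_le_ofReal ?_)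
    have := hEE0 M N1 hN1; have := hEE0 K1 N2 hN2; linarith
  · intro t ht
    refine (gen t ht _ (P.memV t ht) K1 N2 (hK1l' t ht) hN2 (hN2l t ht)).trans (ENNReal.ofReal_le_ofReal ?_)
    have := hEE0 M N1 hN1; have := hEE0 K1 N2 hN2; linarith

/-- product measure on the fundamental square -/
def nu2 : Measure (ℝ × ℝ) := (volume.restrict I01).prod (volume.restrict I01)

lemma prod_int {F : ℝ → ℝ → ℝ} (hm : Measurable fun z : ℝ × ℝ => F z.1 z.2) :
    (∫⁻ x in I01, ∫⁻ y in I01, ENNReal.ofReal (F x y)) = ∫⁻ z, ENNReal.ofReal (F z.1 z.2) ∂nu2 := by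
  unfold nu2
  rw [lintegral_prod _ hm.ennreal_ofReal.aemeasurable]

lemma prod_integrable {F : ℝ × ℝ → ℝ} (hm : Measurable F) (h0 : ∀ z, 0 ≤ F z)
    (hf : ∫⁻ z, ENNReal.ofReal (F z) ∂nu2 ≠ ⊤) : Integrable F nu2 := by
  refine ⟨hm.aestronglyMeasurable, ?_⟩
  rw [hasFiniteIntegral_iff_ofReal (Eventually.of_forall h0)]
  exact lt_top_iff_ne_top.2 hf

lemma prod_int_eq {F : ℝ → ℝ → ℝ} (hi : Integrable (fun z : ℝ × ℝ => F z.1 z.2) nu2) :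
    ∫ x in I01, ∫ y in I01, F x y = ∫ z, F z.1 z.2 ∂nu2 := by
  unfold nu2 at *
  rw [integral_prod _ hi]

/-- energy density -/
def fe {n : ℕ} (s : ℝ) (γ u : ℝ → En n) (x y : ℝ) : ℝ := ‖Rop s γ u x y‖ ^ 2 * muW γ x y

/-- second density -/
def f2 {n : ℕ} (s : ℝ) (γ u : ℝ → En n) (x y : ℝ) : ℝ :=
  ‖Rop s γ γ x y‖ ^ 2 * (‖u y - u x‖ ^ 2 / ‖γ y - γ x‖ ^ 2) * muW γ x y

/-- third density -/
def f3 {n : ℕ} (s : ℝ) (γ u : ℝ → En n) (x y : ℝ) : ℝ :=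
  ‖Rop s γ γ x y‖ ^ 2 * (‖Dg γ u x‖ ^ 2 + ‖Dg γ u y‖ ^ 2) * muW γ x y

/-- total density -/
def kap {n : ℕ} (s : ℝ) (γ u : ℝ → En n) (x y : ℝ) : ℝ :=
  2 * fe s γ u x y + (2 * s + 1) * f2 s γ u x y + f3 s γ u x y

lemma muW_nonneg {n : ℕ} (γ : ℝ → En n) (x y : ℝ) : 0 ≤ muW γ x y := by unfold muW; positivity

lemma fe_nonneg {n : ℕ} (s : ℝ) (γ u : ℝ → En n) (x y : ℝ) : 0 ≤ fe s γ u x y :=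
  mul_nonneg (by positivity) (muW_nonneg _ _ _)
lemma f2_nonneg {n : ℕ} (s : ℝ) (γ u : ℝ → En n) (x y : ℝ) : 0 ≤ f2 s γ u x y :=
  mul_nonneg (by positivity) (muW_nonneg _ _ _)
lemma f3_nonneg {n : ℕ} (s : ℝ) (γ u : ℝ → En n) (x y : ℝ) : 0 ≤ f3 s γ u x y :=
  mul_nonneg (by positivity) (muW_nonneg _ _ _)

lemma path_meas {n : ℕ} {s : ℝ} (hs : 3 / 2 < s) (P : C1Path s n) :
    (Measurable fun w : ℝ × ℝ × ℝ => fe s (P.Γ (cl w.1)) (P.Γ (cl w.1)) w.2.1 w.2.2) ∧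
    (Measurable fun w : ℝ × ℝ × ℝ => fe s (P.Γ (cl w.1)) (P.V (cl w.1)) w.2.1 w.2.2) ∧
    (Measurable fun w : ℝ × ℝ × ℝ => f2 s (P.Γ (cl w.1)) (P.V (cl w.1)) w.2.1 w.2.2) ∧
    (Measurable fun w : ℝ × ℝ × ℝ => f3 s (P.Γ (cl w.1)) (P.V (cl w.1)) w.2.1 w.2.2) := by
  have hΓm : ∀ t ∈ Icc (0:ℝ) 1, InHs s (P.Γ t) := fun t ht => (P.mem t ht).1
  obtain ⟨hΓc, hΓdc⟩ := joint_cont hs hΓm (path_cont P)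
  obtain ⟨hVc, hVdc⟩ := joint_cont hs P.memV P.contV
  have q1 : Continuous fun w : ℝ × ℝ × ℝ => (w.1, w.2.1) := by fun_prop
  have q2 : Continuous fun w : ℝ × ℝ × ℝ => (w.1, w.2.2) := by fun_prop
  have a1 : Measurable fun w : ℝ × ℝ × ℝ => P.Γ (cl w.1) w.2.1 := (hΓc.comp q1).measurable
  have a2 : Measurable fun w : ℝ × ℝ × ℝ => P.Γ (cl w.1) w.2.2 := (hΓc.comp q2).measurable
  have a3 : Measurable fun w : ℝ × ℝ × ℝ => deriv (P.Γ (cl w.1)) w.2.1 := (hΓdc.comp q1).measurable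
  have a4 : Measurable fun w : ℝ × ℝ × ℝ => deriv (P.Γ (cl w.1)) w.2.2 := (hΓdc.comp q2).measurable
  have b1 : Measurable fun w : ℝ × ℝ × ℝ => P.V (cl w.1) w.2.1 := (hVc.comp q1).measurable
  have b2 : Measurable fun w : ℝ × ℝ × ℝ => P.V (cl w.1) w.2.2 := (hVc.comp q2).measurable
  have b3 : Measurable fun w : ℝ × ℝ × ℝ => deriv (P.V (cl w.1)) w.2.1 := (hVdc.comp q1).measurable
  have b4 : Measurable fun w : ℝ × ℝ × ℝ => deriv (P.V (cl w.1)) w.2.2 := (hVdc.comp q2).measurable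
  have m : Measurable fun w : ℝ × ℝ × ℝ => muW (P.Γ (cl w.1)) w.2.1 w.2.2 := by
    unfold muW; fun_prop
  have r1 : Measurable fun w : ℝ × ℝ × ℝ => Rop s (P.Γ (cl w.1)) (P.Γ (cl w.1)) w.2.1 w.2.2 := by
    unfold Rop DDg; fun_prop
  have r2 : Measurable fun w : ℝ × ℝ × ℝ => Rop s (P.Γ (cl w.1)) (P.V (cl w.1)) w.2.1 w.2.2 := by
    unfold Rop DDg; fun_prop
  refine ⟨?_, ?_, ?_, ?_⟩
  · unfold fe; fun_prop
  · unfold fe; fun_prop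
  · unfold f2; fun_prop
  · unfold f3 Dg; fun_prop

lemma slice_meas {F : ℝ × ℝ × ℝ → ℝ} (h : Measurable F) (t : ℝ) : Measurable fun z : ℝ × ℝ => F (t, z) :=
  h.comp measurable_prodMk_left

lemma PC.lip {n : ℕ} {s : ℝ} {P : C1Path s n} {b m M K E : ℝ} (h : PC P b m M K E) {t : ℝ}
    (ht : t ∈ Icc (0:ℝ) 1) (x y : ℝ) : ‖P.V t y - P.V t x‖ ≤ K / b * ‖P.Γ t y - P.Γ t x‖ := by
  have hk : |y - x - round (y - x)| ≤ 1 / 2 := abs_sub_round _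
  set k := round (y - x)
  have e1 : P.Γ t y = P.Γ t (x + (y - x - k)) := by
    rw [← per_int (P.mem t ht).1.1 (x + (y - x - k)) k]; congr 1; ring
  have e2 : P.V t y = P.V t (x + (y - x - k)) := by
    rw [← per_int (P.memV t ht).1 (x + (y - x - k)) k]; congr 1; ring
  rw [e1, e2]
  have h1 := h.bl t ht x _ hk
  have h2 : ‖P.V t (x + (y - x - k)) - P.V t x‖ ≤ K * ‖(x + (y - x - k)) - x‖ := by
    apply Convex.norm_image_sub_le_of_norm_deriv_le (s := Set.univ) _ _ convex_univ (mem_univ _) (mem_univ _)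
    · exact fun z _ => ((P.memV t ht).hd z).differentiableAt
    · exact fun z _ => h.Kl t ht z
  rw [add_sub_cancel_left, Real.norm_eq_abs] at h2
  refine h2.trans ?_
  have hb := h.b0
  have hK := h.K0
  calc K * |y - x - k| = K / b * (b * |y - x - k|) := by field_simp
    _ ≤ _ := by gcongr

lemma PC.f2_le {n : ℕ} {s : ℝ} {P : C1Path s n} {b m M K E : ℝ} (h : PC P b m M K E) {t : ℝ}
    (ht : t ∈ Icc (0:ℝ) 1) (x y : ℝ) : f2 s (P.Γ t) (P.V t) x y ≤ (K / b) ^ 2 * fe s (P.Γ t) (P.Γ t) x y := by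
  unfold f2 fe
  have : ‖P.V t y - P.V t x‖ ^ 2 / ‖P.Γ t y - P.Γ t x‖ ^ 2 ≤ (K / b) ^ 2 := by
    rw [← div_pow]
    have hb := h.b0
    have hK := h.K0
    apply pow_le_pow_left₀ (by positivity)
    exact div_le_of_le_mul₀ (norm_nonneg _) (by positivity) (h.lip ht x y)
  have hm := muW_nonneg (P.Γ t) x y
  calc _ ≤ ‖Rop s (P.Γ t) (P.Γ t) x y‖ ^ 2 * (K / b) ^ 2 * muW (P.Γ t) x y := by gcongr
    _ = _ := by ring

lemma PC.Dg_le {n : ℕ} {s : ℝ} {P : C1Path s n} {b m M K E : ℝ} (h : PC P b m M K E) {t : ℝ}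
    (ht : t ∈ Icc (0:ℝ) 1) (x : ℝ) : ‖Dg (P.Γ t) (P.V t) x‖ ≤ K / m := by
  unfold Dg
  rw [norm_smul, norm_inv, norm_norm, ← div_eq_inv_mul]
  have := h.m0
  have := h.K0
  gcongr
  · exact h.Kl t ht x
  · exact h.ml t ht x

lemma PC.f3_le {n : ℕ} {s : ℝ} {P : C1Path s n} {b m M K E : ℝ} (h : PC P b m M K E) {t : ℝ}
    (ht : t ∈ Icc (0:ℝ) 1) (x y : ℝ) : f3 s (P.Γ t) (P.V t) x y ≤ 2 * (K / m) ^ 2 * fe s (P.Γ t) (P.Γ t) x y := by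
  unfold f3 fe
  have h1 : ‖Dg (P.Γ t) (P.V t) x‖ ^ 2 ≤ (K / m) ^ 2 := by gcongr; exact h.Dg_le ht x
  have h2 : ‖Dg (P.Γ t) (P.V t) y‖ ^ 2 ≤ (K / m) ^ 2 := by gcongr; exact h.Dg_le ht y
  have hm := muW_nonneg (P.Γ t) x y
  calc _ ≤ ‖Rop s (P.Γ t) (P.Γ t) x y‖ ^ 2 * ((K / m) ^ 2 + (K / m) ^ 2) * muW (P.Γ t) x y := by gcongr
    _ = _ := by ring

lemma integral_le_of_lint {F : ℝ × ℝ → ℝ} (hi : Integrable F nu2) (h0 : ∀ z, 0 ≤ F z) {E : ℝ} (hE : 0 ≤ E)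
    (h : ∫⁻ z, ENNReal.ofReal (F z) ∂nu2 ≤ ENNReal.ofReal E) : ∫ z, F z ∂nu2 ≤ E := by
  rw [← ofReal_integral_eq_lintegral_ofReal hi (Eventually.of_forall h0)] at h
  exact (ENNReal.ofReal_le_ofReal_iff hE).1 h

/-- integrability of all the densities, and formula for the metric -/
lemma PC.main {n : ℕ} {s : ℝ} (hs : 3 / 2 < s) {P : C1Path s n} {b m M K E : ℝ} (h : PC P b m M K E) {t : ℝ}
    (ht : t ∈ Icc (0:ℝ) 1) :
    (Integrable (fun z : ℝ × ℝ => fe s (P.Γ t) (P.Γ t) z.1 z.2) nu2 ∧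
      ∫ z : ℝ × ℝ, fe s (P.Γ t) (P.Γ t) z.1 z.2 ∂nu2 ≤ E ∧
      EB s (P.Γ t) (P.Γ t) = ENNReal.ofReal (∫ z : ℝ × ℝ, fe s (P.Γ t) (P.Γ t) z.1 z.2 ∂nu2)) ∧
    (Integrable (fun z : ℝ × ℝ => fe s (P.Γ t) (P.V t) z.1 z.2) nu2 ∧
      ∫ z : ℝ × ℝ, fe s (P.Γ t) (P.V t) z.1 z.2 ∂nu2 ≤ E ∧
      EB s (P.Γ t) (P.V t) = ENNReal.ofReal (∫ z : ℝ × ℝ, fe s (P.Γ t) (P.V t) z.1 z.2 ∂nu2)) ∧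
    (Integrable (fun z : ℝ × ℝ => f2 s (P.Γ t) (P.V t) z.1 z.2) nu2 ∧
      ∫ z : ℝ × ℝ, f2 s (P.Γ t) (P.V t) z.1 z.2 ∂nu2 ≤ (K / b) ^ 2 * E) ∧
    (Integrable (fun z : ℝ × ℝ => f3 s (P.Γ t) (P.V t) z.1 z.2) nu2 ∧
      ∫ z : ℝ × ℝ, f3 s (P.Γ t) (P.V t) z.1 z.2 ∂nu2 ≤ 2 * (K / m) ^ 2 * E) := by
  obtain ⟨m1, m2, m3, m4⟩ := path_meas hs P
  replace m1 := slice_meas m1 t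
  replace m2 := slice_meas m2 t
  replace m3 := slice_meas m3 t
  replace m4 := slice_meas m4 t
  simp only [cl_eq ht] at m1 m2 m3 m4
  have e1 : EB s (P.Γ t) (P.Γ t) = _ := prod_int m1
  have e2 : EB s (P.Γ t) (P.V t) = _ := prod_int m2
  have l1 := h.EΓ t ht
  have l2 := h.EV t ht
  rw [e1] at l1 ⊢
  rw [e2] at l2 ⊢
  have i1 := prod_integrable m1 (fun z => fe_nonneg s _ _ z.1 z.2) (l1.trans_lt ENNReal.ofReal_lt_top).ne
  have i2 := prod_integrable m2 (fun z => fe_nonneg s _ _ z.1 z.2) (l2.trans_lt ENNReal.ofReal_lt_top).ne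
  have i3 : Integrable (fun z : ℝ × ℝ => f2 s (P.Γ t) (P.V t) z.1 z.2) nu2 := by
    refine (i1.const_mul ((K / b) ^ 2)).mono' m3.aestronglyMeasurable (Eventually.of_forall fun z => ?_)
    rw [Real.norm_of_nonneg (f2_nonneg s _ _ _ _)]
    exact h.f2_le ht _ _
  have i4 : Integrable (fun z : ℝ × ℝ => f3 s (P.Γ t) (P.V t) z.1 z.2) nu2 := by
    refine (i1.const_mul (2 * (K / m) ^ 2)).mono' m4.aestronglyMeasurable (Eventually.of_forall fun z => ?_)
    rw [Real.norm_of_nonneg (f3_nonneg s _ _ _ _)]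
    exact h.f3_le ht _ _
  have j1 := integral_le_of_lint i1 (fun z => fe_nonneg s _ _ z.1 z.2) h.E0.le l1
  have j2 := integral_le_of_lint i2 (fun z => fe_nonneg s _ _ z.1 z.2) h.E0.le l2
  refine ⟨⟨i1, j1, (ofReal_integral_eq_lintegral_ofReal i1 (Eventually.of_forall fun z => fe_nonneg s _ _ z.1 z.2)).symm⟩,
    ⟨i2, j2, (ofReal_integral_eq_lintegral_ofReal i2 (Eventually.of_forall fun z => fe_nonneg s _ _ z.1 z.2)).symm⟩,
    ⟨i3, ?_⟩, ⟨i4, ?_⟩⟩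
  · refine (integral_mono i3 (i1.const_mul ((K / b) ^ 2)) (fun z => h.f2_le ht _ _)).trans ?_
    rw [integral_const_mul]
    gcongr
  · refine (integral_mono i4 (i1.const_mul (2 * (K / m) ^ 2)) (fun z => h.f3_le ht _ _)).trans ?_
    rw [integral_const_mul]
    gcongr

lemma PC.G_eq {n : ℕ} {s : ℝ} (hs : 3 / 2 < s) {P : C1Path s n} {b m M K E : ℝ} (h : PC P b m M K E) {t : ℝ}
    (ht : t ∈ Icc (0:ℝ) 1) :
    Integrable (fun z : ℝ × ℝ => kap s (P.Γ t) (P.V t) z.1 z.2) nu2 ∧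
    Gmet s (P.Γ t) (P.V t) (P.V t) = ∫ z : ℝ × ℝ, kap s (P.Γ t) (P.V t) z.1 z.2 ∂nu2 +
      (∫ x in I01, ‖Dg (P.Γ t) (P.V t) x‖ ^ 2 * ‖deriv (P.Γ t) x‖) +
      ∫ x in I01, ‖P.V t x‖ ^ 2 * ‖deriv (P.Γ t) x‖ := by
  obtain ⟨⟨i1, -⟩, ⟨i2, -⟩, ⟨i3, -⟩, ⟨i4, -⟩⟩ := h.main hs ht
  have i2' := i2.const_mul 2
  have i3' := i3.const_mul (2 * s + 1)
  refine ⟨(i2'.add i3').add i4, ?_⟩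
  have e : ∫ z : ℝ × ℝ, kap s (P.Γ t) (P.V t) z.1 z.2 ∂nu2 =
      2 * B1 s (P.Γ t) (P.V t) (P.V t) + (2 * s + 1) * B2 s (P.Γ t) (P.V t) (P.V t) + B3 s (P.Γ t) (P.V t) (P.V t) := by
    unfold kap
    have i23 : Integrable (fun z : ℝ × ℝ => 2 * fe s (P.Γ t) (P.V t) z.1 z.2 + (2 * s + 1) * f2 s (P.Γ t) (P.V t) z.1 z.2) nu2 :=
      i2'.add i3'
    rw [integral_add i23 i4, integral_add i2' i3', integral_const_mul, integral_const_mul,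
      ← prod_int_eq i2, ← prod_int_eq i3, ← prod_int_eq i4]
    simp only [B1, B2, B3, real_inner_self_eq_norm_sq, fe, f2, f3]
  rw [e]
  simp only [Gmet, innerH1g, innerL2g, real_inner_self_eq_norm_sq]

instance : IsFiniteMeasure (volume.restrict I01) := ⟨by simp [I01]⟩
instance : IsFiniteMeasure nu2 := by unfold nu2; infer_instance

lemma kap_nonneg {n : ℕ} {s : ℝ} (hs : 3 / 2 < s) (γ u : ℝ → En n) (x y : ℝ) : 0 ≤ kap s γ u x y := by
  have h1 := fe_nonneg s γ u x y
  have h2 := f2_nonneg s γ u x y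
  have h3 := f3_nonneg s γ u x y
  have h4 : 0 ≤ 2 * s + 1 := by linarith
  unfold kap; positivity

lemma H1_nonneg {n : ℕ} (γ u : ℝ → En n) : 0 ≤ ∫ x in I01, ‖Dg γ u x‖ ^ 2 * ‖deriv γ x‖ :=
  integral_nonneg fun _ => by positivity
lemma L2_nonneg {n : ℕ} (γ u : ℝ → En n) : 0 ≤ ∫ x in I01, ‖u x‖ ^ 2 * ‖deriv γ x‖ :=
  integral_nonneg fun _ => by positivity

lemma PC.G_low {n : ℕ} {s : ℝ} (hs : 3 / 2 < s) {P : C1Path s n} {b m M K E : ℝ} (h : PC P b m M K E) {t : ℝ}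
    (ht : t ∈ Icc (0:ℝ) 1) :
    0 ≤ Gmet s (P.Γ t) (P.V t) (P.V t) ∧
    ∫ z : ℝ × ℝ, kap s (P.Γ t) (P.V t) z.1 z.2 ∂nu2 ≤ Gmet s (P.Γ t) (P.V t) (P.V t) ∧
    (∫ x in I01, ‖Dg (P.Γ t) (P.V t) x‖ ^ 2 * ‖deriv (P.Γ t) x‖) ≤ Gmet s (P.Γ t) (P.V t) (P.V t) ∧
    EB s (P.Γ t) (P.V t) ≤ ENNReal.ofReal (Gmet s (P.Γ t) (P.V t) (P.V t)) := by
  obtain ⟨ik, e⟩ := h.G_eq hs ht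
  obtain ⟨-, ⟨i2, -, e2⟩, -, -⟩ := h.main hs ht
  have h1 := H1_nonneg (P.Γ t) (P.V t)
  have h2 := L2_nonneg (P.Γ t) (P.V t)
  have h3 : 0 ≤ ∫ z : ℝ × ℝ, kap s (P.Γ t) (P.V t) z.1 z.2 ∂nu2 := integral_nonneg fun z => kap_nonneg hs _ _ _ _
  have h4 : ∫ z : ℝ × ℝ, fe s (P.Γ t) (P.V t) z.1 z.2 ∂nu2 ≤ ∫ z : ℝ × ℝ, kap s (P.Γ t) (P.V t) z.1 z.2 ∂nu2 := by
    apply integral_mono i2 ik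
    intro z
    have a1 := fe_nonneg s (P.Γ t) (P.V t) z.1 z.2
    have a2 := mul_nonneg (by linarith : (0:ℝ) ≤ 2 * s + 1) (f2_nonneg s (P.Γ t) (P.V t) z.1 z.2)
    have a3 := f3_nonneg s (P.Γ t) (P.V t) z.1 z.2
    simp only [kap]
    linarith
  rw [e2]
  refine ⟨by linarith, by linarith, by linarith, ENNReal.ofReal_le_ofReal (by linarith)⟩

lemma int_bound_I01 {f : ℝ → ℝ} {C : ℝ} (h : ∀ x, ‖f x‖ ≤ C) : ∫ x in I01, f x ≤ C := by
  rw [int_I01]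
  have := intervalIntegral.norm_integral_le_of_norm_le_const (a := 0) (b := 1) (f := f) (C := C) (fun x _ => h x)
  simp only [sub_zero, abs_one, mul_one] at this
  exact (le_abs_self _).trans this

lemma PC.G_up {n : ℕ} {s : ℝ} (hs : 3 / 2 < s) {P : C1Path s n} {b m M K E : ℝ} (h : PC P b m M K E) :
    ∃ C, ∀ t ∈ Icc (0:ℝ) 1, Gmet s (P.Γ t) (P.V t) (P.V t) ≤ C := by
  refine ⟨2 * E + (2 * s + 1) * ((K / b) ^ 2 * E) + 2 * (K / m) ^ 2 * E + (K / m) ^ 2 * M + K ^ 2 * M, fun t ht => ?_⟩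
  obtain ⟨ik, e⟩ := h.G_eq hs ht
  obtain ⟨-, ⟨i2, j2, -⟩, ⟨i3, j3⟩, ⟨i4, j4⟩⟩ := h.main hs ht
  have i2' := i2.const_mul 2
  have i3' := i3.const_mul (2 * s + 1)
  have i23 : Integrable (fun z : ℝ × ℝ => 2 * fe s (P.Γ t) (P.V t) z.1 z.2 + (2 * s + 1) * f2 s (P.Γ t) (P.V t) z.1 z.2) nu2 :=
      i2'.add i3'
  have hk : ∫ z : ℝ × ℝ, kap s (P.Γ t) (P.V t) z.1 z.2 ∂nu2 ≤ 2 * E + (2 * s + 1) * ((K / b) ^ 2 * E) + 2 * (K / m) ^ 2 * E := by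
    unfold kap
    rw [integral_add i23 i4, integral_add i2' i3', integral_const_mul, integral_const_mul]
    have : 0 ≤ 2 * s + 1 := by linarith
    gcongr
  have h1 : (∫ x in I01, ‖Dg (P.Γ t) (P.V t) x‖ ^ 2 * ‖deriv (P.Γ t) x‖) ≤ (K / m) ^ 2 * M := by
    apply int_bound_I01
    intro x
    rw [Real.norm_of_nonneg (by positivity)]
    gcongr
    · exact h.Dg_le ht x
    · exact h.Ml t ht x
  have h2 : (∫ x in I01, ‖P.V t x‖ ^ 2 * ‖deriv (P.Γ t) x‖) ≤ K ^ 2 * M := by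
    apply int_bound_I01
    intro x
    rw [Real.norm_of_nonneg (by positivity)]
    gcongr
    · exact h.Kl' t ht x
    · exact h.Ml t ht x
  linarith

lemma kap_meas {n : ℕ} {s : ℝ} (hs : 3 / 2 < s) (P : C1Path s n) :
    Measurable fun w : ℝ × ℝ × ℝ => kap s (P.Γ (cl w.1)) (P.V (cl w.1)) w.2.1 w.2.2 := by
  obtain ⟨m1, m2, m3, m4⟩ := path_meas hs P
  unfold kap
  fun_prop

lemma PC.G_meas {n : ℕ} {s : ℝ} (hs : 3 / 2 < s) {P : C1Path s n} {b m M K E : ℝ} (h : PC P b m M K E) :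
    Measurable fun t => Gmet s (P.Γ (cl t)) (P.V (cl t)) (P.V (cl t)) := by
  have e : (fun t => Gmet s (P.Γ (cl t)) (P.V (cl t)) (P.V (cl t))) = fun t =>
      ∫ z : ℝ × ℝ, kap s (P.Γ (cl t)) (P.V (cl t)) z.1 z.2 ∂nu2 +
      (∫ x in I01, ‖Dg (P.Γ (cl t)) (P.V (cl t)) x‖ ^ 2 * ‖deriv (P.Γ (cl t)) x‖) +
      ∫ x in I01, ‖P.V (cl t) x‖ ^ 2 * ‖deriv (P.Γ (cl t)) x‖ := by
    funext t; exact (h.G_eq hs (cl_mem t)).2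
  rw [e]
  have hΓm : ∀ t ∈ Icc (0:ℝ) 1, InHs s (P.Γ t) := fun t ht => (P.mem t ht).1
  obtain ⟨hΓc, hΓdc⟩ := joint_cont hs hΓm (path_cont P)
  obtain ⟨hVc, hVdc⟩ := joint_cont hs P.memV P.contV
  have a1 := hΓc.measurable
  have a2 := hΓdc.measurable
  have a3 := hVc.measurable
  have a4 := hVdc.measurable
  have k1 : Measurable fun t => ∫ z : ℝ × ℝ, kap s (P.Γ (cl t)) (P.V (cl t)) z.1 z.2 ∂nu2 :=
    (StronglyMeasurable.integral_prod_right (ν := nu2)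
      (f := fun (t : ℝ) (z : ℝ × ℝ) => kap s (P.Γ (cl t)) (P.V (cl t)) z.1 z.2)
      (kap_meas hs P).stronglyMeasurable).measurable
  have g2 : Measurable fun w : ℝ × ℝ => ‖Dg (P.Γ (cl w.1)) (P.V (cl w.1)) w.2‖ ^ 2 * ‖deriv (P.Γ (cl w.1)) w.2‖ := by
    unfold Dg; fun_prop
  have g3 : Measurable fun w : ℝ × ℝ => ‖P.V (cl w.1) w.2‖ ^ 2 * ‖deriv (P.Γ (cl w.1)) w.2‖ := by
    fun_prop
  have k2 : Measurable fun t => ∫ x in I01, ‖Dg (P.Γ (cl t)) (P.V (cl t)) x‖ ^ 2 * ‖deriv (P.Γ (cl t)) x‖ :=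
    (StronglyMeasurable.integral_prod_right (ν := volume.restrict I01)
      (f := fun (t : ℝ) (x : ℝ) => ‖Dg (P.Γ (cl t)) (P.V (cl t)) x‖ ^ 2 * ‖deriv (P.Γ (cl t)) x‖)
      g2.stronglyMeasurable).measurable
  have k3 : Measurable fun t => ∫ x in I01, ‖P.V (cl t) x‖ ^ 2 * ‖deriv (P.Γ (cl t)) x‖ :=
    (StronglyMeasurable.integral_prod_right (ν := volume.restrict I01)
      (f := fun (t : ℝ) (x : ℝ) => ‖P.V (cl t) x‖ ^ 2 * ‖deriv (P.Γ (cl t)) x‖)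
      g3.stronglyMeasurable).measurable
  exact (k1.add k2).add k3

lemma PC.sqrtG_int {n : ℕ} {s : ℝ} (hs : 3 / 2 < s) {P : C1Path s n} {b m M K E : ℝ} (h : PC P b m M K E) :
    IntegrableOn (fun t => √(Gmet s (P.Γ t) (P.V t) (P.V t))) (Icc 0 1) := by
  obtain ⟨C, hC⟩ := h.G_up hs
  have h1 : IntegrableOn (fun t => √(Gmet s (P.Γ (cl t)) (P.V (cl t)) (P.V (cl t)))) (Icc 0 1) := by
    refine Measure.integrableOn_of_bounded (M := √C) (by simp) (h.G_meas hs).sqrt.aestronglyMeasurable ?_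
    refine Eventually.of_forall fun t => ?_
    rw [Real.norm_of_nonneg (Real.sqrt_nonneg _)]
    exact Real.sqrt_le_sqrt (hC _ (cl_mem t))
  refine h1.congr_fun (fun t ht => ?_) measurableSet_Icc
  simp only [cl_eq ht]

lemma hd_norm {n : ℕ} {v : ℝ → En n} {v' : En n} {t : ℝ} (h : HasDerivAt v v' t) (h0 : v t ≠ 0) :
    ∃ d, HasDerivAt (fun τ => ‖v τ‖) d t ∧ |d| ≤ ‖v'‖ := by
  have hp : 0 < ‖v t‖ := norm_pos_iff.2 h0
  have h1 := h.norm_sq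
  have h2 := h1.sqrt (by positivity)
  refine ⟨_, h2.congr_of_eventuallyEq (Eventually.of_forall fun τ => ?_), ?_⟩
  · simp
  · rw [Real.sqrt_sq hp.le, mul_div_mul_left _ _ two_ne_zero, abs_div, abs_of_pos hp, div_le_iff₀ hp]
    rw [mul_comm]
    exact abs_real_inner_le_norm _ _

/-- pointwise remainder -/
def rV {n : ℕ} (A D : En n) (B e : En n) : En n := e - ((‖A‖ ^ 2)⁻¹ * ⟪A, D⟫) • B

lemma hd_rem {n : ℕ} {A D : ℝ → En n} {A' D' : En n} {t : ℝ} (hA : HasDerivAt A A' t) (hD : HasDerivAt D D' t)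
    (h0 : A t ≠ 0) :
    ∃ d, HasDerivAt (fun τ => ‖rV (A τ) (D τ) (A τ) (D τ)‖ ^ 2) d t ∧
      |d| ≤ 2 * ‖rV (A t) (D t) (A t) (D t)‖ * ‖rV (A t) (D t) A' D'‖ := by
  have hp : ‖A t‖ ^ 2 ≠ 0 := by simpa using h0
  obtain ⟨c', hc⟩ : ∃ c', HasDerivAt (fun τ => (‖A τ‖ ^ 2)⁻¹ * ⟪A τ, D τ⟫) c' t :=
    ⟨_, (hA.norm_sq.inv hp).mul (hA.inner ℝ hD)⟩
  have hr := hD.sub (hc.smul hA)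
  have hn := hr.norm_sq
  refine ⟨_, hn, ?_⟩
  have orth : ⟪rV (A t) (D t) (A t) (D t), A t⟫ = 0 := by
    unfold rV
    rw [inner_sub_left, real_inner_smul_left, real_inner_self_eq_norm_sq, real_inner_comm]
    field_simp
    ring
  have e : D' - (((‖A t‖ ^ 2)⁻¹ * ⟪A t, D t⟫) • A' + c' • A t) = rV (A t) (D t) A' D' - c' • A t := by
    unfold rV; abel
  have e2 : ⟪rV (A t) (D t) (A t) (D t), rV (A t) (D t) A' D' - c' • A t⟫ =
      ⟪rV (A t) (D t) (A t) (D t), rV (A t) (D t) A' D'⟫ := by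
    rw [inner_sub_right, real_inner_smul_right, orth]; ring
  rw [e]
  change |2 * ⟪rV (A t) (D t) (A t) (D t), rV (A t) (D t) A' D' - c' • A t⟫| ≤ _
  rw [e2, abs_mul, abs_two, mul_assoc]
  gcongr
  exact abs_real_inner_le_norm _ _

lemma prod_bound {N p q d N' p' q' d' w a c e r : ℝ} (hN : 0 ≤ N) (hp : 0 < p) (hq : 0 < q) (hd : 0 < d) (hw : 0 < w)
    (h1 : |N'| ≤ r) (h2 : |p'| ≤ a) (h3 : |q'| ≤ c) (h4 : |d'| ≤ e * w) :
    |(N' * (p * q) + N * (p' * q + p * q')) * d + N * (p * q) * (d' * d)| ≤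
      r * (p * q * d) + N * (p * q * d) * (a / p + c / q + e * w) := by
  have e1 : (N' * (p * q) + N * (p' * q + p * q')) * d + N * (p * q) * (d' * d) =
      N' * (p * q * d) + N * (p * q * d) * (p' / p + q' / q + d') := by
    field_simp
    ring
  rw [e1]
  have hW : 0 < p * q * d := by positivity
  have b1 : |p' / p + q' / q + d'| ≤ a / p + c / q + e * w := by
    refine (abs_add_le _ _).trans (add_le_add ((abs_add_le _ _).trans (add_le_add ?_ ?_)) h4)
    · rw [abs_div, abs_of_pos hp]; gcongr
    · rw [abs_div, abs_of_pos hq]; gcongr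
  refine (abs_add_le _ _).trans (add_le_add ?_ ?_)
  · rw [abs_mul, abs_of_pos hW]; gcongr
  · rw [abs_mul, abs_of_nonneg (by positivity : 0 ≤ N * (p * q * d))]; gcongr

lemma hd_pow {g : ℝ → ℝ} {g' t a s : ℝ} (hs : 0 < s) (h : HasDerivAt g g' t) (h0 : 0 < g t) (hg : |g'| ≤ a) :
    ∃ d', HasDerivAt (fun τ => (g τ ^ s)⁻¹) (d' * (g t ^ s)⁻¹) t ∧ |d'| ≤ s * (a / g t) := by
  have hq : 0 < g t ^ s := Real.rpow_pos_of_pos h0 s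
  have h1 := (h.rpow_const (p := s) (Or.inl h0.ne')).inv hq.ne'
  refine ⟨-(s * (g' / g t)), ?_, ?_⟩
  · have e : -(s * (g' / g t)) * (g t ^ s)⁻¹ = -(g' * s * g t ^ (s - 1)) / (g t ^ s) ^ 2 := by
      rw [Real.rpow_sub_one h0.ne']
      field_simp
    rw [e]
    exact h1
  · rw [abs_neg, abs_mul, abs_of_pos hs, abs_div, abs_of_pos h0]
    gcongr

lemma hd_dens {n : ℕ} {s : ℝ} (hs : 3 / 2 < s) {A B D : ℝ → En n} {A' B' D' : En n} {t : ℝ} (hA : HasDerivAt A A' t)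
    (hB : HasDerivAt B B' t) (hD : HasDerivAt D D' t) (hA0 : A t ≠ 0) (hB0 : B t ≠ 0) (hD0 : D t ≠ 0) :
    ∃ d, HasDerivAt (fun τ => ‖rV (A τ) (D τ) (A τ) (D τ)‖ ^ 2 * (‖A τ‖ * ‖B τ‖) * (‖D τ‖ ^ (2 * s + 1))⁻¹) d t ∧
      |d| ≤ 2 * ‖rV (A t) (D t) (A t) (D t)‖ * ‖rV (A t) (D t) A' D'‖ * (‖A t‖ * ‖B t‖ * (‖D t‖ ^ (2 * s + 1))⁻¹) +
        ‖rV (A t) (D t) (A t) (D t)‖ ^ 2 * (‖A t‖ * ‖B t‖ * (‖D t‖ ^ (2 * s + 1))⁻¹) *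
          (‖A'‖ / ‖A t‖ + ‖B'‖ / ‖B t‖ + (2 * s + 1) * (‖D'‖ / ‖D t‖)) := by
  obtain ⟨N', hN, bN⟩ := hd_rem hA hD hA0
  obtain ⟨p', hp, bp⟩ := hd_norm hA hA0
  obtain ⟨q', hq, bq⟩ := hd_norm hB hB0
  obtain ⟨l', hl, bl⟩ := hd_norm hD hD0
  have hDp := norm_pos_iff.2 hD0
  obtain ⟨d', hd, bd⟩ := hd_pow (by linarith : 0 < 2 * s + 1) hl hDp bl
  refine ⟨_, (hN.mul (hp.mul hq)).mul hd, ?_⟩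
  have hpos : 0 < (‖D t‖ ^ (2 * s + 1))⁻¹ := inv_pos.2 (Real.rpow_pos_of_pos hDp _)
  by_cases hD'0 : D' = 0
  · have : d' = 0 := by
      rw [hD'0] at bd
      simpa using bd
    have bd1 : |d'| ≤ 0 * 1 := by rw [this]; simp
    have := prod_bound (N := ‖rV (A t) (D t) (A t) (D t)‖ ^ 2) (by positivity) (norm_pos_iff.2 hA0) (norm_pos_iff.2 hB0) hpos
      one_pos bN bp bq bd1
    rw [hD'0] at this ⊢
    simpa using this
  · exact prod_bound (N := ‖rV (A t) (D t) (A t) (D t)‖ ^ 2) (by positivity) (norm_pos_iff.2 hA0) (norm_pos_iff.2 hB0) hpos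
      (div_pos (norm_pos_iff.2 hD'0) hDp) bN bp bq bd

lemma sqrt_comb {N r ρ W a c e s : ℝ} (hr : 0 ≤ r) (hρ : 0 ≤ ρ) (hW : 0 ≤ W) (ha : 0 ≤ a) (hc : 0 ≤ c) (he : 0 ≤ e)
    (hs : 3 / 2 < s) (hN : N = 2 * (ρ ^ 2 * W) + (2 * s + 1) * (r ^ 2 * W * e ^ 2) + r ^ 2 * W * (a ^ 2 + c ^ 2)) :
    2 * r * ρ * W + r ^ 2 * W * (a + c + (2 * s + 1) * e) ≤ (2 * s + 5) * (√(r ^ 2 * W) * √N) := by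
  have key : ∀ k, 0 ≤ k → k ^ 2 * W ≤ N → r * k * W ≤ √(r ^ 2 * W) * √N := by
    intro k hk hkN
    have h1 : √(k ^ 2 * W) ≤ √N := Real.sqrt_le_sqrt hkN
    have h2 : √(r ^ 2 * W) = r * √W := by rw [Real.sqrt_mul (by positivity), Real.sqrt_sq hr]
    have h3 : √(k ^ 2 * W) = k * √W := by rw [Real.sqrt_mul (by positivity), Real.sqrt_sq hk]
    calc r * k * W = √(r ^ 2 * W) * √(k ^ 2 * W) := by
          rw [h2, h3]; nth_rewrite 1 [← Real.mul_self_sqrt hW]; ring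
      _ ≤ _ := by gcongr
  have t0 : 0 ≤ ρ ^ 2 * W := by positivity
  have t1 : 0 ≤ r ^ 2 * W * e ^ 2 := by positivity
  have t2 : 0 ≤ r ^ 2 * W * a ^ 2 := by positivity
  have t3 : 0 ≤ r ^ 2 * W * c ^ 2 := by positivity
  have t4 : r ^ 2 * W * e ^ 2 ≤ (2 * s + 1) * (r ^ 2 * W * e ^ 2) := by nlinarith
  have k0 := key ρ hρ (by rw [hN]; linarith)
  have k1 := key (r * e) (by positivity) (by rw [hN]; linarith)
  have k2 := key (r * a) (by positivity) (by rw [hN]; linarith)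
  have k3 := key (r * c) (by positivity) (by rw [hN]; linarith)
  have k1' := mul_le_mul_of_nonneg_left k1 (by linarith : 0 ≤ 2 * s + 1)
  linarith

lemma rV_rO {n : ℕ} (γ u : ℝ → En n) (x y : ℝ) :
    rV (deriv γ x) (γ y - γ x) (deriv u x) (u y - u x) = rO γ u x y := rfl

lemma fe_eq {n : ℕ} {s : ℝ} {γ u : ℝ → En n} {x y : ℝ} (h : γ x ≠ γ y) :
    fe s γ u x y = ‖rO γ u x y‖ ^ 2 * (‖deriv γ x‖ * ‖deriv γ y‖ * (‖γ y - γ x‖ ^ (2 * s + 1))⁻¹) := by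
  unfold fe; rw [Rop_eq h]; ring

lemma kap_eq {n : ℕ} {s : ℝ} {γ u : ℝ → En n} {x y : ℝ} (h : γ x ≠ γ y) :
    kap s γ u x y = 2 * (‖rO γ u x y‖ ^ 2 * (‖deriv γ x‖ * ‖deriv γ y‖ * (‖γ y - γ x‖ ^ (2 * s + 1))⁻¹)) +
      (2 * s + 1) * (‖rO γ γ x y‖ ^ 2 * (‖deriv γ x‖ * ‖deriv γ y‖ * (‖γ y - γ x‖ ^ (2 * s + 1))⁻¹) *
        (‖u y - u x‖ / ‖γ y - γ x‖) ^ 2) +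
      ‖rO γ γ x y‖ ^ 2 * (‖deriv γ x‖ * ‖deriv γ y‖ * (‖γ y - γ x‖ ^ (2 * s + 1))⁻¹) *
        ((‖deriv u x‖ / ‖deriv γ x‖) ^ 2 + (‖deriv u y‖ / ‖deriv γ y‖) ^ 2) := by
  have e2 : f2 s γ u x y = fe s γ γ x y * (‖u y - u x‖ / ‖γ y - γ x‖) ^ 2 := by
    unfold f2 fe; rw [div_pow]; ring
  have eD : ∀ z, ‖Dg γ u z‖ = ‖deriv u z‖ / ‖deriv γ z‖ := by
    intro z; unfold Dg; rw [norm_smul, norm_inv, norm_norm, div_eq_inv_mul]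
  have e3 : f3 s γ u x y = fe s γ γ x y * ((‖deriv u x‖ / ‖deriv γ x‖) ^ 2 + (‖deriv u y‖ / ‖deriv γ y‖) ^ 2) := by
    unfold f3 fe; rw [eD, eD]; ring
  unfold kap
  rw [e2, e3, fe_eq h, fe_eq h]

lemma fe_deriv {n : ℕ} {s : ℝ} (hs : 3 / 2 < s) (P : C1Path s n) {x y : ℝ} (hx : x ∈ I01) (hy : y ∈ I01) (hxy : x ≠ y)
    {t : ℝ} (ht : t ∈ Ioo (0:ℝ) 1) :
    ∃ d, HasDerivAt (fun τ => fe s (P.Γ τ) (P.Γ τ) x y) d t ∧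
      |d| ≤ (2 * s + 5) * (√(fe s (P.Γ t) (P.Γ t) x y) * √(kap s (P.Γ t) (P.V t) x y)) := by
  have ne : ∀ τ ∈ Icc (0:ℝ) 1, P.Γ τ x ≠ P.Γ τ y := fun τ hτ h => hxy ((P.mem τ hτ).2.1 hx hy h)
  have htI := Ioo_subset_Icc_self ht
  obtain ⟨hx1, hx2⟩ := time_deriv hs P ht x
  obtain ⟨hy1, hy2⟩ := time_deriv hs P ht y
  obtain ⟨d, hd, bd⟩ := hd_dens hs hx2 hy2 (hy1.sub hx1) ((P.mem t htI).2.2 x) ((P.mem t htI).2.2 y)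
    (sub_ne_zero.2 (ne t htI).symm)
  refine ⟨d, hd.congr_of_eventuallyEq ?_, bd.trans ?_⟩
  · filter_upwards [Icc_mem_nhds ht.1 ht.2] with τ hτ
    rw [fe_eq (ne τ hτ), ← rV_rO]
    simp only [Pi.sub_apply]
    ring
  · have hW : 0 ≤ ‖deriv (P.Γ t) x‖ * ‖deriv (P.Γ t) y‖ * (‖P.Γ t y - P.Γ t x‖ ^ (2 * s + 1))⁻¹ := by
      have := Real.rpow_nonneg (norm_nonneg (P.Γ t y - P.Γ t x)) (2 * s + 1)
      positivity
    rw [fe_eq (ne t htI)]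
    exact sqrt_comb (norm_nonneg _) (norm_nonneg (rO (P.Γ t) (P.V t) x y)) hW (by positivity) (by positivity) (by positivity) hs
      (kap_eq (ne t htI))

lemma ofReal_sqrt_sq {a : ℝ} (ha : 0 ≤ a) : ENNReal.ofReal (√a) ^ (2:ℝ) = ENNReal.ofReal a := by
  rw [ENNReal.ofReal_rpow_of_nonneg (Real.sqrt_nonneg _) (by norm_num)]
  norm_num [Real.sq_sqrt ha]

lemma cs_lint {F H : ℝ × ℝ → ℝ} (hF : Measurable F) (hH : Measurable H) (F0 : ∀ z, 0 ≤ F z) (H0 : ∀ z, 0 ≤ H z)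
    {a c : ℝ} (ha : 0 ≤ a) (hc : 0 ≤ c) (h1 : ∫⁻ z, ENNReal.ofReal (F z) ∂nu2 ≤ ENNReal.ofReal (a ^ 2))
    (h2 : ∫⁻ z, ENNReal.ofReal (H z) ∂nu2 ≤ ENNReal.ofReal (c ^ 2)) :
    ∫⁻ z, ENNReal.ofReal (√(F z) * √(H z)) ∂nu2 ≤ ENNReal.ofReal (a * c) := by
  have hol := ENNReal.lintegral_mul_le_Lp_mul_Lq nu2 (p := 2) (q := 2) ⟨by norm_num, by norm_num, by norm_num⟩
    (f := fun z => ENNReal.ofReal (√(F z))) (g := fun z => ENNReal.ofReal (√(H z)))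
    hF.sqrt.ennreal_ofReal.aemeasurable hH.sqrt.ennreal_ofReal.aemeasurable
  simp only [Pi.mul_apply, ofReal_sqrt_sq (F0 _), ofReal_sqrt_sq (H0 _)] at hol
  have e : ∀ b : ℝ, 0 ≤ b → ENNReal.ofReal (b ^ 2) ^ (1 / 2 : ℝ) = ENNReal.ofReal b := by
    intro b hb
    rw [ENNReal.ofReal_rpow_of_nonneg (by positivity) (by norm_num), ← Real.sqrt_eq_rpow, Real.sqrt_sq hb]
  calc _ = ∫⁻ z, ENNReal.ofReal (√(F z)) * ENNReal.ofReal (√(H z)) ∂nu2 := by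
        simp_rw [ENNReal.ofReal_mul (Real.sqrt_nonneg _)]
    _ ≤ _ := hol
    _ ≤ ENNReal.ofReal (a ^ 2) ^ (1 / 2 : ℝ) * ENNReal.ofReal (c ^ 2) ^ (1 / 2 : ℝ) := by gcongr
    _ = _ := by rw [e a ha, e c hc, ENNReal.ofReal_mul ha]

lemma time_cont {n : ℕ} {s : ℝ} (hs : 3 / 2 < s) (P : C1Path s n) {x y : ℝ} (hx : x ∈ I01) (hy : y ∈ I01) (hxy : x ≠ y) :
    Continuous (fun τ => fe s (P.Γ (cl τ)) (P.Γ (cl τ)) x y) ∧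
    Continuous (fun τ => kap s (P.Γ (cl τ)) (P.V (cl τ)) x y) := by
  have ne : ∀ τ, ‖P.Γ (cl τ) y - P.Γ (cl τ) x‖ ≠ 0 := fun τ h =>
    hxy ((P.mem _ (cl_mem τ)).2.1 hx hy (sub_eq_zero.1 (norm_eq_zero.1 h)).symm)
  have hΓm : ∀ t ∈ Icc (0:ℝ) 1, InHs s (P.Γ t) := fun t ht => (P.mem t ht).1
  obtain ⟨hΓc, hΓdc⟩ := joint_cont hs hΓm (path_cont P)
  obtain ⟨hVc, hVdc⟩ := joint_cont hs P.memV P.contV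
  have q : ∀ w : ℝ, Continuous fun τ : ℝ => (τ, w) := fun w => by fun_prop
  have a1 : Continuous fun τ => P.Γ (cl τ) x := hΓc.comp (q x)
  have a2 : Continuous fun τ => P.Γ (cl τ) y := hΓc.comp (q y)
  have a3 : Continuous fun τ => deriv (P.Γ (cl τ)) x := hΓdc.comp (q x)
  have a4 : Continuous fun τ => deriv (P.Γ (cl τ)) y := hΓdc.comp (q y)
  have b1 : Continuous fun τ => P.V (cl τ) x := hVc.comp (q x)
  have b2 : Continuous fun τ => P.V (cl τ) y := hVc.comp (q y)
  have b3 : Continuous fun τ => deriv (P.V (cl τ)) x := hVdc.comp (q x)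
  have b4 : Continuous fun τ => deriv (P.V (cl τ)) y := hVdc.comp (q y)
  have n1 : ∀ τ, ‖deriv (P.Γ (cl τ)) x‖ ≠ 0 := fun τ => norm_ne_zero_iff.2 ((P.mem _ (cl_mem τ)).2.2 x)
  have n2 : ∀ τ, ‖deriv (P.Γ (cl τ)) y‖ ≠ 0 := fun τ => norm_ne_zero_iff.2 ((P.mem _ (cl_mem τ)).2.2 y)
  have hpw : Continuous fun τ => (‖P.Γ (cl τ) y - P.Γ (cl τ) x‖ ^ s)⁻¹ := by
    apply Continuous.inv₀
    · exact Continuous.rpow_const (by fun_prop) (fun τ => Or.inl (ne τ))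
    · exact fun τ => (Real.rpow_pos_of_pos (lt_of_le_of_ne (norm_nonneg _) (ne τ).symm) s).ne'
  have hi : Continuous fun τ => (‖deriv (P.Γ (cl τ)) x‖ ^ 2)⁻¹ :=
    Continuous.inv₀ (by fun_prop) (fun τ => pow_ne_zero 2 (n1 τ))
  have hi1 : Continuous fun τ => ‖deriv (P.Γ (cl τ)) x‖⁻¹ := Continuous.inv₀ (by fun_prop) n1
  have hi2 : Continuous fun τ => ‖deriv (P.Γ (cl τ)) y‖⁻¹ := Continuous.inv₀ (by fun_prop) n2
  have m : Continuous fun τ => muW (P.Γ (cl τ)) x y := by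
    unfold muW; exact Continuous.div (by fun_prop) (by fun_prop) ne
  have r1 : Continuous fun τ => Rop s (P.Γ (cl τ)) (P.Γ (cl τ)) x y := by
    unfold Rop DDg; fun_prop
  have r2 : Continuous fun τ => Rop s (P.Γ (cl τ)) (P.V (cl τ)) x y := by
    unfold Rop DDg; fun_prop
  have d2 : Continuous fun τ => ‖P.V (cl τ) y - P.V (cl τ) x‖ ^ 2 / ‖P.Γ (cl τ) y - P.Γ (cl τ) x‖ ^ 2 :=
    Continuous.div (by fun_prop) (by fun_prop) fun τ => pow_ne_zero 2 (ne τ)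
  refine ⟨by unfold fe; fun_prop, ?_⟩
  unfold kap fe f2 f3 Dg
  fun_prop

lemma fe_diag {n : ℕ} (s : ℝ) (γ : ℝ → En n) (x : ℝ) : fe s γ γ x x = 0 := by
  simp [fe, muW]

/-- pointwise growth of the density -/
lemma fe_ftc {n : ℕ} {s : ℝ} (hs : 3 / 2 < s) (P : C1Path s n) {x y : ℝ} (hx : x ∈ I01) (hy : y ∈ I01)
    {t : ℝ} (ht : t ∈ Icc (0:ℝ) 1) :
    ENNReal.ofReal (fe s (P.Γ t) (P.Γ t) x y) ≤ ENNReal.ofReal (fe s (P.Γ 1) (P.Γ 1) x y) +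
      ∫⁻ τ in Icc (0:ℝ) 1, ENNReal.ofReal ((2 * s + 5) *
        (√(fe s (P.Γ (cl τ)) (P.Γ (cl τ)) x y) * √(kap s (P.Γ (cl τ)) (P.V (cl τ)) x y))) := by
  by_cases hxy : x = y
  · rw [← hxy, fe_diag]; simp
  obtain ⟨c1, c2⟩ := time_cont hs P hx hy hxy
  set h : ℝ → ℝ := fun τ => (2 * s + 5) *
        (√(fe s (P.Γ (cl τ)) (P.Γ (cl τ)) x y) * √(kap s (P.Γ (cl τ)) (P.V (cl τ)) x y)) with hh
  have hc : Continuous h := by simp only [hh]; fun_prop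
  have h0 : ∀ τ, 0 ≤ h τ := fun τ => by
    have : 0 ≤ 2 * s + 5 := by linarith
    simp only [hh]; positivity
  have hex : ∀ τ ∈ Ioo t 1, ∃ d, HasDerivAt (fun τ => fe s (P.Γ τ) (P.Γ τ) x y) d τ ∧ |d| ≤ h τ := by
    intro τ hτ
    have hτ1 : τ ∈ Ioo (0:ℝ) 1 := ⟨ht.1.trans_lt hτ.1, hτ.2⟩
    simp only [hh, cl_eq (Ioo_subset_Icc_self hτ1)]
    exact fe_deriv hs P hx hy hxy hτ1
  choose! d hd bd using hex
  have ftc := intervalIntegral.integral_le_sub_of_hasDeriv_right_of_le (a := t) (b := 1)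
    (g := fun τ => fe s (P.Γ τ) (P.Γ τ) x y) (g' := d) (φ := fun τ => - h τ) ht.2
    (c1.continuousOn.congr fun τ hτ => by
      simp only [cl_eq (⟨ht.1.trans hτ.1, hτ.2⟩ : τ ∈ Icc (0:ℝ) 1)])
    (fun τ hτ => (hd τ hτ).hasDerivWithinAt)
    (hc.neg.integrableOn_Icc) (fun τ hτ => (abs_le.1 (bd τ hτ)).1)
  rw [intervalIntegral.integral_neg, intervalIntegral.integral_of_le ht.2] at ftc
  have hle : ∫ τ in Ioc t 1, h τ ≤ ∫ τ in Icc (0:ℝ) 1, h τ := by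
    apply setIntegral_mono_set hc.integrableOn_Icc (Eventually.of_forall h0)
    exact LE.le.eventuallyLE (fun τ hτ => ⟨ht.1.trans hτ.1.le, hτ.2⟩)
  have : fe s (P.Γ t) (P.Γ t) x y ≤ fe s (P.Γ 1) (P.Γ 1) x y + ∫ τ in Icc (0:ℝ) 1, h τ := by
    linarith
  rw [← ofReal_integral_eq_lintegral_ofReal hc.integrableOn_Icc (Eventually.of_forall h0),
    ← ENNReal.ofReal_add (fe_nonneg s _ _ _ _) (integral_nonneg h0)]
  exact ENNReal.ofReal_le_ofReal this

lemma ae_nu2 : ∀ᵐ z ∂nu2, z.1 ∈ I01 ∧ z.2 ∈ I01 := by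
  unfold nu2
  rw [Measure.prod_restrict]
  have : MeasurableSet (I01 ×ˢ I01) := by unfold I01; measurability
  filter_upwards [ae_restrict_mem this] with z hz
  exact hz

/-- one-step energy estimate -/
lemma PC.energy_step {n : ℕ} {s : ℝ} (hs : 3 / 2 < s) {P : C1Path s n} {b m M K E : ℝ} (h : PC P b m M K E)
    {a : ℝ} (ha : 0 ≤ a) (hE : ∀ t ∈ Icc (0:ℝ) 1, EB s (P.Γ t) (P.Γ t) ≤ ENNReal.ofReal (a ^ 2))
    {t : ℝ} (ht : t ∈ Icc (0:ℝ) 1) :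
    EB s (P.Γ t) (P.Γ t) ≤ EB s (P.Γ 1) (P.Γ 1) + ENNReal.ofReal ((2 * s + 5) * a * pathLen P) := by
  obtain ⟨m1, -⟩ := path_meas hs P
  have m2 := kap_meas hs P
  have C0 : 0 ≤ 2 * s + 5 := by linarith
  have eb : ∀ τ ∈ Icc (0:ℝ) 1, EB s (P.Γ τ) (P.Γ τ) = ∫⁻ z, ENNReal.ofReal (fe s (P.Γ τ) (P.Γ τ) z.1 z.2) ∂nu2 := by
    intro τ hτ
    have mm := slice_meas m1 τ
    simp only [cl_eq hτ] at mm
    exact prod_int mm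
  have M1 : Measurable fun z : ℝ × ℝ => fe s (P.Γ 1) (P.Γ 1) z.1 z.2 := by
    have mm := slice_meas m1 1
    simp only [cl_eq (right_mem_Icc.2 zero_le_one)] at mm
    exact mm
  have hmeas : Measurable fun w : ℝ × ℝ × ℝ => ENNReal.ofReal ((2 * s + 5) *
        (√(fe s (P.Γ (cl w.1)) (P.Γ (cl w.1)) w.2.1 w.2.2) * √(kap s (P.Γ (cl w.1)) (P.V (cl w.1)) w.2.1 w.2.2))) := by
    fun_prop
  have inner : ∀ τ ∈ Icc (0:ℝ) 1, ∫⁻ z, ENNReal.ofReal ((2 * s + 5) *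
        (√(fe s (P.Γ (cl τ)) (P.Γ (cl τ)) z.1 z.2) * √(kap s (P.Γ (cl τ)) (P.V (cl τ)) z.1 z.2))) ∂nu2 ≤
        ENNReal.ofReal ((2 * s + 5) * a * √(Gmet s (P.Γ τ) (P.V τ) (P.V τ))) := by
    intro τ hτ
    obtain ⟨G0, G1, -⟩ := h.G_low hs hτ
    obtain ⟨ik, -⟩ := h.G_eq hs hτ
    have k1 := slice_meas m1 τ
    have k2 := slice_meas m2 τ
    simp only [cl_eq hτ] at k1 k2 ⊢
    simp_rw [ENNReal.ofReal_mul C0]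
    rw [lintegral_const_mul' _ _ ENNReal.ofReal_ne_top, mul_assoc, ENNReal.ofReal_mul C0]
    gcongr
    refine cs_lint k1 k2 (fun z => fe_nonneg s _ _ _ _) (fun z => kap_nonneg hs _ _ _ _) ha (Real.sqrt_nonneg _) ?_ ?_
    · rw [← eb τ hτ]; exact hE τ hτ
    · rw [Real.sq_sqrt G0, ← ofReal_integral_eq_lintegral_ofReal ik (Eventually.of_forall fun z => kap_nonneg hs _ _ _ _)]
      exact ENNReal.ofReal_le_ofReal G1
  have gi := h.sqrtG_int hs
  have plen : ∫⁻ τ in Icc (0:ℝ) 1, ENNReal.ofReal ((2 * s + 5) * a * √(Gmet s (P.Γ τ) (P.V τ) (P.V τ))) =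
      ENNReal.ofReal ((2 * s + 5) * a * pathLen P) := by
    rw [← ofReal_integral_eq_lintegral_ofReal (gi.const_mul _) (Eventually.of_forall fun τ => by positivity),
      integral_const_mul, pathLen, intervalIntegral.integral_of_le zero_le_one, integral_Icc_eq_integral_Ioc]
  rw [← plen, eb t ht, eb 1 (right_mem_Icc.2 zero_le_one)]
  have st : ∫⁻ z, ENNReal.ofReal (fe s (P.Γ t) (P.Γ t) z.1 z.2) ∂nu2 ≤
      ∫⁻ z, (ENNReal.ofReal (fe s (P.Γ 1) (P.Γ 1) z.1 z.2) +
      ∫⁻ τ in Icc (0:ℝ) 1, ENNReal.ofReal ((2 * s + 5) *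
        (√(fe s (P.Γ (cl τ)) (P.Γ (cl τ)) z.1 z.2) * √(kap s (P.Γ (cl τ)) (P.V (cl τ)) z.1 z.2)))) ∂nu2 := by
    apply lintegral_mono_ae
    filter_upwards [ae_nu2] with z hz
    exact fe_ftc hs P hz.1 hz.2 ht
  refine st.trans ?_
  rw [lintegral_add_left M1.ennreal_ofReal]
  refine add_le_add le_rfl ?_
  have hae : AEMeasurable (Function.uncurry fun (z : ℝ × ℝ) (τ : ℝ) => ENNReal.ofReal ((2 * s + 5) *
        (√(fe s (P.Γ (cl τ)) (P.Γ (cl τ)) z.1 z.2) * √(kap s (P.Γ (cl τ)) (P.V (cl τ)) z.1 z.2))))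
      (nu2.prod (volume.restrict (Icc (0:ℝ) 1))) := (hmeas.comp measurable_swap).aemeasurable
  rw [lintegral_lintegral_swap hae]
  exact setLIntegral_mono' measurableSet_Icc inner

lemma sq_growth {S e c : ℝ} (hS : 0 ≤ S) (he : 0 ≤ e) (hc : 0 ≤ c) (h : S ≤ e + √S * c) : S ≤ (√e + c) ^ 2 := by
  have h1 := Real.sq_sqrt hS
  have h2 := Real.sq_sqrt he
  have h3 := Real.sqrt_nonneg S
  have h4 := Real.sqrt_nonneg e
  rw [← h1]
  apply pow_le_pow_left₀ h3
  by_contra hlt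
  push Not at hlt
  nlinarith

/-- energy bound along a path -/
lemma PC.energy {n : ℕ} {s : ℝ} (hs : 3 / 2 < s) {P : C1Path s n} {b m M K E : ℝ} (h : PC P b m M K E)
    {L : ℝ} (hL : 0 ≤ L) (hP : pathLen P ≤ L) {t : ℝ} (ht : t ∈ Icc (0:ℝ) 1) :
    EB s (P.Γ t) (P.Γ t) ≤
      ENNReal.ofReal ((√(EB s (P.Γ 1) (P.Γ 1)).toReal + (2 * s + 5) * L) ^ 2) := by
  have C0 : 0 ≤ 2 * s + 5 := by linarith
  have fin : ∀ τ ∈ Icc (0:ℝ) 1, EB s (P.Γ τ) (P.Γ τ) ≠ ⊤ := fun τ hτ => ((h.EΓ τ hτ).trans_lt ENNReal.ofReal_lt_top).ne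
  set e : ℝ → ℝ := fun τ => (EB s (P.Γ τ) (P.Γ τ)).toReal with hedef
  have eb : ∀ τ ∈ Icc (0:ℝ) 1, EB s (P.Γ τ) (P.Γ τ) = ENNReal.ofReal (e τ) := fun τ hτ => (ENNReal.ofReal_toReal (fin τ hτ)).symm
  have e0 : ∀ τ, 0 ≤ e τ := fun τ => ENNReal.toReal_nonneg
  have bdd : BddAbove (e '' Icc (0:ℝ) 1) := by
    refine ⟨E, ?_⟩
    rintro _ ⟨τ, hτ, rfl⟩
    have := h.EΓ τ hτ
    rw [eb τ hτ] at this
    exact (ENNReal.ofReal_le_ofReal_iff h.E0.le).1 this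
  set S := sSup (e '' Icc (0:ℝ) 1)
  have hS : ∀ τ ∈ Icc (0:ℝ) 1, e τ ≤ S := fun τ hτ => le_csSup bdd ⟨τ, hτ, rfl⟩
  have S0 : 0 ≤ S := (e0 t).trans (hS t ht)
  have one : (1:ℝ) ∈ Icc (0:ℝ) 1 := right_mem_Icc.2 zero_le_one
  have step : S ≤ e 1 + √S * ((2 * s + 5) * L) := by
    refine csSup_le (Set.Nonempty.image e ⟨t, ht⟩) ?_
    rintro _ ⟨τ, hτ, rfl⟩
    have st := h.energy_step hs (a := √S) (Real.sqrt_nonneg _) (fun τ hτ => by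
      rw [eb τ hτ, Real.sq_sqrt S0]; exact ENNReal.ofReal_le_ofReal (hS τ hτ)) hτ
    have st2 : ENNReal.ofReal ((2 * s + 5) * √S * pathLen P) ≤ ENNReal.ofReal (√S * ((2 * s + 5) * L)) := by
      apply ENNReal.ofReal_le_ofReal
      calc (2 * s + 5) * √S * pathLen P ≤ (2 * s + 5) * √S * L := by gcongr
        _ = _ := by ring
    have st3 := st.trans (add_le_add le_rfl st2)
    rw [eb τ hτ, eb 1 one, ← ENNReal.ofReal_add (e0 _) (by positivity)] at st3
    exact (ENNReal.ofReal_le_ofReal_iff (add_nonneg (e0 _) (by positivity))).1 st3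
  rw [eb t ht]
  exact ENNReal.ofReal_le_ofReal ((hS t ht).trans (sq_growth S0 (e0 1) (by positivity) step))

/-- log-bound along a path -/
lemma PC.log {n : ℕ} {s : ℝ} (hs : 3 / 2 < s) {P : C1Path s n} {b m M K E : ℝ} (h : PC P b m M K E)
    {Q : ℝ} (hQ : ∀ t ∈ Icc (0:ℝ) 1, ∀ x, ‖Dg (P.Γ t) (P.V t) x‖ ≤ Q * √(Gmet s (P.Γ t) (P.V t) (P.V t))) (x : ℝ) :
    |Real.log ‖deriv (P.Γ 1) x‖ - Real.log ‖deriv (P.Γ 0) x‖| ≤ Q * pathLen P := by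
  have hΓm : ∀ t ∈ Icc (0:ℝ) 1, InHs s (P.Γ t) := fun t ht => (P.mem t ht).1
  obtain ⟨-, hΓdc⟩ := joint_cont hs hΓm (path_cont P)
  have a3 : Continuous fun τ => deriv (P.Γ (cl τ)) x := hΓdc.comp (by fun_prop : Continuous fun τ : ℝ => (τ, x))
  have lc : Continuous fun τ => Real.log ‖deriv (P.Γ (cl τ)) x‖ :=
    a3.norm.log fun τ => norm_ne_zero_iff.2 ((P.mem _ (cl_mem τ)).2.2 x)
  have lc' : ContinuousOn (fun τ => Real.log ‖deriv (P.Γ τ) x‖) (Icc 0 1) :=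
    lc.continuousOn.congr fun τ hτ => by simp only [cl_eq hτ]
  have hex : ∀ τ ∈ Ioo (0:ℝ) 1, ∃ d, HasDerivAt (fun τ => Real.log ‖deriv (P.Γ τ) x‖) d τ ∧
      |d| ≤ Q * √(Gmet s (P.Γ τ) (P.V τ) (P.V τ)) := by
    intro τ hτ
    have hI := Ioo_subset_Icc_self hτ
    have ne := (P.mem τ hI).2.2 x
    obtain ⟨d, hd, bd⟩ := hd_norm (time_deriv hs P hτ x).2 ne
    refine ⟨_, hd.log (norm_ne_zero_iff.2 ne), le_trans ?_ (hQ τ hI x)⟩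
    unfold Dg
    rw [norm_smul, norm_inv, norm_norm, ← div_eq_inv_mul, abs_div, abs_norm]
    gcongr
  choose! d hd bd using hex
  have gi := (h.sqrtG_int hs).const_mul Q
  have f1 := intervalIntegral.integral_le_sub_of_hasDeriv_right_of_le (a := 0) (b := 1)
    (g := fun τ => Real.log ‖deriv (P.Γ τ) x‖) (g' := d) (φ := fun τ => - (Q * √(Gmet s (P.Γ τ) (P.V τ) (P.V τ)))) zero_le_one
    lc' (fun τ hτ => (hd τ hτ).hasDerivWithinAt) gi.neg (fun τ hτ => (abs_le.1 (bd τ hτ)).1)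
  have f2 := intervalIntegral.sub_le_integral_of_hasDeriv_right_of_le (a := 0) (b := 1)
    (g := fun τ => Real.log ‖deriv (P.Γ τ) x‖) (g' := d) (φ := fun τ => (Q * √(Gmet s (P.Γ τ) (P.V τ) (P.V τ)))) zero_le_one
    lc' (fun τ hτ => (hd τ hτ).hasDerivWithinAt) gi (fun τ hτ => (abs_le.1 (bd τ hτ)).2)
  rw [intervalIntegral.integral_neg, intervalIntegral.integral_const_mul] at f1
  rw [intervalIntegral.integral_const_mul] at f2
  unfold pathLen
  rw [abs_le]
  exact ⟨f1, f2⟩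

/-- uniform immersion bounds on `G`-bounded sets: for every
`G`-bounded `U ⊆ 𝓜` there are `0 < c ≤ C < ∞` with `c ≤ |γ'(x)| ≤ C` for all
`γ ∈ U` and all `x ∈ 𝕋`. -/
theorem statement12 (s : ℝ) (hs : s ∈ Set.Ioo (3 / 2 : ℝ) 2) (n : ℕ) (hn : 2 ≤ n)
    (U : Set (ℝ → En n)) (hU : GBounded s U) :
    ∃ c C : ℝ, 0 < c ∧ c ≤ C ∧ ∀ γ ∈ U, ∀ x : ℝ,
      c ≤ ‖deriv γ x‖ ∧ ‖deriv γ x‖ ≤ C := by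

  obtain ⟨-, γ₀, hγ₀, R, hR⟩ := hU
  have hs1 := hs.1
  set L : ℝ := max R 0 + 1 with hLdef
  have hL : 0 < L := by positivity
  set A : ℝ := √(EB s γ₀ γ₀).toReal + (2 * s + 5) * L with hAdef
  have hA : 0 < A := by
    have : 0 < 2 * s + 5 := by linarith
    positivity
  obtain ⟨Q, hQ, hsup⟩ := sup_bound hs1 hA
  have hc : Continuous fun z : ℝ × ℝ => ‖deriv γ₀ z.2‖ := (hγ₀.1.dcont.comp continuous_snd).norm
  obtain ⟨m, hm, hml⟩ := cpt_min hc (fun t x => by simp only [hγ₀.1.pd x]) (fun z => norm_pos_iff.2 (hγ₀.2.2 z.2))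
  obtain ⟨M, hM, hMl⟩ := cpt_max hc (fun t x => by simp only [hγ₀.1.pd x])
  have hml' : ∀ x, m ≤ ‖deriv γ₀ x‖ := fun x => hml 0 (left_mem_Icc.2 zero_le_one) x
  have hMl' : ∀ x, ‖deriv γ₀ x‖ ≤ M := fun x => hMl 0 (left_mem_Icc.2 zero_le_one) x
  refine ⟨m * Real.exp (-(Q * L)), M * Real.exp (Q * L), by positivity, ?_, fun γ hγ x => ?_⟩
  · have : m ≤ M := (hml' 0).trans (hMl' 0)
    have hQL : 0 < Q * L := by positivity
    gcongr
    linarith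
  · have hlt : geodDist s γ γ₀ < ENNReal.ofReal L := by
      refine (hR γ hγ).trans_lt ((ENNReal.ofReal_lt_ofReal_iff hL).2 ?_)
      have := le_max_left R 0
      rw [hLdef]; linarith
    unfold geodDist at hlt
    obtain ⟨P, hP⟩ := iInf_lt_iff.1 hlt
    obtain ⟨⟨hP0, hP1⟩, hPl⟩ := iInf_lt_iff.1 hP
    have hlen : pathLen P ≤ L := ((ENNReal.ofReal_lt_ofReal_iff hL).1 hPl).le
    obtain ⟨b, m', M', K, E, pc⟩ := path_consts hs1 P
    have key := pc.log hs1 (Q := Q) (fun t ht x => by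
      obtain ⟨G0, -, G2, G3⟩ := pc.G_low hs1 ht
      refine hsup n _ _ (P.mem t ht) (P.memV t ht) _ (Real.sqrt_nonneg _) ?_ ?_ ?_ x
      · have := pc.energy hs1 hL.le hlen ht
        rw [hP1] at this
        exact this
      · rw [Real.sq_sqrt G0]; exact G3
      · rw [Real.sq_sqrt G0]; exact G2) x
    rw [hP0, hP1] at key
    have hγm : InM s γ := by
      have := P.mem 0 (left_mem_Icc.2 zero_le_one)
      rwa [hP0] at this
    have p0 : 0 < ‖deriv γ x‖ := norm_pos_iff.2 (hγm.2.2 x)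
    have p1 : 0 < ‖deriv γ₀ x‖ := norm_pos_iff.2 (hγ₀.2.2 x)
    have key2 : |Real.log ‖deriv γ₀ x‖ - Real.log ‖deriv γ x‖| ≤ Q * L :=
      key.trans (mul_le_mul_of_nonneg_left hlen hQ.le)
    obtain ⟨k1, k2⟩ := abs_le.1 key2
    constructor
    · calc m * Real.exp (-(Q * L)) ≤ ‖deriv γ₀ x‖ * Real.exp (-(Q * L)) := by gcongr; exact hml' x
        _ = Real.exp (Real.log ‖deriv γ₀ x‖ + -(Q * L)) := by rw [Real.exp_add, Real.exp_log p1]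
        _ ≤ Real.exp (Real.log ‖deriv γ x‖) := by gcongr; linarith
        _ = _ := Real.exp_log p0
    · calc ‖deriv γ x‖ = Real.exp (Real.log ‖deriv γ x‖) := (Real.exp_log p0).symm
        _ ≤ Real.exp (Real.log ‖deriv γ₀ x‖ + Q * L) := by gcongr; linarith
        _ = ‖deriv γ₀ x‖ * Real.exp (Q * L) := by rw [Real.exp_add, Real.exp_log p1]
        _ ≤ _ := by gcongr; exact hMl' x
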